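/- arXiv:1504.03037 — 2 statements merged into one kernel-verified Lean document; each statement's English description precedes it below -/
import Mathlib

section
/- Let A and B be elementarily equivalent self-additive CLOs and let b ∈ B. Then the canonical embedding of A + (b/∼) + A into A + B + A (the identity on both copies of A and the inclusion of the ∼-class b/∼ ⊆ B) is an elementary embedding. -/
open FirstOrder Language Set

/-- Relation symbols of the language `L_κ` of colored linear orders:
a binary `<` and a unary color predicate for each `i : ι`. -/
inductive CLORel (ι : Type) : ℕ → Type
  | lt : CLORel ι 2
  | color (i : ι) : CLORel ι 1

/-- The language `L_κ`, where the colors are indexed by `ι`. -/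
def CLOLang (ι : Type) : Language :=
  ⟨fun _ => Empty, CLORel ι⟩

/-- Interpretation of the relation symbols on a linear order `M` with colors `c`. -/
def cloRelMap {ι M : Type} [LinearOrder M] (c : ι → Set M) :
    ∀ {n}, CLORel ι n → (Fin n → M) → Prop
  | _, .lt => fun v => v 0 < v 1
  | _, .color i => fun v => v 0 ∈ c i

/-- The canonical `L_κ`-structure (a colored linear order, CLO) on a linear
order `M` whose colors are given by `c : ι → Set M`. -/
def CLOStr (ι M : Type) [LinearOrder M] (c : ι → Set M) : (CLOLang ι).Structure M where
  funMap := fun f => Empty.elim f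
  RelMap := cloRelMap c

/-- Satisfaction of an `L_κ`-formula in the CLO `(M, <, c)`. -/
def Sat {ι : Type} (M : Type) [LinearOrder M] (c : ι → Set M) {α : Type}
    (φ : (CLOLang ι).Formula α) (v : α → M) : Prop :=
  letI := CLOStr ι M c
  φ.Realize v

/-- The induced colors on a subset of a CLO. -/
def subColor {ι M : Type} (c : ι → Set M) (s : Set M) : ι → Set s :=
  fun i => {x | (x : M) ∈ c i}

/-- Elementary equivalence of CLOs. -/
def CLOEquiv (ι : Type) (M : Type) [LinearOrder M] (cM : ι → Set M)
    (N : Type) [LinearOrder N] (cN : ι → Set N) : Prop :=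
  letI := CLOStr ι M cM
  letI := CLOStr ι N cN
  M ≅[CLOLang ι] N

/-- Isomorphism of CLOs (as `L_κ`-structures). -/
def CLOIso (ι : Type) (M : Type) [LinearOrder M] (cM : ι → Set M)
    (N : Type) [LinearOrder N] (cN : ι → Set N) : Prop :=
  letI := CLOStr ι M cM
  letI := CLOStr ι N cN
  Nonempty (M ≃[CLOLang ι] N)

/-- The complete theory of a CLO. -/
def CLOTheory (ι : Type) (M : Type) [LinearOrder M] (c : ι → Set M) : (CLOLang ι).Theory :=
  letI := CLOStr ι M c
  (CLOLang ι).completeTheory M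

/-- The induced colors on a lexicographic sum `Σₗ i, A i` of CLOs. -/
def sigmaColor {ι I : Type} {A : I → Type} (c : ∀ i, ι → Set (A i)) :
    ι → Set (Σₗ i, A i) :=
  fun k => {x | (ofLex x).2 ∈ c (ofLex x).1 k}

/-- The induced colors on a two-term lexicographic sum `α ⊕ₗ β` of CLOs. -/
def sumColor2 {ι α β : Type} (ca : ι → Set α) (cb : ι → Set β) : ι → Set (α ⊕ₗ β) :=
  fun k => {x | Sum.elim (· ∈ ca k) (· ∈ cb k) (ofLex x)}

/-- The set defined by a parameter-free formula in one variable in a CLO. -/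
def FmlSet (ι : Type) (M : Type) [LinearOrder M] (c : ι → Set M)
    (φ : (CLOLang ι).Formula Unit) : Set M :=
  {x | Sat M c φ fun _ => x}

/-- A CLO is self-additive if it has more than one point and its only
convex parameter-free-definable subsets are `∅` and the whole order. -/
def SelfAdditive (ι : Type) (M : Type) [LinearOrder M] (c : ι → Set M) : Prop :=
  Nontrivial M ∧
    ∀ φ : (CLOLang ι).Formula Unit, (FmlSet ι M c φ).OrdConnected →
      FmlSet ι M c φ = ∅ ∨ FmlSet ι M c φ = Set.univ

/-- `a ∼ b`: some set definable with parameter `a` is convex, bounded above and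
below, and contains both `a` and `b`. -/
def SimRel (ι : Type) {M : Type} [LinearOrder M] (c : ι → Set M) (a b : M) : Prop :=
  ∃ φ : (CLOLang ι).Formula (Unit ⊕ Unit),
    (Set.OrdConnected {x | Sat M c φ (Sum.elim (fun _ => x) fun _ => a)}) ∧
    (∃ u : M, ∀ z ∈ {x | Sat M c φ (Sum.elim (fun _ => x) fun _ => a)}, z < u) ∧
    (∃ l : M, ∀ z ∈ {x | Sat M c φ (Sum.elim (fun _ => x) fun _ => a)}, l < z) ∧
    a ∈ {x | Sat M c φ (Sum.elim (fun _ => x) fun _ => a)} ∧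
    b ∈ {x | Sat M c φ (Sum.elim (fun _ => x) fun _ => a)}

/-- `f : M → N` is an elementary map of CLOs. -/
def IsElemMap (ι : Type) {M N : Type} [LinearOrder M] [LinearOrder N]
    (cM : ι → Set M) (cN : ι → Set N) (f : M → N) : Prop :=
  ∀ (k : ℕ) (φ : (CLOLang ι).Formula (Fin k)) (v : Fin k → M),
    Sat M cM φ v ↔ Sat N cN φ (f ∘ v)

/-- A subset of a CLO, with its induced structure, is an elementary substructure. -/
def IsElemSubset (ι : Type) (B : Type) [LinearOrder B] (cB : ι → Set B) (s : Set B) : Prop :=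
  IsElemMap ι (subColor cB s) cB (Subtype.val : s → B)

/-- A complete `L_κ`-theory is ℵ₀-categorical: any two at-most-countable CLO
models of it are isomorphic.  (Finite and empty models are allowed.) -/
def Aleph0CatTheory (ι : Type) (T : (CLOLang ι).Theory) : Prop :=
  ∀ (N₁ N₂ : Type) (i₁ : LinearOrder N₁) (i₂ : LinearOrder N₂)
    (c₁ : ι → Set N₁) (c₂ : ι → Set N₂),
    Countable N₁ → Countable N₂ →
    (letI := i₁; CLOTheory ι N₁ c₁) = T → (letI := i₂; CLOTheory ι N₂ c₂) = T →
    (letI := i₁; letI := i₂; CLOIso ι N₁ c₁ N₂ c₂)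

/-- `φ` is a convex formula for the complete theory of the CLO `(M₀, c₀)`:
its realizations in every model of that theory form a convex set. -/
def ConvexFml (ι : Type) (M₀ : Type) [LinearOrder M₀] (c₀ : ι → Set M₀)
    (φ : (CLOLang ι).Formula Unit) : Prop :=
  ∀ (B : Type) (iB : LinearOrder B) (cB : ι → Set B),
    (letI := iB; CLOEquiv ι B cB M₀ c₀) → (letI := iB; Set.OrdConnected (FmlSet ι B cB φ))

/-- The set of common realizations of a set of one-variable formulas in a CLO. -/
def TypeSet (ι : Type) (M : Type) [LinearOrder M] (c : ι → Set M)
    (Φ : Set ((CLOLang ι).Formula Unit)) : Set M :=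
  {x | ∀ φ ∈ Φ, Sat M c φ fun _ => x}

/-- A set of one-variable formulas is consistent with the complete theory of
`(M₀, c₀)`: it is realized in some model of that theory. -/
def TypeConsistent (ι : Type) (M₀ : Type) [LinearOrder M₀] (c₀ : ι → Set M₀)
    (Φ : Set ((CLOLang ι).Formula Unit)) : Prop :=
  ∃ (B : Type) (iB : LinearOrder B) (cB : ι → Set B),
    (letI := iB; CLOEquiv ι B cB M₀ c₀) ∧ (letI := iB; ∃ b : B, b ∈ TypeSet ι B cB Φ)

/-- `Φ` is a convex type of the complete theory of `(M₀, c₀)`: a maximal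
consistent set of convex formulas over `∅`.  `IT(T)` is the set of all such. -/
def IsConvexType (ι : Type) (M₀ : Type) [LinearOrder M₀] (c₀ : ι → Set M₀)
    (Φ : Set ((CLOLang ι).Formula Unit)) : Prop :=
  (∀ φ ∈ Φ, ConvexFml ι M₀ c₀ φ) ∧ TypeConsistent ι M₀ c₀ Φ ∧
    ∀ ψ, ConvexFml ι M₀ c₀ ψ → TypeConsistent ι M₀ c₀ (insert ψ Φ) → ψ ∈ Φ

/-- A convex type is isolated if it contains a convex formula contained in no
other convex type. -/
def IsolatedCT (ι : Type) (M₀ : Type) [LinearOrder M₀] (c₀ : ι → Set M₀)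
    (Φ : Set ((CLOLang ι).Formula Unit)) : Prop :=
  ∃ φ ∈ Φ, ConvexFml ι M₀ c₀ φ ∧
    ∀ Ψ, IsConvexType ι M₀ c₀ Ψ → φ ∈ Ψ → Ψ = Φ

/-- A CLO is ℵ₀-saturated: every finitely-satisfiable set of formulas in one
variable over finitely many parameters is realized. -/
def Aleph0Saturated (ι : Type) (S : Type) [LinearOrder S] (cS : ι → Set S) : Prop :=
  ∀ (m : ℕ) (a : Fin m → S) (p : Set ((CLOLang ι).Formula (Unit ⊕ Fin m))),
    (∀ q : Finset ((CLOLang ι).Formula (Unit ⊕ Fin m)), ↑q ⊆ p →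
      ∃ x : S, ∀ φ ∈ q, Sat S cS φ (Sum.elim (fun _ => x) a)) →
    ∃ x : S, ∀ φ ∈ p, Sat S cS φ (Sum.elim (fun _ => x) a)

/-- A CLO is strongly ℵ₀-homogeneous: finite tuples with the same complete type
are conjugate under an automorphism. -/
def StronglyAleph0Homogeneous (ι : Type) (S : Type) [LinearOrder S] (cS : ι → Set S) : Prop :=
  ∀ (m : ℕ) (a b : Fin m → S),
    (∀ φ : (CLOLang ι).Formula (Fin m), Sat S cS φ a ↔ Sat S cS φ b) →
    ∃ g : S ≃ S, (∀ x y : S, x < y ↔ g x < g y) ∧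
      (∀ (k : ι) (x : S), x ∈ cS k ↔ g x ∈ cS k) ∧ ∀ i, g (a i) = b i

/-- Sufficiently saturated: ℵ₀-saturated and strongly ℵ₀-homogeneous. -/
def SuffSaturated (ι : Type) (S : Type) [LinearOrder S] (cS : ι → Set S) : Prop :=
  Aleph0Saturated ι S cS ∧ StronglyAleph0Homogeneous ι S cS

/-- The complete theory of `(M₀, c₀)` is locally simple: for every sufficiently
saturated model `S` and every convex type `Φ`, the theory `T_Φ = Th(Φ(S))` is
ℵ₀-categorical. -/
def LocallySimple (ι : Type) (M₀ : Type) [LinearOrder M₀] (c₀ : ι → Set M₀) : Prop :=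
  ∀ (S : Type) [LinearOrder S], ∀ (cS : ι → Set S),
    CLOEquiv ι S cS M₀ c₀ → SuffSaturated ι S cS →
    ∀ Φ, IsConvexType ι M₀ c₀ Φ →
      Aleph0CatTheory ι
        (CLOTheory ι (TypeSet ι S cS Φ) (subColor cS (TypeSet ι S cS Φ)))

/-- A finite set of pairs is a partial isomorphism of CLOs: it preserves `<`,
equality, and each color, in both directions. -/
def IsPartialIso (ι : Type) {M N : Type} [LinearOrder M] [LinearOrder N]
    (cM : ι → Set M) (cN : ι → Set N) (f : Finset (M × N)) : Prop :=
  ∀ p ∈ f, ∀ q ∈ f,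
    (p.1 < q.1 ↔ p.2 < q.2) ∧ (p.1 = q.1 ↔ p.2 = q.2) ∧
    ∀ k, p.1 ∈ cM k ↔ p.2 ∈ cN k

/-- Back-and-forth equivalence of CLOs: a nonempty family of finite partial
isomorphisms with the back-and-forth extension properties. -/
def BackForthEquiv (ι : Type) (M : Type) [LinearOrder M] (cM : ι → Set M)
    (N : Type) [LinearOrder N] (cN : ι → Set N) : Prop :=
  ∃ F : Set (Finset (M × N)), F.Nonempty ∧ (∀ f ∈ F, IsPartialIso ι cM cN f) ∧
    (∀ f ∈ F, ∀ m : M, ∃ g ∈ F, f ⊆ g ∧ ∃ n : N, (m, n) ∈ g) ∧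
    (∀ f ∈ F, ∀ n : N, ∃ g ∈ F, f ⊆ g ∧ ∃ m : M, (m, n) ∈ g)

/-- The set of complete theories `Th(Φ(A))` as `A` ranges over models of the
complete theory of `(M₀, c₀)` (including the theory of the empty structure,
in case `Φ` is omitted). -/
def TheoriesAt (ι : Type) (M₀ : Type) [LinearOrder M₀] (c₀ : ι → Set M₀)
    (Φ : Set ((CLOLang ι).Formula Unit)) : Set ((CLOLang ι).Theory) :=
  {T | ∃ (A : Type) (iA : LinearOrder A) (cA : ι → Set A),
    (letI := iA; CLOEquiv ι A cA M₀ c₀) ∧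
    T = (letI := iA; CLOTheory ι (TypeSet ι A cA Φ) (subColor cA (TypeSet ι A cA Φ)))}

/-- Codes for the `n`-round Ehrenfeucht–Fraïssé types of linear orders colored by `K`. A code of
rank `n + 1` is the set of triples formed by the color of a point and the codes of rank `n` of the
parts below and above it. -/
def OrderTy (K : Type) : ℕ → Type
  | 0 => Unit
  | n + 1 => Set (K × OrderTy K n × OrderTy K n)

namespace OrderTy

variable {K K' : Type}

/-- The triples of a code of positive rank. -/
def elems {n : ℕ} (s : OrderTy K (n + 1)) : Set (K × OrderTy K n × OrderTy K n) := s

/-- The code of positive rank with the given triples. -/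
def mk {n : ℕ} (s : Set (K × OrderTy K n × OrderTy K n)) : OrderTy K (n + 1) := s

theorem ext_elems {n : ℕ} {s t : OrderTy K (n + 1)} (h : ∀ q, q ∈ s.elems ↔ q ∈ t.elems) :
    s = t := Set.ext h

theorem eq_of_rank_zero (s t : OrderTy K 0) : s = t := Subsingleton.elim (α := Unit) s t

instance [Finite K] (n : ℕ) : Finite (OrderTy K n) := by
  induction n with
  | zero => exact inferInstanceAs (Finite Unit)
  | succ n ih => exact inferInstanceAs (Finite (Set (K × OrderTy K n × OrderTy K n)))

/-- Forget one round. -/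
def trunc : (n : ℕ) → OrderTy K (n + 1) → OrderTy K n
  | 0, _ => ()
  | n + 1, s => mk {q | ∃ p ∈ s.elems, q = (p.1, trunc n p.2.1, trunc n p.2.2)}

/-- The code of a sum of two orders in terms of the codes of the summands. -/
def sum : (n : ℕ) → OrderTy K n → OrderTy K n → OrderTy K n
  | 0, _, _ => ()
  | n + 1, s, t => mk
      ({q | ∃ p ∈ s.elems, q = (p.1, p.2.1, sum n p.2.2 (trunc n t))} ∪
        {q | ∃ p ∈ t.elems, q = (p.1, sum n (trunc n s) p.2.1, p.2.2)})

/-- The code of the reversed order. -/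
def rev : (n : ℕ) → OrderTy K n → OrderTy K n
  | 0, _ => ()
  | n + 1, s => mk {q | ∃ p ∈ s.elems, q = (p.1, rev n p.2.2, rev n p.2.1)}

/-- The code of the recolored order. -/
def map (f : K → K') : (n : ℕ) → OrderTy K n → OrderTy K' n
  | 0, _ => ()
  | n + 1, s => mk {q | ∃ p ∈ s.elems, q = (f p.1, map f n p.2.1, map f n p.2.2)}

instance (n : ℕ) : Add (OrderTy K n) := ⟨sum n⟩

theorem mem_trunc {n : ℕ} {s : OrderTy K (n + 2)} {q} :
    q ∈ (trunc (n + 1) s).elems ↔ ∃ p ∈ s.elems, q = (p.1, trunc n p.2.1, trunc n p.2.2) :=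
  Iff.rfl

theorem mem_add {n : ℕ} {s t : OrderTy K (n + 1)} {q} :
    q ∈ (s + t).elems ↔ (∃ p ∈ s.elems, q = (p.1, p.2.1, p.2.2 + trunc n t)) ∨
      ∃ p ∈ t.elems, q = (p.1, trunc n s + p.2.1, p.2.2) :=
  Iff.rfl

theorem mem_rev {n : ℕ} {s : OrderTy K (n + 1)} {q} :
    q ∈ (rev (n + 1) s).elems ↔ ∃ p ∈ s.elems, q = (p.1, rev n p.2.2, rev n p.2.1) :=
  Iff.rfl

theorem mem_map {f : K → K'} {n : ℕ} {s : OrderTy K (n + 1)} {q} :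
    q ∈ (map f (n + 1) s).elems ↔ ∃ p ∈ s.elems, q = (f p.1, map f n p.2.1, map f n p.2.2) :=
  Iff.rfl

theorem trunc_add (n : ℕ) (s t : OrderTy K (n + 1)) :
    trunc n (s + t) = trunc n s + trunc n t := by
  induction n with
  | zero => exact eq_of_rank_zero _ _
  | succ n ih =>
    refine ext_elems fun q => ?_
    simp only [mem_trunc, mem_add]
    constructor
    · rintro ⟨p, ⟨p', hp', rfl⟩ | ⟨p', hp', rfl⟩, rfl⟩
      · exact .inl ⟨_, ⟨p', hp', rfl⟩, by rw [ih]⟩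
      · exact .inr ⟨_, ⟨p', hp', rfl⟩, by rw [ih]⟩
    · rintro (⟨p, ⟨p', hp', rfl⟩, rfl⟩ | ⟨p, ⟨p', hp', rfl⟩, rfl⟩)
      · exact ⟨_, .inl ⟨p', hp', rfl⟩, by rw [ih]⟩
      · exact ⟨_, .inr ⟨p', hp', rfl⟩, by rw [ih]⟩

protected theorem add_assoc (n : ℕ) (s t u : OrderTy K n) : s + t + u = s + (t + u) := by
  induction n with
  | zero => exact eq_of_rank_zero _ _
  | succ n ih =>
    refine ext_elems fun q => ?_
    simp only [mem_add, trunc_add]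
    constructor
    · rintro (⟨p, ⟨p', hp', rfl⟩ | ⟨p', hp', rfl⟩, rfl⟩ | ⟨p, hp, rfl⟩)
      · exact .inl ⟨_, hp', by rw [ih]⟩
      · exact .inr ⟨_, .inl ⟨p', hp', rfl⟩, rfl⟩
      · exact .inr ⟨_, .inr ⟨p, hp, rfl⟩, by rw [ih]⟩
    · rintro (⟨p, hp, rfl⟩ | ⟨p, ⟨p', hp', rfl⟩ | ⟨p', hp', rfl⟩, rfl⟩)
      · exact .inl ⟨_, .inl ⟨p, hp, rfl⟩, by rw [ih]⟩
      · exact .inl ⟨_, .inr ⟨p', hp', rfl⟩, rfl⟩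
      · exact .inr ⟨_, hp', by rw [ih]⟩

instance (n : ℕ) : AddSemigroup (OrderTy K n) where
  add_assoc := OrderTy.add_assoc n

theorem trunc_rev (n : ℕ) (s : OrderTy K (n + 1)) :
    trunc n (rev (n + 1) s) = rev n (trunc n s) := by
  induction n with
  | zero => exact eq_of_rank_zero _ _
  | succ n ih =>
    refine ext_elems fun q => ?_
    simp only [mem_trunc, mem_rev]
    constructor <;> rintro ⟨p, ⟨p', hp', rfl⟩, rfl⟩ <;>
      exact ⟨_, ⟨p', hp', rfl⟩, by simp only [ih]⟩

theorem rev_add (n : ℕ) (s t : OrderTy K n) : rev n (s + t) = rev n t + rev n s := by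
  induction n with
  | zero => exact eq_of_rank_zero _ _
  | succ n ih =>
    refine ext_elems fun q => ?_
    simp only [mem_rev, mem_add, trunc_rev]
    constructor
    · rintro ⟨p, ⟨p', hp', rfl⟩ | ⟨p', hp', rfl⟩, rfl⟩
      · exact .inr ⟨_, ⟨p', hp', rfl⟩, by simp only [ih]⟩
      · exact .inl ⟨_, ⟨p', hp', rfl⟩, by simp only [ih]⟩
    · rintro (⟨p, ⟨p', hp', rfl⟩, rfl⟩ | ⟨p, ⟨p', hp', rfl⟩, rfl⟩)
      · exact ⟨_, .inr ⟨p', hp', rfl⟩, by simp only [ih]⟩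
      · exact ⟨_, .inl ⟨p', hp', rfl⟩, by simp only [ih]⟩

theorem rev_rev (n : ℕ) (s : OrderTy K n) : rev n (rev n s) = s := by
  induction n with
  | zero => exact eq_of_rank_zero _ _
  | succ n ih =>
    refine ext_elems fun q => ?_
    simp only [mem_rev]
    constructor
    · rintro ⟨p, ⟨p', hp', rfl⟩, rfl⟩
      simpa only [ih] using hp'
    · exact fun hq => ⟨_, ⟨q, hq, rfl⟩, by simp only [ih]⟩

theorem trunc_map (f : K → K') (n : ℕ) (s : OrderTy K (n + 1)) :
    trunc n (map f (n + 1) s) = map f n (trunc n s) := by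
  induction n with
  | zero => exact eq_of_rank_zero _ _
  | succ n ih =>
    refine ext_elems fun q => ?_
    simp only [mem_trunc, mem_map]
    constructor <;> rintro ⟨p, ⟨p', hp', rfl⟩, rfl⟩ <;>
      exact ⟨_, ⟨p', hp', rfl⟩, by simp only [ih]⟩

theorem map_add (f : K → K') (n : ℕ) (s t : OrderTy K n) :
    map f n (s + t) = map f n s + map f n t := by
  induction n with
  | zero => exact eq_of_rank_zero _ _
  | succ n ih =>
    refine ext_elems fun q => ?_
    simp only [mem_map, mem_add, trunc_map]
    constructor
    · rintro ⟨p, ⟨p', hp', rfl⟩ | ⟨p', hp', rfl⟩, rfl⟩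
      · exact .inl ⟨_, ⟨p', hp', rfl⟩, by simp only [ih]⟩
      · exact .inr ⟨_, ⟨p', hp', rfl⟩, by simp only [ih]⟩
    · rintro (⟨p, ⟨p', hp', rfl⟩, rfl⟩ | ⟨p, ⟨p', hp', rfl⟩, rfl⟩)
      · exact ⟨_, .inl ⟨p', hp', rfl⟩, by simp only [ih]⟩
      · exact ⟨_, .inr ⟨p', hp', rfl⟩, by simp only [ih]⟩

end OrderTy

section OrderType

variable {M N K K' : Type} [LinearOrder M] [LinearOrder N]

/-- The rank `n` type of a subset of a linear order colored by `col`. -/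
def orderTy (col : M → K) : (n : ℕ) → Set M → OrderTy K n
  | 0, _ => ()
  | n + 1, S => OrderTy.mk
      {q | ∃ x ∈ S, q = (col x, orderTy col n (S ∩ Iio x), orderTy col n (S ∩ Ioi x))}

theorem mem_orderTy {col : M → K} {n : ℕ} {S : Set M} {q} :
    q ∈ (orderTy col (n + 1) S).elems ↔
      ∃ x ∈ S, q = (col x, orderTy col n (S ∩ Iio x), orderTy col n (S ∩ Ioi x)) :=
  Iff.rfl

theorem trunc_orderTy (col : M → K) (n : ℕ) (S : Set M) :
    OrderTy.trunc n (orderTy col (n + 1) S) = orderTy col n S := by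
  induction n generalizing S with
  | zero => exact OrderTy.eq_of_rank_zero _ _
  | succ n ih =>
    refine OrderTy.ext_elems fun q => ?_
    rw [OrderTy.mem_trunc, mem_orderTy]
    constructor
    · rintro ⟨p, ⟨x, hx, rfl⟩, rfl⟩
      exact ⟨x, hx, by simp only [ih]⟩
    · rintro ⟨x, hx, rfl⟩
      exact ⟨_, ⟨x, hx, rfl⟩, by simp only [ih]⟩

theorem orderTy_union (col : M → K) (n : ℕ) {S T : Set M} (h : ∀ x ∈ S, ∀ y ∈ T, x < y) :
    orderTy col n (S ∪ T) = orderTy col n S + orderTy col n T := by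
  induction n generalizing S T with
  | zero => exact OrderTy.eq_of_rank_zero _ _
  | succ n ih =>
    have left : ∀ x ∈ S, (S ∪ T) ∩ Iio x = S ∩ Iio x ∧ (S ∪ T) ∩ Ioi x = (S ∩ Ioi x) ∪ T := by
      intro x hx
      constructor <;> ext y <;> simp only [mem_inter_iff, mem_union, mem_Iio, mem_Ioi]
      · have := h x hx y
        grind
      · have := h x hx y
        grind
    have right : ∀ x ∈ T, (S ∪ T) ∩ Iio x = S ∪ (T ∩ Iio x) ∧ (S ∪ T) ∩ Ioi x = T ∩ Ioi x := by
      intro x hx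
      constructor <;> ext y <;> simp only [mem_inter_iff, mem_union, mem_Iio, mem_Ioi]
      · have := fun hy => h y hy x hx
        grind
      · have := fun hy => h y hy x hx
        grind
    have hl : ∀ x, orderTy col n ((S ∩ Ioi x) ∪ T) =
        orderTy col n (S ∩ Ioi x) + orderTy col n T :=
      fun x => ih fun y hy z hz => h y hy.1 z hz
    have hr : ∀ x, orderTy col n (S ∪ (T ∩ Iio x)) =
        orderTy col n S + orderTy col n (T ∩ Iio x) :=
      fun x => ih fun y hy z hz => h y hy z hz.1
    refine OrderTy.ext_elems fun q => ?_
    rw [OrderTy.mem_add, mem_orderTy]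
    simp only [trunc_orderTy]
    constructor
    · rintro ⟨x, hx | hx, rfl⟩
      · exact .inl ⟨_, ⟨x, hx, rfl⟩, by rw [(left x hx).1, (left x hx).2, hl]⟩
      · exact .inr ⟨_, ⟨x, hx, rfl⟩, by rw [(right x hx).1, (right x hx).2, hr]⟩
    · rintro (⟨p, ⟨x, hx, rfl⟩, rfl⟩ | ⟨p, ⟨x, hx, rfl⟩, rfl⟩)
      · exact ⟨x, .inl hx, by rw [(left x hx).1, (left x hx).2, hl]⟩
      · exact ⟨x, .inr hx, by rw [(right x hx).1, (right x hx).2, hr]⟩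

theorem orderTy_image {col : M → K} {col' : N → K'} {g : M → N} (hg : StrictMono g)
    (f : K → K') (n : ℕ) {S : Set M} (hcol : ∀ x ∈ S, col' (g x) = f (col x)) :
    orderTy col' n (g '' S) = OrderTy.map f n (orderTy col n S) := by
  induction n generalizing S with
  | zero => exact OrderTy.eq_of_rank_zero _ _
  | succ n ih =>
    have hlo : ∀ x, g '' S ∩ Iio (g x) = g '' (S ∩ Iio x) := by
      intro x
      ext y
      constructor
      · rintro ⟨⟨z, hz, rfl⟩, hy⟩
        exact ⟨z, ⟨hz, hg.lt_iff_lt.1 hy⟩, rfl⟩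
      · rintro ⟨z, ⟨hz, hy⟩, rfl⟩
        exact ⟨⟨z, hz, rfl⟩, hg hy⟩
    have hhi : ∀ x, g '' S ∩ Ioi (g x) = g '' (S ∩ Ioi x) := by
      intro x
      ext y
      constructor
      · rintro ⟨⟨z, hz, rfl⟩, hy⟩
        exact ⟨z, ⟨hz, hg.lt_iff_lt.1 hy⟩, rfl⟩
      · rintro ⟨z, ⟨hz, hy⟩, rfl⟩
        exact ⟨⟨z, hz, rfl⟩, hg hy⟩
    have key : ∀ x ∈ S, (col' (g x), orderTy col' n (g '' S ∩ Iio (g x)),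
        orderTy col' n (g '' S ∩ Ioi (g x))) = (f (col x),
          OrderTy.map f n (orderTy col n (S ∩ Iio x)),
          OrderTy.map f n (orderTy col n (S ∩ Ioi x))) := by
      intro x hx
      rw [hlo, hhi, hcol x hx, ih fun y hy => hcol y hy.1, ih fun y hy => hcol y hy.1]
    refine OrderTy.ext_elems fun q => ?_
    rw [OrderTy.mem_map, mem_orderTy]
    constructor
    · rintro ⟨_, ⟨x, hx, rfl⟩, rfl⟩
      exact ⟨_, ⟨x, hx, rfl⟩, key x hx⟩
    · rintro ⟨_, ⟨x, hx, rfl⟩, rfl⟩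
      exact ⟨_, ⟨x, hx, rfl⟩, (key x hx).symm⟩

theorem orderTy_recolor {col : M → K} {col' : M → K'} (f : K → K') (n : ℕ) {S : Set M}
    (hcol : ∀ x ∈ S, col' x = f (col x)) :
    orderTy col' n S = OrderTy.map f n (orderTy col n S) := by
  simpa using orderTy_image strictMono_id f n hcol

theorem orderTy_orderDual (col : M → K) (n : ℕ) (S : Set M) :
    orderTy (col ∘ OrderDual.ofDual) n (OrderDual.ofDual ⁻¹' S) =
      OrderTy.rev n (orderTy col n S) := by
  induction n generalizing S with
  | zero => exact OrderTy.eq_of_rank_zero _ _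
  | succ n ih =>
    have key : ∀ x : M, (col x,
        orderTy (col ∘ OrderDual.ofDual) n
          (OrderDual.ofDual ⁻¹' S ∩ Iio (OrderDual.toDual x)),
        orderTy (col ∘ OrderDual.ofDual) n
          (OrderDual.ofDual ⁻¹' S ∩ Ioi (OrderDual.toDual x))) =
        (col x, OrderTy.rev n (orderTy col n (S ∩ Ioi x)),
          OrderTy.rev n (orderTy col n (S ∩ Iio x))) := by
      intro x
      rw [← ih, ← ih]
      rfl
    refine OrderTy.ext_elems fun q => ?_
    rw [OrderTy.mem_rev, mem_orderTy]
    constructor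
    · rintro ⟨x, hx, rfl⟩
      exact ⟨_, ⟨OrderDual.ofDual x, hx, rfl⟩, key _⟩
    · rintro ⟨_, ⟨x, hx, rfl⟩, rfl⟩
      exact ⟨OrderDual.toDual x, hx, (key x).symm⟩

end OrderType

section UniformDefinability

variable {ι α β : Type}

/-- A family of predicates on the tuples of every CLO which is defined by a single formula. -/
def UniformDef (P : ∀ (M : Type) [LinearOrder M], (ι → Set M) → (α → M) → Prop) : Prop :=
  ∃ φ : (CLOLang ι).Formula α, ∀ (M : Type) [LinearOrder M] (c : ι → Set M) (v : α → M),
    Sat M c φ v ↔ P M c v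

namespace UniformDef

variable {P Q : ∀ (M : Type) [LinearOrder M], (ι → Set M) → (α → M) → Prop}

theorem sat (φ : (CLOLang ι).Formula α) : UniformDef fun M _ c v => Sat M c φ v :=
  ⟨φ, fun _ _ _ _ => Iff.rfl⟩

theorem congr (h : UniformDef P)
    (hPQ : ∀ (M : Type) [LinearOrder M] (c : ι → Set M) (v : α → M), P M c v ↔ Q M c v) :
    UniformDef Q :=
  h.imp fun _ hφ M _ c v => (hφ M c v).trans (hPQ M c v)

theorem not (h : UniformDef P) : UniformDef fun M _ c v => ¬ P M c v := by
  obtain ⟨φ, hφ⟩ := h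
  exact ⟨φ.not, fun M _ c v => let := CLOStr ι M c
    Formula.realize_not.trans (not_congr (hφ M c v))⟩

theorem and (h : UniformDef P) (h' : UniformDef Q) :
    UniformDef fun M _ c v => P M c v ∧ Q M c v := by
  obtain ⟨φ, hφ⟩ := h
  obtain ⟨ψ, hψ⟩ := h'
  exact ⟨φ ⊓ ψ, fun M _ c v => let := CLOStr ι M c
    Formula.realize_inf.trans (and_congr (hφ M c v) (hψ M c v))⟩

theorem or (h : UniformDef P) (h' : UniformDef Q) :
    UniformDef fun M _ c v => P M c v ∨ Q M c v :=
  (h.not.and h'.not).not.congr fun _ _ _ _ => by tauto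

theorem imp (h : UniformDef P) (h' : UniformDef Q) :
    UniformDef fun M _ c v => P M c v → Q M c v :=
  (h.and h'.not).not.congr fun _ _ _ _ => by tauto

theorem reindex {P : ∀ (M : Type) [LinearOrder M], (ι → Set M) → (α → M) → Prop}
    (h : UniformDef P) (f : α → β) :
    UniformDef fun M _ c (v : β → M) => P M c fun i => v (f i) := by
  obtain ⟨φ, hφ⟩ := h
  exact ⟨φ.relabel f, fun M _ c v => let := CLOStr ι M c
    Formula.realize_relabel.trans (hφ M c _)⟩

theorem exists_elem {P : ∀ (M : Type) [LinearOrder M], (ι → Set M) → (α → M) → M → Prop}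
    (h : UniformDef fun M _ c (w : α ⊕ Unit → M) => P M c (fun i => w (.inl i)) (w (.inr ()))) :
    UniformDef fun M _ c v => ∃ x, P M c v x := by
  obtain ⟨φ, hφ⟩ := h
  refine ⟨φ.iExs Unit, fun M _ c v => ?_⟩
  let := CLOStr ι M c
  refine Formula.realize_iExs.trans ⟨?_, ?_⟩
  · rintro ⟨i, hi⟩
    exact ⟨i (), (hφ M c _).1 hi⟩
  · rintro ⟨x, hx⟩
    exact ⟨fun _ => x, (hφ M c (Sum.elim v fun _ => x)).2 hx⟩

theorem forall_elem {P : ∀ (M : Type) [LinearOrder M], (ι → Set M) → (α → M) → M → Prop}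
    (h : UniformDef fun M _ c (w : α ⊕ Unit → M) => P M c (fun i => w (.inl i)) (w (.inr ()))) :
    UniformDef fun M _ c v => ∀ x, P M c v x :=
  (exists_elem (P := fun M _ c v x => ¬ P M c v x) h.not).not.congr fun _ _ _ _ => by simp

theorem forall_finite [Finite β]
    {P : β → ∀ (M : Type) [LinearOrder M], (ι → Set M) → (α → M) → Prop}
    (h : ∀ i, UniformDef (P i)) : UniformDef fun M _ c v => ∀ i, P i M c v := by
  choose φ hφ using h
  exact ⟨Formula.iInf φ, fun M _ c v => let := CLOStr ι M c
    Formula.realize_iInf.trans (forall_congr' fun i => hφ i M c v)⟩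

theorem lt (i j : α) : UniformDef fun M _ (_ : ι → Set M) v => v i < v j :=
  ⟨Relations.formula₂ (L := CLOLang ι) (CLORel.lt : CLORel ι 2) (Term.var i) (Term.var j),
    fun M _ c _ => let := CLOStr ι M c
    Formula.realize_rel₂⟩

theorem le (i j : α) : UniformDef fun M _ (_ : ι → Set M) v => v i ≤ v j :=
  (lt j i).not.congr fun _ _ _ _ => not_lt

theorem color (k : ι) (i : α) : UniformDef fun M _ (c : ι → Set M) v => v i ∈ c k :=
  ⟨Relations.formula₁ (L := CLOLang ι) (CLORel.color k : CLORel ι 1) (Term.var i),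
    fun M _ c _ => let := CLOStr ι M c
    Formula.realize_rel₁⟩

theorem const (p : Prop) : UniformDef fun M _ (_ : ι → Set M) (_ : α → M) => p := by
  by_cases hp : p
  · exact ⟨⊤, fun M _ c _ => let := CLOStr ι M c
      iff_of_true (Formula.realize_top.2 trivial) hp⟩
  · exact ⟨⊥, fun M _ c _ => let := CLOStr ι M c
      iff_of_false Formula.realize_bot.1 hp⟩

theorem comp_finite [Finite β] {f : ∀ (M : Type) [LinearOrder M], (ι → Set M) → (α → M) → β}
    (h : ∀ t, UniformDef fun M _ c v => f M c v = t) (p : β → Prop) :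
    UniformDef fun M _ c v => p (f M c v) :=
  (forall_finite fun t => (h t).imp (const (p t))).congr fun _ _ _ _ => by simp

end UniformDef

/-- The color of a point, recording the colors in the finite set `F` only. -/
def finColor (F : Finset ι) {M : Type} (c : ι → Set M) (x : M) : Set F :=
  {i | x ∈ c i}

theorem uniformDef_finColor (F : Finset ι) (i : α) (k : Set F) :
    UniformDef fun M _ (c : ι → Set M) v => finColor F c (v i) = k := by
  refine (UniformDef.forall_finite (β := F)
    (P := fun j M _ (c : ι → Set M) (v : α → M) => v i ∈ c j ↔ j ∈ k)
    fun j => ?_).congr fun M _ c v => ?_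
  · by_cases hj : j ∈ k
    · simpa [hj] using UniformDef.color (j : ι) i
    · simpa [hj] using (UniformDef.color (j : ι) i).not
  · simp [finColor, Set.ext_iff]

theorem uniformDef_orderTy (F : Finset ι) (n : ℕ) (t : OrderTy (Set F) n)
    {Q : ∀ (M : Type) [LinearOrder M], (ι → Set M) → (α → M) → M → Prop}
    (hQ : UniformDef fun M _ c (w : α ⊕ Unit → M) =>
      Q M c (fun i => w (.inl i)) (w (.inr ()))) :
    UniformDef fun M _ c v => orderTy (finColor F c) n {x | Q M c v x} = t := by
  induction n generalizing α with
  | zero => exact (UniformDef.const True).congr fun _ _ _ _ =>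
      iff_of_true trivial (OrderTy.eq_of_rank_zero _ _)
  | succ n ih =>
    refine (UniformDef.forall_finite (β := Set F × OrderTy (Set F) n × OrderTy (Set F) n)
      (P := fun q M _ c v => (∃ x, Q M c v x ∧ finColor F c x = q.1 ∧
        orderTy (finColor F c) n {y | Q M c v y ∧ y < x} = q.2.1 ∧
        orderTy (finColor F c) n {y | Q M c v y ∧ x < y} = q.2.2) ↔ q ∈ t.elems)
      fun q => ?_).congr fun M _ c v => ?_
    · have h : UniformDef fun M _ (c : ι → Set M) (v : α → M) =>
          ∃ x, Q M c v x ∧ finColor F c x = q.1 ∧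
            orderTy (finColor F c) n {y | Q M c v y ∧ y < x} = q.2.1 ∧
            orderTy (finColor F c) n {y | Q M c v y ∧ x < y} = q.2.2 := by
        refine UniformDef.exists_elem (hQ.and ((uniformDef_finColor F _ _).and (.and ?_ ?_)))
        · refine ih q.2.1
            (Q := fun M _ c w y => Q M c (fun i => w (Sum.inl i)) y ∧ y < w (Sum.inr ()))
            ((hQ.reindex (Sum.map Sum.inl id)).and (.lt (Sum.inr ()) (Sum.inl (Sum.inr ()))))
        · refine ih q.2.2
            (Q := fun M _ c w y => Q M c (fun i => w (Sum.inl i)) y ∧ w (Sum.inr ()) < y)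
            ((hQ.reindex (Sum.map Sum.inl id)).and (.lt (Sum.inl (Sum.inr ())) (Sum.inr ())))
      by_cases hq : q ∈ t.elems
      · simpa [hq] using h
      · simpa [hq] using h.not
    · constructor
      · refine fun h => OrderTy.ext_elems fun q => ?_
        rw [← h q, mem_orderTy]
        constructor
        · rintro ⟨x, hx, rfl⟩
          exact ⟨x, hx, rfl, rfl, rfl⟩
        · rintro ⟨x, hx, h1, h2, h3⟩
          exact ⟨x, hx, Prod.ext h1.symm (Prod.ext h2.symm h3.symm)⟩
      · rintro rfl q
        rw [mem_orderTy]
        constructor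
        · rintro ⟨x, hx, h1, h2, h3⟩
          exact ⟨x, hx, Prod.ext h1.symm (Prod.ext h2.symm h3.symm)⟩
        · rintro ⟨x, hx, rfl⟩
          exact ⟨x, hx, rfl, rfl, rfl⟩

theorem CLOEquiv.orderTy_univ {A B : Type} [LinearOrder A] [LinearOrder B] {cA : ι → Set A}
    {cB : ι → Set B} (h : CLOEquiv ι A cA B cB) (F : Finset ι) (n : ℕ) :
    orderTy (finColor F cA) n univ = orderTy (finColor F cB) n univ := by
  obtain ⟨φ, hφ⟩ := uniformDef_orderTy (ι := ι) (α := Empty) F n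
    (orderTy (finColor F cB) n univ) (Q := fun _ _ _ _ _ => True) (UniformDef.const True)
  let := CLOStr ι A cA
  let := CLOStr ι B cB
  exact (hφ A cA default).1
    ((ElementarilyEquivalent.realize_sentence h φ).2 ((hφ B cB default).2 rfl))

theorem SelfAdditive.forall_of_exists {M : Type} [LinearOrder M] {c : ι → Set M}
    (h : SelfAdditive ι M c)
    {P : ∀ (M : Type) [LinearOrder M], (ι → Set M) → M → Prop}
    (hP : UniformDef fun M _ c (v : Unit → M) => P M c (v ()))
    (hconn : {x | P M c x}.OrdConnected) (hne : ∃ x, P M c x) (x : M) : P M c x := by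
  obtain ⟨φ, hφ⟩ := hP
  have hset : FmlSet ι M c φ = {x | P M c x} := Set.ext fun y => hφ M c fun _ => y
  rcases h.2 φ (hset ▸ hconn) with h0 | h1
  · obtain ⟨y, hy⟩ := hne
    have : y ∈ FmlSet ι M c φ := hset ▸ hy
    simp [h0] at this
  · have : x ∈ FmlSet ι M c φ := h1 ▸ mem_univ x
    rwa [hset] at this

/-- The formula obtained by reversing the order. -/
def dualFormula : ∀ {n : ℕ}, (CLOLang ι).BoundedFormula α n → (CLOLang ι).BoundedFormula α n
  | _, .falsum => .falsum
  | _, .equal t₁ t₂ => .equal t₁ t₂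
  | _, .rel R ts => .rel R (ts ∘ Fin.rev)
  | _, .imp φ ψ => .imp (dualFormula φ) (dualFormula ψ)
  | _, .all φ => .all (dualFormula φ)

section Dual

variable {M N : Type} [LinearOrder M] [LinearOrder N] {cM : ι → Set M} {cN : ι → Set N}

theorem realize_term_comp (e : M → N) (w : β → M) (t : (CLOLang ι).Term β) :
    (letI := CLOStr ι N cN; t.realize (e ∘ w)) = e (letI := CLOStr ι M cM; t.realize w) := by
  cases t with
  | var => rfl
  | func f => exact Empty.elim f

theorem realize_dualFormula (e : M ≃ N) (he : ∀ x y, e x < e y ↔ y < x)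
    (hc : ∀ i x, e x ∈ cN i ↔ x ∈ cM i) {n : ℕ} (φ : (CLOLang ι).BoundedFormula α n)
    (v : α → M) (xs : Fin n → M) :
    (letI := CLOStr ι N cN; φ.Realize (e ∘ v) (e ∘ xs)) ↔
      (letI := CLOStr ι M cM; (dualFormula φ).Realize v xs) := by
  induction φ with
  | falsum => rfl
  | equal t₁ t₂ =>
    simp only [dualFormula, BoundedFormula.Realize, ← Sum.comp_elim,
      realize_term_comp (cM := cM) (cN := cN) e, e.injective.eq_iff]
  | rel R ts =>
    simp only [dualFormula, BoundedFormula.Realize, ← Sum.comp_elim,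
      realize_term_comp (cM := cM) (cN := cN) e]
    cases R with
    | lt => exact he _ _
    | color i => exact hc i _
  | imp φ ψ ih₁ ih₂ => exact imp_congr (ih₁ xs) (ih₂ xs)
  | all φ ih =>
    refine (e.forall_congr fun x => ?_).symm
    rw [← ih, Fin.comp_snoc]

theorem sat_dualFormula (e : M ≃ N) (he : ∀ x y, e x < e y ↔ y < x)
    (hc : ∀ i x, e x ∈ cN i ↔ x ∈ cM i) (φ : (CLOLang ι).Formula α) (v : α → M) :
    Sat N cN φ (e ∘ v) ↔ Sat M cM (dualFormula φ) v := by
  have h := realize_dualFormula e he hc φ v default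
  rwa [Subsingleton.elim (e ∘ default) default] at h

end Dual

end UniformDefinability

section ElementaryTest

variable {ι β γ M N K : Type} [LinearOrder M] [LinearOrder N]

theorem orderTy_singleton_congr {col : M → K} {col' : N → K} (n : ℕ) {x : M} {y : N}
    (h : col x = col' y) : orderTy col n {x} = orderTy col' n {y} := by
  have hx := orderTy_image (col := fun _ : Unit => col x) (col' := col) (g := fun _ => x)
    (Subsingleton.strictMono _) id n (S := univ) fun _ _ => rfl
  have hy := orderTy_image (col := fun _ : Unit => col x) (col' := col') (g := fun _ => y)
    (Subsingleton.strictMono _) id n (S := univ) fun _ _ => h.symm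
  simp only [image_univ, range_const] at hx hy
  rw [hx, hy]

theorem orderTy_univ_eq_add (col : M → K) (n : ℕ) (x : M) :
    orderTy col n univ = orderTy col n (Iio x) + orderTy col n {x} + orderTy col n (Ioi x) := by
  rw [← orderTy_union, ← orderTy_union]
  · congr 1
    ext y
    simp
  · simp only [mem_union, mem_Iio, mem_singleton_iff, mem_Ioi]
    rintro y (hy | rfl) z hz
    exacts [hy.trans hz, hz]
  · simp

/-- The color of a point, together with the positions at which it occurs in the tuple `w`. -/
def markCol (F : Finset ι) (c : ι → Set M) (w : β → M) (x : M) : Set F × Set β :=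
  (finColor F c x, {j | w j = x})

theorem exists_extend_markCol {F : Finset ι} {cM : ι → Set M} {cN : ι → Set N} {w : β → M}
    {w' : β → N} {n : ℕ}
    (h : orderTy (markCol F cM w) (n + 1) univ = orderTy (markCol F cN w') (n + 1) univ)
    (e : β → γ) (j₀ : γ) (he : ∀ j, j = j₀ ∨ j ∈ range e) (x : M) :
    ∃ y : N, ∀ (u : γ → M) (u' : γ → N), u ∘ e = w → u j₀ = x → u' ∘ e = w' → u' j₀ = y →
      orderTy (markCol F cM u) n univ = orderTy (markCol F cN u') n univ := by
  have hx : (markCol F cM w x, orderTy (markCol F cM w) n (univ ∩ Iio x),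
      orderTy (markCol F cM w) n (univ ∩ Ioi x)) ∈
        (orderTy (markCol F cM w) (n + 1) univ).elems := mem_orderTy.2 ⟨x, mem_univ x, rfl⟩
  rw [h, mem_orderTy] at hx
  obtain ⟨y, -, hy⟩ := hx
  simp only [univ_inter, Prod.mk.injEq] at hy
  obtain ⟨h0, h1, h2⟩ := hy
  refine ⟨y, ?_⟩
  rintro u u' rfl rfl rfl rfl
  have off : ∀ {L : Type} [LinearOrder L] (c : ι → Set L) (u : γ → L) (z : L), z ≠ u j₀ →
      markCol F c u z = Prod.map id (e '' ·) (markCol F c (u ∘ e) z) := by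
    intro L _ c u z hz
    refine Prod.ext rfl (Set.ext fun j => ?_)
    constructor
    · rintro rfl
      rcases he j with rfl | ⟨i, rfl⟩
      · exact (hz rfl).elim
      · exact ⟨i, rfl, rfl⟩
    · rintro ⟨i, hi, rfl⟩
      exact hi
  have at_mark : ∀ {L : Type} [LinearOrder L] (c : ι → Set L) (u : γ → L),
      markCol F c u (u j₀) =
        Prod.map id (fun s => insert j₀ (e '' s)) (markCol F c (u ∘ e) (u j₀)) := by
    intro L _ c u
    refine Prod.ext rfl (Set.ext fun j => ?_)
    constructor
    · intro hj
      rcases he j with rfl | ⟨i, rfl⟩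
      · exact mem_insert _ _
      · exact mem_insert_of_mem _ ⟨i, hj, rfl⟩
    · rintro (rfl | ⟨i, hi, rfl⟩)
      · rfl
      · exact hi
  rw [orderTy_univ_eq_add _ n (u j₀), orderTy_univ_eq_add _ n (u' j₀),
    orderTy_recolor (S := Iio (u j₀)) _ n fun z hz => off cM u z (ne_of_lt hz),
    orderTy_recolor (S := Ioi (u j₀)) _ n fun z hz => off cM u z (ne_of_gt hz),
    orderTy_recolor (S := Iio (u' j₀)) _ n fun z hz => off cN u' z (ne_of_lt hz),
    orderTy_recolor (S := Ioi (u' j₀)) _ n fun z hz => off cN u' z (ne_of_gt hz), h1, h2,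
    orderTy_singleton_congr (col' := markCol F cN u') n (x := u j₀) (y := u' j₀)
      (by rw [at_mark, at_mark, h0])]

theorem orderTy_eq_of_le {col : M → K} {col' : N → K} {S : Set M} {T : Set N} {m n : ℕ}
    (hmn : m ≤ n) (h : orderTy col n S = orderTy col' n T) :
    orderTy col m S = orderTy col' m T := by
  induction hmn with
  | refl => exact h
  | step _ ih => exact ih (by rw [← trunc_orderTy, h, trunc_orderTy])

theorem orderTy_markCol_mono {F G : Finset ι} (hFG : F ⊆ G) {cM : ι → Set M} {cN : ι → Set N}
    {w : β → M} {w' : β → N} {n : ℕ}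
    (h : orderTy (markCol G cM w) n univ = orderTy (markCol G cN w') n univ) :
    orderTy (markCol F cM w) n univ = orderTy (markCol F cN w') n univ := by
  let r : Set G × Set β → Set F × Set β := Prod.map (fun s => {i | ⟨i, hFG i.2⟩ ∈ s}) id
  rw [orderTy_recolor (col := markCol G cM w) (col' := markCol F cM w) r n fun _ _ => rfl, h,
    ← orderTy_recolor (col := markCol G cN w') (col' := markCol F cN w') r n fun _ _ => rfl]

theorem atomic_of_orderTy_markCol {F : Finset ι} {cM : ι → Set M} {cN : ι → Set N} {w : β → M}
    {w' : β → N} (h : orderTy (markCol F cM w) 2 univ = orderTy (markCol F cN w') 2 univ)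
    (i j : β) :
    (w i = w j ↔ w' i = w' j) ∧ (w i < w j ↔ w' i < w' j) ∧
      ∀ k ∈ F, (w i ∈ cM k ↔ w' i ∈ cN k) := by
  have hj : (markCol F cM w (w j), orderTy (markCol F cM w) 1 (univ ∩ Iio (w j)),
      orderTy (markCol F cM w) 1 (univ ∩ Ioi (w j))) ∈
        (orderTy (markCol F cM w) 2 univ).elems := mem_orderTy.2 ⟨_, mem_univ _, rfl⟩
  rw [h, mem_orderTy] at hj
  obtain ⟨y, -, hy⟩ := hj
  simp only [univ_inter, Prod.mk.injEq] at hy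
  obtain ⟨h0, h1, -⟩ := hy
  obtain rfl : w' j = y := (Set.ext_iff.1 (congrArg Prod.snd h0) j).1 rfl
  have hEq : w i = w j ↔ w' i = w' j := Set.ext_iff.1 (congrArg Prod.snd h0) i
  have hmem : ∀ {L : Type} [LinearOrder L] (c : ι → Set L) (u : β → L), u i < u j ↔
      ∃ q ∈ (orderTy (markCol F c u) 1 (Iio (u j))).elems, i ∈ q.1.2 := by
    intro L _ c u
    constructor
    · exact fun hlt => ⟨_, mem_orderTy.2 ⟨u i, hlt, rfl⟩, rfl⟩
    · rintro ⟨_, ⟨z, hz, rfl⟩, hi⟩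
      exact lt_of_eq_of_lt hi hz
  refine ⟨hEq, by rw [hmem cM w, hmem cN w', h1], fun k hk => ?_⟩
  have hi : (markCol F cM w (w i), orderTy (markCol F cM w) 1 (univ ∩ Iio (w i)),
      orderTy (markCol F cM w) 1 (univ ∩ Ioi (w i))) ∈
        (orderTy (markCol F cM w) 2 univ).elems := mem_orderTy.2 ⟨_, mem_univ _, rfl⟩
  rw [h, mem_orderTy] at hi
  obtain ⟨z, -, hz⟩ := hi
  have hz0 : markCol F cM w (w i) = markCol F cN w' z := congrArg Prod.fst hz
  obtain rfl : w' i = z := (Set.ext_iff.1 (congrArg Prod.snd hz0) i).1 rfl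
  exact Set.ext_iff.1 (congrArg Prod.fst hz0) ⟨k, hk⟩

theorem exists_orderTy_test {α : Type} {n : ℕ} (φ : (CLOLang ι).BoundedFormula α n) :
    ∃ (F : Finset ι) (m : ℕ), ∀ (M N : Type) [LinearOrder M] [LinearOrder N]
      (cM : ι → Set M) (cN : ι → Set N) (v : α → M) (v' : α → N) (xs : Fin n → M)
      (xs' : Fin n → N),
      orderTy (markCol F cM (Sum.elim v xs)) m univ =
        orderTy (markCol F cN (Sum.elim v' xs')) m univ →
      ((letI := CLOStr ι M cM; φ.Realize v xs) ↔ (letI := CLOStr ι N cN; φ.Realize v' xs')) := by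
  classical
  induction φ with
  | falsum => exact ⟨∅, 0, fun _ _ _ _ _ _ _ _ _ _ _ => Iff.rfl⟩
  | equal t₁ t₂ =>
    rcases t₁ with i | f
    swap
    · exact Empty.elim f
    rcases t₂ with j | f
    swap
    · exact Empty.elim f
    exact ⟨∅, 2, fun _ _ _ _ _ _ _ _ _ _ h => (atomic_of_orderTy_markCol h i j).1⟩
  | rel R ts =>
    have hts : ∀ i, ∃ j, ts i = Term.var j := by
      intro i
      rcases ts i with j | f
      · exact ⟨j, rfl⟩
      · exact Empty.elim f
    choose p hp using hts
    obtain rfl : ts = fun i => Term.var (p i) := funext hp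
    cases R with
    | lt => exact ⟨∅, 2, fun _ _ _ _ _ _ _ _ _ _ h => (atomic_of_orderTy_markCol h _ _).2.1⟩
    | color k => exact ⟨{k}, 2, fun _ _ _ _ _ _ _ _ _ _ h =>
        (atomic_of_orderTy_markCol h (p 0) (p 0)).2.2 k (Finset.mem_singleton_self k)⟩
  | imp φ ψ ih₁ ih₂ =>
    obtain ⟨F₁, m₁, h₁⟩ := ih₁
    obtain ⟨F₂, m₂, h₂⟩ := ih₂
    refine ⟨F₁ ∪ F₂, max m₁ m₂, fun M N _ _ cM cN v v' xs xs' h => imp_congr ?_ ?_⟩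
    · exact h₁ M N cM cN v v' xs xs' (orderTy_markCol_mono Finset.subset_union_left
        (orderTy_eq_of_le (le_max_left _ _) h))
    · exact h₂ M N cM cN v v' xs xs' (orderTy_markCol_mono Finset.subset_union_right
        (orderTy_eq_of_le (le_max_right _ _) h))
  | @all n φ ih =>
    obtain ⟨F, m, hF⟩ := ih
    refine ⟨F, m + 1, fun M N _ _ cM cN v v' xs xs' h => ?_⟩
    have he : ∀ j : α ⊕ Fin (n + 1), j = Sum.inr (Fin.last n) ∨
        j ∈ range (Sum.map id Fin.castSucc : α ⊕ Fin n → α ⊕ Fin (n + 1)) := by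
      rintro (a | j)
      · exact .inr ⟨.inl a, rfl⟩
      · induction j using Fin.lastCases with
        | last => exact .inl rfl
        | cast j => exact .inr ⟨.inr j, rfl⟩
    have hsnoc : ∀ {L : Type} (v : α → L) (xs : Fin n → L) (x : L),
        Sum.elim v (Fin.snoc xs x : Fin (n + 1) → L) ∘ Sum.map id Fin.castSucc =
          Sum.elim v xs := by
      intro L v xs x
      ext (a | j) <;> simp
    have hlast : ∀ {L : Type} (v : α → L) (xs : Fin n → L) (x : L),
        Sum.elim v (Fin.snoc xs x : Fin (n + 1) → L) (Sum.inr (Fin.last n)) = x := by simp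
    constructor
    · intro hall y
      obtain ⟨x, hx⟩ := exists_extend_markCol h.symm _ _ he y
      exact (hF M N cM cN v v' _ _ (hx _ _ (hsnoc v' xs' y) (hlast v' xs' y) (hsnoc v xs x)
        (hlast v xs x)).symm).1 (hall x)
    · intro hall x
      obtain ⟨y, hy⟩ := exists_extend_markCol h _ _ he x
      exact (hF M N cM cN v v' _ _ (hy _ _ (hsnoc v xs x) (hlast v xs x) (hsnoc v' xs' y)
        (hlast v' xs' y))).2 (hall y)

theorem exists_orderTy_test_formula {α : Type} (φ : (CLOLang ι).Formula α) :
    ∃ (F : Finset ι) (m : ℕ), ∀ (M N : Type) [LinearOrder M] [LinearOrder N]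
      (cM : ι → Set M) (cN : ι → Set N) (v : α → M) (v' : α → N),
      orderTy (markCol F cM v) m univ = orderTy (markCol F cN v') m univ →
      (Sat M cM φ v ↔ Sat N cN φ v') := by
  obtain ⟨F, m, h⟩ := exists_orderTy_test φ
  refine ⟨F, m, fun M N _ _ cM cN v v' hv => h M N cM cN v v' default default ?_⟩
  have key : ∀ {L : Type} [LinearOrder L] (c : ι → Set L) (v : α → L) (xs : Fin 0 → L),
      ∀ x ∈ univ, markCol F c (Sum.elim v xs) x = Prod.map id (Sum.inl '' ·) (markCol F c v x) := by
    intro L _ c v xs x _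
    refine Prod.ext rfl (Set.ext ?_)
    rintro (a | j)
    · simp [markCol]
    · exact j.elim0
  rw [orderTy_recolor _ m (key cM v default), orderTy_recolor _ m (key cN v' default), hv]

end ElementaryTest

section Gap

variable {M K : Type} [LinearOrder M] {col : M → K} {n : ℕ} {a b c d x : M}

theorem Ioo_inter_Iio_of_le (h : x ≤ c) : Ioo b c ∩ Iio x = Ioo b x := by
  rw [Ioo_inter_Iio, min_eq_right h]

theorem Ioo_inter_Ioi_of_le (h : b ≤ x) : Ioo b c ∩ Ioi x = Ioo x c := by
  rw [inter_comm, Ioi_inter_Ioo, max_eq_left h]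

theorem Iio_inter_Iio_of_le (h : x ≤ c) : Iio c ∩ Iio x = Iio x := by
  rw [Iio_inter_Iio, min_eq_right h]

theorem Ioi_inter_Ioi_of_le (h : b ≤ x) : Ioi b ∩ Ioi x = Ioi x := by
  rw [Ioi_inter_Ioi, max_eq_right h]

theorem orderTy_Iio_eq_add (col : M → K) (n : ℕ) (h : b ≤ c) :
    orderTy col n (Iio c) = orderTy col n (Iio b) + orderTy col n (Ico b c) := by
  rw [← orderTy_union (S := Iio b) _ _ fun x hx y hy => lt_of_lt_of_le hx hy.1,
    Iio_union_Ico_eq_Iio h]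

theorem orderTy_Iio_eq_Iic_add (col : M → K) (n : ℕ) (h : b < c) :
    orderTy col n (Iio c) = orderTy col n (Iic b) + orderTy col n (Ioo b c) := by
  rw [← orderTy_union (S := Iic b) _ _ fun x hx y hy => lt_of_le_of_lt hx hy.1,
    Iic_union_Ioo_eq_Iio h]

theorem orderTy_Ioo_eq_add_Ico (col : M → K) (n : ℕ) (h : a < b) (h' : b ≤ c) :
    orderTy col n (Ioo a c) = orderTy col n (Ioo a b) + orderTy col n (Ico b c) := by
  rw [← orderTy_union _ _ fun x hx y hy => lt_of_lt_of_le hx.2 hy.1, Ioo_union_Ico_eq_Ioo h h']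

theorem orderTy_Ioo_eq_Ioc_add (col : M → K) (n : ℕ) (h : a ≤ b) (h' : b < c) :
    orderTy col n (Ioo a c) = orderTy col n (Ioc a b) + orderTy col n (Ioo b c) := by
  rw [← orderTy_union _ _ fun x hx y hy => lt_of_le_of_lt hx.2 hy.1, Ioc_union_Ioo_eq_Ioo h h']

theorem orderTy_univ_eq_Iic_add (col : M → K) (n : ℕ) (b : M) :
    orderTy col n univ = orderTy col n (Iic b) + orderTy col n (Ioi b) := by
  rw [← orderTy_union (S := Iic b) (T := Ioi b) _ _ fun x hx y hy => lt_of_le_of_lt hx hy,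
    Iic_union_Ioi]

/-- The interval `(b, c)` has the same type of rank `n` as the sum of the final segment above `b`
and the initial segment below `c`. -/
def AdditiveGap (col : M → K) (n : ℕ) (b c : M) : Prop :=
  orderTy col n (Ioo b c) = orderTy col n (Ioi b) + orderTy col n (Iio c)

theorem AdditiveGap.mono (h : AdditiveGap col n b c) (hbc : b < c) (hcd : c ≤ d) :
    AdditiveGap col n b d := by
  unfold AdditiveGap at *
  rw [orderTy_Ioo_eq_add_Ico col n hbc hcd, h, orderTy_Iio_eq_add col n hcd, add_assoc]

/-- The point `x` lies above `b`, and `τ` collects its color and the types of the parts of the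
final segment above `b` which lie below and above `x`. -/
def HasTyAbove (col : M → K) (n : ℕ) (τ : K × OrderTy K n × OrderTy K n) (b x : M) : Prop :=
  b < x ∧ col x = τ.1 ∧ orderTy col n (Ioo b x) = τ.2.1 ∧ orderTy col n (Ioi x) = τ.2.2

end Gap

section SelfAdditive

variable {ι α M : Type} [LinearOrder M] {c : ι → Set M}

theorem uniformDef_hasTyAbove (F : Finset ι) (n : ℕ)
    (τ : Set F × OrderTy (Set F) n × OrderTy (Set F) n) (i j : α) :
    UniformDef fun M _ (c : ι → Set M) v => HasTyAbove (finColor F c) n τ (v i) (v j) :=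
  (UniformDef.lt i j).and <| (uniformDef_finColor F j τ.1).and <|
    (uniformDef_orderTy F n τ.2.1 (Q := fun _ _ _ v y => v i < y ∧ y < v j)
      ((UniformDef.lt (Sum.inl i) (Sum.inr ())).and (.lt (Sum.inr ()) (Sum.inl j)))).and
    (uniformDef_orderTy F n τ.2.2 (Q := fun _ _ _ v y => v j < y)
      (.lt (Sum.inl j) (Sum.inr ())))

theorem uniformDef_additiveGap (F : Finset ι) (n : ℕ) (i j : α) :
    UniformDef fun M _ (c : ι → Set M) v => AdditiveGap (finColor F c) n (v i) (v j) := by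
  refine UniformDef.comp_finite
    (β := OrderTy (Set F) n × OrderTy (Set F) n × OrderTy (Set F) n)
    (f := fun M _ c v => (orderTy (finColor F c) n (Ioo (v i) (v j)),
      orderTy (finColor F c) n (Ioi (v i)), orderTy (finColor F c) n (Iio (v j))))
    (fun t => ?_) fun p => p.1 = p.2.1 + p.2.2
  refine ((uniformDef_orderTy F n t.1 (Q := fun _ _ _ v y => v i < y ∧ y < v j)
      ((UniformDef.lt (Sum.inl i) (Sum.inr ())).and (.lt (Sum.inr ()) (Sum.inl j)))).and <|
    (uniformDef_orderTy F n t.2.1 (Q := fun _ _ _ v y => v i < y)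
      (.lt (Sum.inl i) (Sum.inr ()))).and
    (uniformDef_orderTy F n t.2.2 (Q := fun _ _ _ v y => y < v j)
      (.lt (Sum.inr ()) (Sum.inl j)))).congr fun M _ c v => ?_
  rw [Prod.ext_iff, Prod.ext_iff]
  rfl

theorem SelfAdditive.noMinOrder (h : SelfAdditive ι M c) : NoMinOrder M := by
  refine ⟨fun a => ?_⟩
  by_contra! ha
  have hall := h.forall_of_exists (P := fun M _ _ x => ∀ y : M, x ≤ y)
    (UniformDef.forall_elem (.le (Sum.inl ()) (Sum.inr ())))
    ⟨fun x _ y hy z hz w => hz.2.trans (hy w)⟩ ⟨a, ha⟩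
  obtain ⟨x, y, hxy⟩ := h.1
  exact hxy (le_antisymm (hall x y) (hall y x))

theorem SelfAdditive.eventually_exists_hasTyAbove (h : SelfAdditive ι M c) (F : Finset ι) (n : ℕ)
    (τ : Set F × OrderTy (Set F) n × OrderTy (Set F) n) (l : M) :
    ∀ᶠ b in Filter.atBot, (∃ x, HasTyAbove (finColor F c) n τ b x) →
      ∃ x ≤ l, HasTyAbove (finColor F c) n τ b x := by
  have := h.1
  by_contra hne
  have hV := h.forall_of_exists
    (P := fun M _ c z => ∀ m : M, ∃ b : M, b ≤ m ∧
      (∃ x, HasTyAbove (finColor F c) n τ b x) ∧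
      ∀ x, HasTyAbove (finColor F c) n τ b x → z < x)
    (.forall_elem <| .exists_elem <| .and (.le (Sum.inr ()) (Sum.inl (Sum.inr ()))) <|
      .and (.exists_elem (uniformDef_hasTyAbove F n τ (Sum.inl (Sum.inr ())) (Sum.inr ())))
      (.forall_elem <| (uniformDef_hasTyAbove F n τ (Sum.inl (Sum.inr ())) (Sum.inr ())).imp
        (.lt (Sum.inl (Sum.inl (Sum.inl ()))) (Sum.inr ()))))
    ⟨fun x _ y hy z hz m => by
      obtain ⟨b, hb, hb', hb''⟩ := hy m
      exact ⟨b, hb, hb', fun w hw => hz.2.trans_lt (hb'' w hw)⟩⟩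
    ⟨l, fun m => by
      obtain ⟨b, hb, hb'⟩ := (Filter.frequently_atBot.1 (Filter.not_eventually.1 hne)) m
      push Not at hb'
      exact ⟨b, hb, hb'.1, fun x hx => lt_of_not_ge fun hxl => hb'.2 x hxl hx⟩⟩
  have hp : ∀ s : OrderTy (Set F) n, ∃ p, (∃ b ≤ l, orderTy (finColor F c) n (Ioc b l) = s ∧
      ∃ x, l < x ∧ HasTyAbove (finColor F c) n τ b x) →
      ∃ b ≤ l, orderTy (finColor F c) n (Ioc b l) = s ∧ l < p ∧
        HasTyAbove (finColor F c) n τ b p := by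
    intro s
    by_cases hs : ∃ b ≤ l, orderTy (finColor F c) n (Ioc b l) = s ∧
      ∃ x, l < x ∧ HasTyAbove (finColor F c) n τ b x
    · obtain ⟨b, hb, hs, x, hx⟩ := hs
      exact ⟨x, fun _ => ⟨b, hb, hs, hx⟩⟩
    · exact ⟨l, fun h => (hs h).elim⟩
  choose p hp using hp
  obtain ⟨z, hz⟩ := Finite.exists_le p
  obtain ⟨b, hb, ⟨x, hx⟩, hmin⟩ := hV (max z l) l
  obtain ⟨b', hb', hs, hlp, hX⟩ := hp _ ⟨b, hb, rfl, x, (le_max_right z l).trans_lt (hmin x hx), hx⟩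
  refine (hmin _ ⟨hb.trans_lt hlp, hX.2.1, ?_, hX.2.2.2⟩).not_ge ((hz _).trans (le_max_left z l))
  rw [← hX.2.2.1, orderTy_Ioo_eq_Ioc_add _ n hb hlp, orderTy_Ioo_eq_Ioc_add _ n hb' hlp, hs]

theorem SelfAdditive.eventually_additiveGap (h : SelfAdditive ι M c) (F : Finset ι) (n : ℕ)
    (d : M) : ∀ᶠ b in Filter.atBot, AdditiveGap (finColor F c) n b d := by
  have := h.noMinOrder
  have := h.1
  induction n generalizing d with
  | zero => exact .of_forall fun _ => OrderTy.eq_of_rank_zero _ _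
  | succ n ih =>
    set col := finColor F c
    obtain ⟨l, hl⟩ := Filter.eventually_atBot.1 ((ih d).and (Filter.eventually_lt_atBot d))
    have hrep : ∀ᶠ b in Filter.atBot, ∀ τ : Set F × OrderTy (Set F) n × OrderTy (Set F) n,
        (∃ x < d, τ = (col x, orderTy col n (Iio x), orderTy col n (Ioo x d))) →
        ∃ x < d, b < x ∧ AdditiveGap col n b x ∧
          τ = (col x, orderTy col n (Iio x), orderTy col n (Ioo x d)) := by
      refine Filter.eventually_all.2 fun τ => ?_
      by_cases hτ : ∃ x < d, τ = (col x, orderTy col n (Iio x), orderTy col n (Ioo x d))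
      · obtain ⟨x, hx, hτ⟩ := hτ
        filter_upwards [ih x, Filter.eventually_lt_atBot x] with b hb hbx _
        exact ⟨x, hx, hbx, hb, hτ⟩
      · exact .of_forall fun _ h => (hτ h).elim
    filter_upwards [ih l, Filter.eventually_lt_atBot l, hrep,
      Filter.eventually_all.2 fun τ => h.eventually_exists_hasTyAbove F n τ l]
      with b hbl hb hrep habove
    refine OrderTy.ext_elems fun q => ?_
    rw [mem_orderTy, OrderTy.mem_add]
    simp only [trunc_orderTy]
    constructor
    · rintro ⟨x, hx, rfl⟩
      rw [Ioo_inter_Iio_of_le hx.2.le, Ioo_inter_Ioi_of_le hx.1.le]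
      rcases le_or_gt x l with hxl | hxl
      · refine .inl ⟨_, ⟨x, hx.1, rfl⟩, ?_⟩
        rw [(hl x hxl).1, Ioi_inter_Ioi_of_le hx.1.le]
        rfl
      · refine .inr ⟨_, ⟨x, hx.2, rfl⟩, ?_⟩
        rw [hbl.mono hb hxl.le, Iio_inter_Iio_of_le hx.2.le, Iio_inter_Ioi]
    · rintro (⟨_, ⟨x, hx, rfl⟩, rfl⟩ | ⟨_, ⟨x, hx, rfl⟩, rfl⟩)
      · obtain ⟨y, hyl, hby, h1, h2, h3⟩ := habove
          (col x, orderTy col n (Ioo b x), orderTy col n (Ioi x)) ⟨x, hx, rfl, rfl, rfl⟩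
        refine ⟨y, ⟨hby, (hl y hyl).2⟩, ?_⟩
        rw [Ioo_inter_Iio_of_le (hl y hyl).2.le, Ioo_inter_Ioi_of_le hby.le, (hl y hyl).1,
          Ioi_inter_Ioi_of_le (le_of_lt hx), show col y = _ from h1,
          show orderTy col n (Ioo b y) = _ from h2, show orderTy col n (Ioi y) = _ from h3]
        rfl
      · obtain ⟨y, hyd, hby, hgap, hy⟩ := hrep _ ⟨x, hx, rfl⟩
        simp only [Prod.mk.injEq] at hy
        refine ⟨y, ⟨hby, hyd⟩, ?_⟩
        rw [Ioo_inter_Iio_of_le hyd.le, Ioo_inter_Ioi_of_le hby.le, hgap,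
          Iio_inter_Iio_of_le (le_of_lt hx), Iio_inter_Ioi, hy.1, hy.2.1, hy.2.2]

theorem SelfAdditive.orderTy_univ_add_Iio (h : SelfAdditive ι M c) (F : Finset ι) (n : ℕ)
    (d : M) : orderTy (finColor F c) n univ + orderTy (finColor F c) n (Iio d) =
      orderTy (finColor F c) n (Iio d) := by
  have := h.noMinOrder
  have := h.1
  obtain ⟨b, hb, hbd⟩ := ((h.eventually_additiveGap F n d).and
    (Filter.eventually_lt_atBot d)).exists
  rw [orderTy_univ_eq_Iic_add _ n b, add_assoc,
    ← show orderTy (finColor F c) n (Ioo b d) = _ from hb,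
    ← orderTy_Iio_eq_Iic_add _ n hbd]

theorem SelfAdditive.orderDual (h : SelfAdditive ι M c) :
    SelfAdditive ι Mᵒᵈ fun i => OrderDual.ofDual ⁻¹' c i := by
  have := h.1
  refine ⟨inferInstance, fun φ hφ => ?_⟩
  have hset : FmlSet ι Mᵒᵈ (fun i => OrderDual.ofDual ⁻¹' c i) φ =
      OrderDual.ofDual ⁻¹' FmlSet ι M c (dualFormula φ) := Set.ext fun x =>
    sat_dualFormula (cM := c) OrderDual.toDual (fun _ _ => Iff.rfl) (fun _ _ => Iff.rfl) φ
      fun _ => OrderDual.ofDual x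
  rw [hset] at hφ ⊢
  rcases h.2 _ (ordConnected_dual.1 hφ) with h0 | h1
  · exact .inl (by rw [h0]; rfl)
  · exact .inr (by rw [h1]; rfl)

theorem orderTy_finColor_orderDual (F : Finset ι) (n : ℕ) (S : Set M) :
    orderTy (finColor F fun i => OrderDual.ofDual ⁻¹' c i) n (OrderDual.ofDual ⁻¹' S) =
      OrderTy.rev n (orderTy (finColor F c) n S) :=
  orderTy_orderDual (finColor F c) n S

theorem SelfAdditive.orderTy_Ioi_add_univ (h : SelfAdditive ι M c) (F : Finset ι) (n : ℕ)
    (d : M) : orderTy (finColor F c) n (Ioi d) + orderTy (finColor F c) n univ =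
      orderTy (finColor F c) n (Ioi d) := by
  have hd := h.orderDual.orderTy_univ_add_Iio F n (OrderDual.toDual d)
  have h1 := orderTy_finColor_orderDual (c := c) F n univ
  have h2 := orderTy_finColor_orderDual (c := c) F n (Ioi d)
  have h3 : OrderDual.ofDual ⁻¹' Ioi d = Iio (OrderDual.toDual d) := rfl
  rw [preimage_univ] at h1
  rw [h3] at h2
  rw [h1, h2, ← OrderTy.rev_add] at hd
  rw [← OrderTy.rev_rev n (_ + _), hd, OrderTy.rev_rev]

theorem SelfAdditive.exists_le_orderTy (h : SelfAdditive ι M c) {A : Type} [LinearOrder A]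
    {cA : ι → Set A} (F : Finset ι) (n : ℕ)
    (hA : orderTy (finColor F cA) (n + 1) univ = orderTy (finColor F c) (n + 1) univ)
    (a : A) (l : M) : ∃ x ≤ l, finColor F c x = finColor F cA a ∧
      orderTy (finColor F c) n (Iio x) = orderTy (finColor F cA) n (Iio a) ∧
      orderTy (finColor F c) n (Ioi x) = orderTy (finColor F cA) n (Ioi a) := by
  refine h.forall_of_exists (P := fun M _ c l => ∃ x : M, x ≤ l ∧ finColor F c x = finColor F cA a ∧
      orderTy (finColor F c) n (Iio x) = orderTy (finColor F cA) n (Iio a) ∧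
      orderTy (finColor F c) n (Ioi x) = orderTy (finColor F cA) n (Ioi a)) ?_ ?_ ?_ l
  · exact .exists_elem <| .and (.le (Sum.inr ()) (Sum.inl ())) <|
      (uniformDef_finColor F (Sum.inr ()) _).and <|
      (uniformDef_orderTy F n _ (Q := fun _ _ _ v y => y < v (Sum.inr ()))
        (.lt (Sum.inr ()) (Sum.inl (Sum.inr ())))).and
      (uniformDef_orderTy F n _ (Q := fun _ _ _ v y => v (Sum.inr ()) < y)
        (.lt (Sum.inl (Sum.inr ())) (Sum.inr ())))
  · exact ⟨fun x hx y _ z hz => hx.imp fun w hw => ⟨hw.1.trans hz.1, hw.2⟩⟩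
  · have ha : (finColor F cA a, orderTy (finColor F cA) n (univ ∩ Iio a),
        orderTy (finColor F cA) n (univ ∩ Ioi a)) ∈
          (orderTy (finColor F cA) (n + 1) univ).elems := mem_orderTy.2 ⟨a, mem_univ a, rfl⟩
    rw [hA, mem_orderTy] at ha
    obtain ⟨x, -, hx⟩ := ha
    simp only [univ_inter, Prod.mk.injEq] at hx
    exact ⟨x, x, le_rfl, hx.1.symm, hx.2.1.symm, hx.2.2.symm⟩

end SelfAdditive

section SimClass

variable {ι A B : Type} [LinearOrder A] [LinearOrder B] {cA : ι → Set A} {cB : ι → Set B} {b : B}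

theorem ordConnected_simRel (b : B) : {x | SimRel ι cB b x}.OrdConnected := by
  refine ⟨?_⟩
  rintro x ⟨φ, hφ, hu, hl, hb, hx⟩ y ⟨ψ, hψ, hu', hl', hb', hy⟩ z hz
  rcases le_total b z with hbz | hbz
  · exact ⟨ψ, hψ, hu', hl', hb', hψ.out hb' hy ⟨hbz, hz.2⟩⟩
  · exact ⟨φ, hφ, hu, hl, hb, hφ.out hx hb ⟨hz.1, hbz⟩⟩

theorem SelfAdditive.noMaxOrder (h : SelfAdditive ι B cB) : NoMaxOrder B :=
  have := h.orderDual.noMinOrder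
  ⟨fun a => exists_lt (OrderDual.toDual a)⟩

theorem SelfAdditive.simRel_self (h : SelfAdditive ι B cB) (b : B) : SimRel ι cB b b := by
  have := h.noMinOrder
  have := h.noMaxOrder
  obtain ⟨φ, hφ⟩ := (UniformDef.le (ι := ι) (Sum.inl () : Unit ⊕ Unit) (Sum.inr ())).and
    (.le (Sum.inr ()) (Sum.inl ()))
  have hset : {x | Sat B cB φ (Sum.elim (fun _ => x) fun _ => b)} = {b} := Set.ext fun x =>
    (hφ B cB _).trans ⟨fun hx => le_antisymm hx.1 hx.2, fun hx => ⟨le_of_eq hx, ge_of_eq hx⟩⟩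
  obtain ⟨u, hu⟩ := exists_gt b
  obtain ⟨l, hl⟩ := exists_lt b
  refine ⟨φ, ?_⟩
  rw [hset]
  exact ⟨ordConnected_singleton, ⟨u, fun z hz => lt_of_eq_of_lt hz hu⟩,
    ⟨l, fun z hz => lt_of_lt_of_eq hl (Eq.symm hz)⟩, rfl, rfl⟩

theorem SelfAdditive.additiveGap_of_simRel (h : SelfAdditive ι B cB) (F : Finset ι) (n : ℕ)
    {x d : B} (hd : SimRel ι cB b d) (hxd : x < d) (hx : ¬ SimRel ι cB b x) :
    AdditiveGap (finColor F cB) n x d := by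
  have := h.noMinOrder
  have := h.1
  by_contra hgap
  obtain ⟨φ, hφ, ⟨u, hu⟩, ⟨l, hl⟩, hbφ, hdφ⟩ := hd
  set D := {x | Sat B cB φ (Sum.elim (fun _ => x) fun _ => b)}
  obtain ⟨ψ, hψ⟩ : UniformDef fun M _ (c : ι → Set M) (v : Unit ⊕ Unit → M) =>
      Sat M c φ (fun i => v i) ∨ ∃ d z : M,
        Sat M c φ (Sum.elim (fun _ => d) fun _ => v (Sum.inr ())) ∧
        z ≤ v (Sum.inl ()) ∧ v (Sum.inl ()) ≤ d ∧ ¬ AdditiveGap (finColor F c) n z d := by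
    refine (UniformDef.sat φ).or <| .exists_elem <| .exists_elem <| .and ?_ <|
      .and (.le (Sum.inr ()) (Sum.inl (Sum.inl (Sum.inl ())))) <|
      .and (.le (Sum.inl (Sum.inl (Sum.inl ()))) (Sum.inl (Sum.inr ()))) <|
      (uniformDef_additiveGap F n (Sum.inr ()) (Sum.inl (Sum.inr ()))).not
    refine ((UniformDef.sat φ).reindex (Sum.elim (fun _ => Sum.inl (Sum.inr ()))
      fun _ => Sum.inl (Sum.inl (Sum.inr ())))).congr fun M _ c v => ?_
    refine iff_of_eq (congrArg _ ?_)
    ext (i | i) <;> rfl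
  have hE : ∀ y, Sat B cB ψ (Sum.elim (fun _ => y) fun _ => b) ↔
      y ∈ D ∨ ∃ d z, d ∈ D ∧ z ≤ y ∧ y ≤ d ∧ ¬ AdditiveGap (finColor F cB) n z d :=
    fun y => hψ B cB _
  have hle : ∀ y, Sat B cB ψ (Sum.elim (fun _ => y) fun _ => b) → ∃ d ∈ D, y ≤ d := by
    intro y hy
    rcases (hE y).1 hy with hy | ⟨d, z, hd, -, hyd, -⟩
    · exact ⟨y, hy, le_rfl⟩
    · exact ⟨d, hd, hyd⟩
  refine hx ⟨ψ, ⟨?_⟩, ⟨u, fun y hy => ?_⟩, ?_, (hE b).2 (.inl hbφ),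
    (hE x).2 (.inr ⟨d, x, hdφ, le_rfl, hxd.le, hgap⟩)⟩
  · intro p hp q hq y hy
    obtain ⟨e, he, hqe⟩ := hle q hq
    refine (hE y).2 ?_
    rcases (hE p).1 hp with hp | ⟨d, z, hd, hzp, -, hgap⟩
    · exact .inl (hφ.out hp he ⟨hy.1, hy.2.trans hqe⟩)
    · rcases le_total y d with hyd | hyd
      · exact .inr ⟨d, z, hd, hzp.trans hy.1, hyd, hgap⟩
      · exact .inl (hφ.out hd he ⟨hyd, hy.2.trans hqe⟩)
  · obtain ⟨d, hd, hyd⟩ := hle y hy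
    exact hyd.trans_lt (hu d hd)
  · obtain ⟨m, hm⟩ := Filter.eventually_atBot.1 ((h.eventually_additiveGap F n l).and
      (Filter.eventually_lt_atBot l))
    refine ⟨m, fun y hy => ?_⟩
    rcases (hE y).1 hy with hy | ⟨d, z, hd, hzy, hyd, hgap⟩
    · exact (hm m le_rfl).2.trans (hl y hy)
    · refine lt_of_lt_of_le (lt_of_not_ge fun hzm => hgap ?_) hzy
      exact (hm z hzm).1.mono (hm z hzm).2 (hl d hd).le

theorem orderTy_univ_add_simRel (hA : SelfAdditive ι A cA) (hB : SelfAdditive ι B cB)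
    (F : Finset ι) (hAB : ∀ n, orderTy (finColor F cA) n univ = orderTy (finColor F cB) n univ)
    (n : ℕ) {d : B} (hd : SimRel ι cB b d) :
    orderTy (finColor F cA) n univ + orderTy (finColor F cB) n ({x | SimRel ι cB b x} ∩ Iio d) =
      orderTy (finColor F cB) n (Iio d) := by
  have := hB.noMinOrder
  have := hB.1
  induction n generalizing d with
  | zero => exact OrderTy.eq_of_rank_zero _ _
  | succ n ih =>
    have hC : ∀ x, SimRel ι cB b x → x < d →
        ({x | SimRel ι cB b x} ∩ Iio d) ∩ Iio x = {x | SimRel ι cB b x} ∩ Iio x ∧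
        ({x | SimRel ι cB b x} ∩ Iio d) ∩ Ioi x = Ioo x d := by
      intro x hx hxd
      refine ⟨by rw [inter_assoc, Iio_inter_Iio_of_le hxd.le], ?_⟩
      rw [inter_assoc, Iio_inter_Ioi, inter_eq_right]
      exact Ioo_subset_Icc_self.trans ((ordConnected_simRel b).out hx hd)
    have habs : ∀ a : A, orderTy (finColor F cA) n (Ioi a) +
        orderTy (finColor F cB) n ({x | SimRel ι cB b x} ∩ Iio d) =
        orderTy (finColor F cA) n (Ioi a) + orderTy (finColor F cB) n (Iio d) := fun a => by
      rw [← hA.orderTy_Ioi_add_univ, add_assoc, ih hd, hA.orderTy_Ioi_add_univ]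
    refine OrderTy.ext_elems fun q => ?_
    rw [mem_orderTy, OrderTy.mem_add]
    simp only [trunc_orderTy]
    constructor
    · rintro (⟨_, ⟨a, -, rfl⟩, rfl⟩ | ⟨_, ⟨x, hx, rfl⟩, rfl⟩)
      · obtain ⟨m, hm⟩ := Filter.eventually_atBot.1 ((hB.eventually_additiveGap F n d).and
          (Filter.eventually_lt_atBot d))
        obtain ⟨x, hxm, h0, h1, h2⟩ := hB.exists_le_orderTy F n (hAB (n + 1)) a m
        refine ⟨x, (hm x hxm).2, ?_⟩
        rw [univ_inter, univ_inter, habs, Iio_inter_Iio_of_le (hm x hxm).2.le, Iio_inter_Ioi,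
          show orderTy _ _ (Ioo x d) = _ from (hm x hxm).1, h0, h1, h2]
      · refine ⟨x, hx.2, ?_⟩
        rw [(hC x hx.1 hx.2).1, (hC x hx.1 hx.2).2, Iio_inter_Iio_of_le (le_of_lt hx.2),
          Iio_inter_Ioi, ih hx.1]
    · rintro ⟨x, hxd, rfl⟩
      rw [Iio_inter_Iio_of_le (le_of_lt hxd), Iio_inter_Ioi]
      by_cases hx : SimRel ι cB b x
      · refine .inr ⟨_, ⟨x, ⟨hx, hxd⟩, rfl⟩, ?_⟩
        rw [(hC x hx hxd).1, (hC x hx hxd).2, ih hx]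
      · obtain ⟨a₀, -⟩ := hA.1
        obtain ⟨a, -, h0, h1, h2⟩ := hA.exists_le_orderTy F n (hAB (n + 1)).symm x a₀
        refine .inl ⟨_, ⟨a, mem_univ a, rfl⟩, ?_⟩
        rw [univ_inter, univ_inter, habs, h0, h1, h2, hB.additiveGap_of_simRel F n hd hxd hx]

theorem orderTy_Ioi_add_simRel (hA : SelfAdditive ι A cA) (hB : SelfAdditive ι B cB)
    (F : Finset ι) (hAB : ∀ n, orderTy (finColor F cA) n univ = orderTy (finColor F cB) n univ)
    (n : ℕ) (a : A) {d : B} (hd : SimRel ι cB b d) :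
    orderTy (finColor F cA) n (Ioi a) +
        orderTy (finColor F cB) n ({x | SimRel ι cB b x} ∩ Iio d) =
      orderTy (finColor F cA) n (Ioi a) + orderTy (finColor F cB) n (Iio d) := by
  rw [← hA.orderTy_Ioi_add_univ, add_assoc, orderTy_univ_add_simRel hA hB F hAB n hd,
    hA.orderTy_Ioi_add_univ]

theorem SimRel.of_orderDual {x : B}
    (h : SimRel ι (fun i => OrderDual.ofDual ⁻¹' cB i) (OrderDual.toDual b) (OrderDual.toDual x)) :
    SimRel ι cB b x := by
  obtain ⟨φ, hφ, ⟨u, hu⟩, ⟨l, hl⟩, hb, hx⟩ := h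
  have hsat : ∀ y, Sat Bᵒᵈ (fun i => OrderDual.ofDual ⁻¹' cB i) φ
      (Sum.elim (fun _ => OrderDual.toDual y) fun _ => OrderDual.toDual b) ↔
      Sat B cB (dualFormula φ) (Sum.elim (fun _ => y) fun _ => b) := by
    intro y
    rw [← sat_dualFormula (cM := cB) OrderDual.toDual (fun _ _ => Iff.rfl) (fun _ _ => Iff.rfl) φ,
      Sum.comp_elim]
    rfl
  refine ⟨dualFormula φ, ?_, ⟨OrderDual.ofDual l, fun z hz => hl _ ((hsat z).2 hz)⟩,
    ⟨OrderDual.ofDual u, fun z hz => hu _ ((hsat z).2 hz)⟩, (hsat b).1 hb, (hsat x).1 hx⟩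
  have hset : OrderDual.ofDual ⁻¹'
      {y | Sat B cB (dualFormula φ) (Sum.elim (fun _ => y) fun _ => b)} =
      {y | Sat Bᵒᵈ (fun i => OrderDual.ofDual ⁻¹' cB i) φ
        (Sum.elim (fun _ => y) fun _ => OrderDual.toDual b)} :=
    Set.ext fun y => (hsat (OrderDual.ofDual y)).symm
  rwa [← ordConnected_dual, hset]

theorem simRel_orderDual_iff {x : B} :
    SimRel ι (fun i => OrderDual.ofDual ⁻¹' cB i) (OrderDual.toDual b) (OrderDual.toDual x) ↔
      SimRel ι cB b x :=
  ⟨SimRel.of_orderDual, fun h => SimRel.of_orderDual (B := Bᵒᵈ) h⟩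

theorem simRel_add_orderTy_Iio (hA : SelfAdditive ι A cA) (hB : SelfAdditive ι B cB)
    (F : Finset ι) (hAB : ∀ n, orderTy (finColor F cA) n univ = orderTy (finColor F cB) n univ)
    (n : ℕ) (a : A) {d : B} (hd : SimRel ι cB b d) :
    orderTy (finColor F cB) n ({x | SimRel ι cB b x} ∩ Ioi d) +
        orderTy (finColor F cA) n (Iio a) =
      orderTy (finColor F cB) n (Ioi d) + orderTy (finColor F cA) n (Iio a) := by
  have key := orderTy_Ioi_add_simRel hA.orderDual hB.orderDual F (fun n => by
    have h1 := orderTy_finColor_orderDual (c := cA) F n univ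
    have h2 := orderTy_finColor_orderDual (c := cB) F n univ
    rw [preimage_univ] at h1 h2
    rw [h1, h2, hAB]) n (OrderDual.toDual a) (simRel_orderDual_iff.2 hd)
  have hset : {x | SimRel ι (fun i => OrderDual.ofDual ⁻¹' cB i) (OrderDual.toDual b) x} ∩
      Iio (OrderDual.toDual d) = OrderDual.ofDual ⁻¹' ({x | SimRel ι cB b x} ∩ Ioi d) :=
    Set.ext fun x => and_congr simRel_orderDual_iff Iff.rfl
  have h1 := orderTy_finColor_orderDual (c := cA) F n (Iio a)
  have h2 := orderTy_finColor_orderDual (c := cB) F n (Ioi d)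
  rw [show OrderDual.ofDual ⁻¹' Iio a = Ioi (OrderDual.toDual a) from rfl] at h1
  rw [show OrderDual.ofDual ⁻¹' Ioi d = Iio (OrderDual.toDual d) from rfl] at h2
  rw [hset, orderTy_finColor_orderDual, h1, h2, ← OrderTy.rev_add, ← OrderTy.rev_add] at key
  rw [← OrderTy.rev_rev n (_ + _), key, OrderTy.rev_rev]

end SimClass

section Assembly

variable {ι β A X B : Type} [LinearOrder A] [LinearOrder X] [LinearOrder B] {cA : ι → Set A}

theorem OrderTy.map_id {K : Type} (n : ℕ) (s : OrderTy K n) : OrderTy.map id n s = s := by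
  induction n with
  | zero => exact OrderTy.eq_of_rank_zero _ _
  | succ n ih =>
    refine OrderTy.ext_elems fun q => ?_
    rw [OrderTy.mem_map]
    constructor
    · rintro ⟨p, hp, rfl⟩
      simpa only [ih, id] using hp
    · exact fun hq => ⟨q, hq, by simp only [ih, id]⟩

theorem orderTy_markCol_sum (cA : ι → Set A) (cX : ι → Set X) (F : Finset ι) (n : ℕ)
    (w : β → A ⊕ₗ (X ⊕ₗ A)) {a₀ a₁ : A} {lo hi : X} (hlohi : lo ≤ hi)
    (hleft : ∀ j a, w j = toLex (Sum.inl a) → a ≤ a₀)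
    (hmid : ∀ j x, w j = toLex (Sum.inr (toLex (Sum.inl x))) → lo ≤ x ∧ x ≤ hi)
    (hright : ∀ j a, w j = toLex (Sum.inr (toLex (Sum.inr a))) → a₁ ≤ a) :
    orderTy (markCol F (sumColor2 cA (sumColor2 cX cA)) w) n univ =
      orderTy (markCol F (sumColor2 cA (sumColor2 cX cA)) w) n
        ((fun a => toLex (Sum.inl a)) '' Iic a₀) +
      OrderTy.map (fun k => (k, ∅)) n
        (orderTy (finColor F cA) n (Ioi a₀) + orderTy (finColor F cX) n (Iio lo)) +
      orderTy (markCol F (sumColor2 cA (sumColor2 cX cA)) w) n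
        ((fun x => toLex (Sum.inr (toLex (Sum.inl x)))) '' Icc lo hi) +
      OrderTy.map (fun k => (k, ∅)) n
        (orderTy (finColor F cX) n (Ioi hi) + orderTy (finColor F cA) n (Iio a₁)) +
      orderTy (markCol F (sumColor2 cA (sumColor2 cX cA)) w) n
        ((fun a => toLex (Sum.inr (toLex (Sum.inr a)))) '' Ici a₁) := by
  set col := markCol F (sumColor2 cA (sumColor2 cX cA)) w
  have hm₁ : StrictMono fun a : A => (toLex (Sum.inl a) : A ⊕ₗ (X ⊕ₗ A)) :=
    fun _ _ h => Sum.Lex.inl_lt_inl_iff.2 h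
  have hm₂ : StrictMono fun x : X => (toLex (Sum.inr (toLex (Sum.inl x))) : A ⊕ₗ (X ⊕ₗ A)) :=
    fun _ _ h => Sum.Lex.inr_lt_inr_iff.2 (Sum.Lex.inl_lt_inl_iff.2 h)
  have hm₃ : StrictMono fun a : A => (toLex (Sum.inr (toLex (Sum.inr a))) : A ⊕ₗ (X ⊕ₗ A)) :=
    fun _ _ h => Sum.Lex.inr_lt_inr_iff.2 (Sum.Lex.inr_lt_inr_iff.2 h)
  have h₁ := orderTy_image (col := finColor F cA) (col' := col) hm₁ (fun k => (k, ∅)) n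
    (S := Ioi a₀) fun a ha => Prod.ext rfl (eq_empty_of_forall_notMem fun j hj =>
      (hleft j a hj).not_gt ha)
  have h₂ := orderTy_image (col := finColor F cX) (col' := col) hm₂ (fun k => (k, ∅)) n
    (S := Iio lo) fun a ha => Prod.ext rfl (eq_empty_of_forall_notMem fun j hj =>
      (hmid j a hj).1.not_gt ha)
  have h₃ := orderTy_image (col := finColor F cX) (col' := col) hm₂ (fun k => (k, ∅)) n
    (S := Ioi hi) fun a ha => Prod.ext rfl (eq_empty_of_forall_notMem fun j hj =>
      (hmid j a hj).2.not_gt ha)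
  have h₄ := orderTy_image (col := finColor F cA) (col' := col) hm₃ (fun k => (k, ∅)) n
    (S := Iio a₁) fun a ha => Prod.ext rfl (eq_empty_of_forall_notMem fun j hj =>
      (hright j a hj).not_gt ha)
  have h₁₂ : ∀ (a : A) (x : X),
      (toLex (Sum.inl a) : A ⊕ₗ (X ⊕ₗ A)) < toLex (Sum.inr (toLex (Sum.inl x))) :=
    fun _ _ => Sum.Lex.inl_lt_inr _ _
  have h₁₃ : ∀ a a' : A,
      (toLex (Sum.inl a) : A ⊕ₗ (X ⊕ₗ A)) < toLex (Sum.inr (toLex (Sum.inr a'))) :=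
    fun _ _ => Sum.Lex.inl_lt_inr _ _
  have h₂₃ : ∀ (x : X) (a : A), (toLex (Sum.inr (toLex (Sum.inl x))) : A ⊕ₗ (X ⊕ₗ A)) <
      toLex (Sum.inr (toLex (Sum.inr a))) :=
    fun _ _ => Sum.Lex.inr_lt_inr_iff.2 (Sum.Lex.inl_lt_inr _ _)
  have hcover : ∀ y : A ⊕ₗ (X ⊕ₗ A), (∃ a, toLex (Sum.inl a) = y) ∨
      (∃ x, toLex (Sum.inr (toLex (Sum.inl x))) = y) ∨
      ∃ a, toLex (Sum.inr (toLex (Sum.inr a))) = y := by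
    rintro (a | x | a)
    exacts [.inl ⟨a, rfl⟩, .inr (.inl ⟨x, rfl⟩), .inr (.inr ⟨a, rfl⟩)]
  rw [OrderTy.map_add, OrderTy.map_add, ← h₁, ← h₂, ← h₃, ← h₄, ← orderTy_union,
    ← orderTy_union, ← orderTy_union, ← orderTy_union, ← orderTy_union, ← orderTy_union]
  · congr 1
    refine (eq_univ_of_forall fun y => ?_).symm
    simp only [mem_union, mem_image, mem_Iic, mem_Ioi, mem_Iio, mem_Icc, mem_Ici]
    have := hcover y
    grind
  all_goals
    simp only [mem_union, mem_image, mem_Iic, mem_Ioi, mem_Iio, mem_Icc, mem_Ici]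
    intro y hy z hz
    simp only [StrictMono] at hm₁ hm₂ hm₃
    grind

theorem exists_bounds_of_injective {L : Type} [Nonempty X] [Finite β] {i : X → L}
    (hi : Function.Injective i) (w : β → L) :
    ∃ lo hi : X, lo ≤ hi ∧ ∀ j x, w j = i x → lo ≤ x ∧ x ≤ hi := by
  have hfin : (i ⁻¹' range w).Finite := (finite_range w).preimage hi.injOn
  obtain ⟨l, hl⟩ := hfin.bddBelow
  obtain ⟨u, hu⟩ := hfin.bddAbove
  let x₀ := Classical.arbitrary X
  exact ⟨min l x₀, max u x₀, (min_le_right _ _).trans (le_max_right _ _), fun j x hj =>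
    ⟨(min_le_left _ _).trans (hl ⟨j, hj⟩), (hu ⟨j, hj⟩).trans (le_max_left _ _)⟩⟩

theorem orderTy_markCol_image {L L' : Type} [LinearOrder L] [LinearOrder L'] {F : Finset ι}
    {c : ι → Set L} {c' : ι → Set L'} {f : L → L'} (hf : StrictMono f)
    (hc : ∀ x, finColor F c' (f x) = finColor F c x) (w : β → L) (n : ℕ) (S : Set L) :
    orderTy (markCol F c' (f ∘ w)) n (f '' S) = orderTy (markCol F c w) n S := by
  rw [orderTy_image (col := markCol F c w) (col' := markCol F c' (f ∘ w)) hf id n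
    fun x _ => Prod.ext (hc x) (Set.ext fun _ => hf.injective.eq_iff), OrderTy.map_id]

theorem orderTy_subColor (F : Finset ι) (n : ℕ) (cB : ι → Set B) (C : Set B) (S : Set C) :
    orderTy (finColor F (subColor cB C)) n S = orderTy (finColor F cB) n (Subtype.val '' S) := by
  have h := orderTy_image (col := finColor F (subColor cB C)) (col' := finColor F cB)
    (g := (Subtype.val : C → B)) (fun _ _ h => h) id n (S := S) fun _ _ => rfl
  exact (h.trans (OrderTy.map_id n _)).symm

end Assembly

theorem stmt7 {ι : Type} [Countable ι] {A B : Type} [LinearOrder A] [LinearOrder B]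
    (cA : ι → Set A) (cB : ι → Set B)
    (hA : SelfAdditive ι A cA) (hB : SelfAdditive ι B cB)
    (hAB : CLOEquiv ι A cA B cB) (b : B) :
    IsElemMap ι
      (sumColor2 cA (sumColor2 (subColor cB {x | SimRel ι cB b x}) cA))
      (sumColor2 cA (sumColor2 cB cA))
      (fun x => toLex (Sum.map id
        (fun y => toLex (Sum.map (Subtype.val : {x | SimRel ι cB b x} → B) id (ofLex y)))
        (ofLex x))) := by
  intro k φ v
  set f : A ⊕ₗ ({x | SimRel ι cB b x} ⊕ₗ A) → A ⊕ₗ (B ⊕ₗ A) := fun x => toLex (Sum.map id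
    (fun y => toLex (Sum.map (Subtype.val : {x | SimRel ι cB b x} → B) id (ofLex y)))
    (ofLex x))
  have hfm : StrictMono f := by
    rintro (a | x | a) (a' | x' | a') h
    · exact Sum.Lex.inl_lt_inl_iff.2 (Sum.Lex.inl_lt_inl_iff.1 h)
    · exact Sum.Lex.inl_lt_inr _ _
    · exact Sum.Lex.inl_lt_inr _ _
    · exact (Sum.Lex.not_inr_lt_inl h).elim
    · have hx : x < x' := Sum.Lex.inl_lt_inl_iff.1 (Sum.Lex.inr_lt_inr_iff.1 h)
      exact Sum.Lex.inr_lt_inr_iff.2 (Sum.Lex.inl_lt_inl_iff.2 hx)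
    · exact Sum.Lex.inr_lt_inr_iff.2 (Sum.Lex.inl_lt_inr _ _)
    · exact (Sum.Lex.not_inr_lt_inl h).elim
    · exact (Sum.Lex.not_inr_lt_inl (Sum.Lex.inr_lt_inr_iff.1 h)).elim
    · exact Sum.Lex.inr_lt_inr_iff.2 (Sum.Lex.inr_lt_inr_iff.2
        (Sum.Lex.inr_lt_inr_iff.1 (Sum.Lex.inr_lt_inr_iff.1 h)))
  obtain ⟨F, n, hF⟩ := exists_orderTy_test_formula φ
  have hfc : ∀ x, finColor F (sumColor2 cA (sumColor2 cB cA)) (f x) =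
      finColor F (sumColor2 cA (sumColor2 (subColor cB {x | SimRel ι cB b x}) cA)) x := by
    rintro (a | x | a) <;> rfl
  have := hA.1
  have : Nonempty {x | SimRel ι cB b x} := ⟨⟨b, hB.simRel_self b⟩⟩
  have hi₁ : Function.Injective
      fun a : A => (toLex (Sum.inl a) : A ⊕ₗ ({x | SimRel ι cB b x} ⊕ₗ A)) :=
    fun _ _ h => Sum.inl_injective (toLex.injective h)
  have hi₂ : Function.Injective fun x : {x | SimRel ι cB b x} =>
      (toLex (Sum.inr (toLex (Sum.inl x))) : A ⊕ₗ ({x | SimRel ι cB b x} ⊕ₗ A)) :=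
    fun _ _ h => Sum.inl_injective (toLex.injective (Sum.inr_injective (toLex.injective h)))
  have hi₃ : Function.Injective fun a : A =>
      (toLex (Sum.inr (toLex (Sum.inr a))) : A ⊕ₗ ({x | SimRel ι cB b x} ⊕ₗ A)) :=
    fun _ _ h => Sum.inr_injective (toLex.injective (Sum.inr_injective (toLex.injective h)))
  obtain ⟨_, a₀, _, ha₀⟩ := exists_bounds_of_injective hi₁ v
  obtain ⟨lo, hi, hlohi, hmid⟩ := exists_bounds_of_injective hi₂ v
  obtain ⟨a₁, _, _, ha₁⟩ := exists_bounds_of_injective hi₃ v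
  refine hF _ _ _ _ v (f ∘ v) ?_
  rw [orderTy_markCol_sum cA _ F n v hlohi (fun j a h => (ha₀ j a h).2) hmid
    fun j a h => (ha₁ j a h).1]
  rw [orderTy_markCol_sum cA cB F n (f ∘ v) (a₀ := a₀) (a₁ := a₁) (lo := lo) (hi := hi) hlohi]
  · rw [orderTy_subColor, orderTy_subColor]
    have hlo : (Subtype.val '' Iio lo : Set B) = {x | SimRel ι cB b x} ∩ Iio lo.1 := by
      ext x
      exact ⟨fun ⟨y, hy, hyx⟩ => hyx ▸ ⟨y.2, hy⟩, fun hx => ⟨⟨x, hx.1⟩, hx.2, rfl⟩⟩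
    have hhi : (Subtype.val '' Ioi hi : Set B) = {x | SimRel ι cB b x} ∩ Ioi hi.1 := by
      ext x
      exact ⟨fun ⟨y, hy, hyx⟩ => hyx ▸ ⟨y.2, hy⟩, fun hx => ⟨⟨x, hx.1⟩, hx.2, rfl⟩⟩
    rw [hlo, hhi, orderTy_Ioi_add_simRel hA hB F (hAB.orderTy_univ F) n a₀ lo.2,
      simRel_add_orderTy_Iio hA hB F (hAB.orderTy_univ F) n a₁ hi.2]
    have hIcc : (Icc lo.1 hi.1 : Set B) = Subtype.val '' Icc lo hi := by
      ext x
      exact ⟨fun hx => ⟨⟨x, (ordConnected_simRel b).out lo.2 hi.2 hx⟩, hx, rfl⟩,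
        fun ⟨y, hy, hyx⟩ => hyx ▸ hy⟩
    simp only [← orderTy_markCol_image hfm hfc v n, hIcc, image_image]
    rfl
  · exact fun j a h => (ha₀ j a (hfm.injective h)).2
  · intro j x h
    rcases hv : v j with a | y | a
    · rw [Function.comp_apply, hv] at h
      exact (Sum.inl_ne_inr h).elim
    · rw [Function.comp_apply, hv] at h
      obtain rfl : y.1 = x := Sum.inl_injective (Sum.inr_injective h)
      exact hmid j y hv
    · rw [Function.comp_apply, hv] at h
      exact (Sum.inl_ne_inr (Sum.inr_injective h).symm).elim
  · exact fun j a h => (ha₁ j a (hfm.injective h)).1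
end

section
/- Let A be a countable self-additive CLO and let p be a complete 1-type of Th(A) over ∅ such that exactly one ∼-class of A contains a realization of p. For a nonempty linear order (I,<), let A_I = Σ_{i∈I} A. Then for all nonempty linear orders (I,<) and (J,<): A_I and A_J are isomorphic as L_κ-structures if and only if (I,<) and (J,<) are order isomorphic. -/
open FirstOrder Language Set

namespace CLO

/-- Game types of depth `d` for linear orders colored by `C`: a type of depth `d + 1` records
which triples (type to the left, color, type to the right) are realized by points. -/
def Ty (C : Type) : ℕ → Type
  | 0 => Unit
  | d + 1 => Set (Ty C d × C × Ty C d)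

instance Ty.finite (C : Type) [Finite C] : ∀ d, Finite (Ty C d)
  | 0 => inferInstanceAs (Finite Unit)
  | d + 1 =>
    have := Ty.finite C d
    inferInstanceAs (Finite (Set (Ty C d × C × Ty C d)))

/-- The restriction of a type of depth `d + 1` to depth `d`. -/
def Ty.trunc {C : Type} : ∀ {d : ℕ}, Ty C (d + 1) → Ty C d
  | 0, _ => ()
  | d + 1, s =>
    (fun q : Ty C (d + 1) × C × Ty C (d + 1) => (Ty.trunc q.1, q.2.1, Ty.trunc q.2.2)) ''
      (show Set (Ty C (d + 1) × C × Ty C (d + 1)) from s)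

/-- The sum of types, which computes the type of an ordered sum. -/
def Ty.add {C : Type} : ∀ {d : ℕ}, Ty C d → Ty C d → Ty C d
  | 0, _, _ => ()
  | d + 1, s, t => show Set (Ty C d × C × Ty C d) from
    (fun q : Ty C d × C × Ty C d => (q.1, q.2.1, Ty.add q.2.2 (Ty.trunc t))) ''
        (show Set (Ty C d × C × Ty C d) from s) ∪
      (fun q : Ty C d × C × Ty C d => (Ty.add (Ty.trunc s) q.1, q.2.1, q.2.2)) ''
        (show Set (Ty C d × C × Ty C d) from t)

/-- The type of depth `d` of the subset `X` of a colored linear order. -/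
def tp {C M : Type} [LinearOrder M] (col : M → C) : ∀ d : ℕ, Set M → Ty C d
  | 0, _ => ()
  | d + 1, X => (fun x => (tp col d (X ∩ Iio x), col x, tp col d (X ∩ Ioi x))) '' X

section Types

variable {C M N : Type} [LinearOrder M] [LinearOrder N]

/-- The set of triples underlying a type of positive depth. -/
def Ty.triples {d : ℕ} (s : Ty C (d + 1)) : Set (Ty C d × C × Ty C d) := s

theorem Ty.ext_triples {d : ℕ} {s t : Ty C (d + 1)} (h : s.triples = t.triples) : s = t := h

theorem triples_tp (col : M → C) (d : ℕ) (X : Set M) :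
    (tp col (d + 1) X).triples =
      (fun x => (tp col d (X ∩ Iio x), col x, tp col d (X ∩ Ioi x))) '' X := rfl

theorem triples_add {d : ℕ} (s t : Ty C (d + 1)) :
    (s.add t).triples = (fun q => (q.1, q.2.1, q.2.2.add t.trunc)) '' s.triples ∪
      (fun q => (s.trunc.add q.1, q.2.1, q.2.2)) '' t.triples := rfl

theorem triples_trunc {d : ℕ} (s : Ty C (d + 2)) :
    s.trunc.triples = (fun q => (q.1.trunc, q.2.1, q.2.2.trunc)) '' s.triples := rfl

theorem trunc_add {d : ℕ} (s t : Ty C (d + 1)) : (s.add t).trunc = s.trunc.add t.trunc := by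
  induction d with
  | zero => rfl
  | succ d ih =>
    apply Ty.ext_triples
    simp only [triples_trunc, triples_add, image_union, image_image, ih]

theorem Ty.add_assoc {d : ℕ} (s t u : Ty C d) : (s.add t).add u = s.add (t.add u) := by
  induction d with
  | zero => rfl
  | succ d ih =>
    apply Ty.ext_triples
    simp only [triples_add, image_union, image_image, trunc_add, ih, union_assoc]

theorem trunc_tp (col : M → C) : ∀ (d : ℕ) (X : Set M), (tp col (d + 1) X).trunc = tp col d X
  | 0, _ => rfl
  | d + 1, X => by
    apply Ty.ext_triples
    simp only [triples_trunc, triples_tp, image_image, trunc_tp col d]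

theorem tp_eq_of_le {colM : M → C} {colN : N → C} {d D : ℕ} (h : d ≤ D) {X : Set M} {Y : Set N}
    (hXY : tp colM D X = tp colN D Y) : tp colM d X = tp colN d Y := by
  induction h with
  | refl => exact hXY
  | step _ ih => exact ih (by rw [← trunc_tp, hXY, trunc_tp])

theorem tp_union (col : M → C) : ∀ (d : ℕ) {X Y : Set M}, (∀ x ∈ X, ∀ y ∈ Y, x < y) →
    tp col d (X ∪ Y) = (tp col d X).add (tp col d Y)
  | 0, _, _, _ => rfl
  | d + 1, X, Y, h => by
    apply Ty.ext_triples
    rw [triples_add, triples_tp, triples_tp, triples_tp, image_union, image_image, image_image]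
    congr 1
    · refine image_congr fun x hx => ?_
      have h1 : (X ∪ Y) ∩ Iio x = X ∩ Iio x := by
        ext z
        simp only [mem_inter_iff, mem_union, mem_Iio]
        refine ⟨fun ⟨hz, hzx⟩ => ⟨hz.resolve_right fun hy => (h x hx z hy).not_gt hzx, hzx⟩,
          fun ⟨hz, hzx⟩ => ⟨Or.inl hz, hzx⟩⟩
      have h2 : (X ∪ Y) ∩ Ioi x = (X ∩ Ioi x) ∪ Y := by
        ext z
        simp only [mem_inter_iff, mem_union, mem_Ioi]
        have := h x hx z
        tauto
      rw [h1, h2, tp_union col d fun a ha b hb => h a ha.1 b hb, trunc_tp]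
    · refine image_congr fun x hx => ?_
      have h1 : (X ∪ Y) ∩ Ioi x = Y ∩ Ioi x := by
        ext z
        simp only [mem_inter_iff, mem_union, mem_Ioi]
        refine ⟨fun ⟨hz, hzx⟩ => ⟨hz.resolve_left fun hy => (h z hy x hx).not_gt hzx, hzx⟩,
          fun ⟨hz, hzx⟩ => ⟨Or.inr hz, hzx⟩⟩
      have h2 : (X ∪ Y) ∩ Iio x = X ∪ (Y ∩ Iio x) := by
        ext z
        simp only [mem_inter_iff, mem_union, mem_Iio]
        have := fun hz => h z hz x hx
        tauto
      rw [h1, h2, tp_union col d fun a ha b hb => h a ha b hb.1, trunc_tp]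

theorem tp_image {colM : M → C} {colN : N → C} {f : M → N} (hf : StrictMono f)
    (hc : ∀ x, colN (f x) = colM x) : ∀ (d : ℕ) (X : Set M), tp colN d (f '' X) = tp colM d X
  | 0, _ => rfl
  | d + 1, X => by
    apply Ty.ext_triples
    rw [triples_tp, triples_tp, image_image]
    refine image_congr fun x _ => ?_
    have h1 : f '' X ∩ Iio (f x) = f '' (X ∩ Iio x) := by
      ext z
      constructor
      · rintro ⟨⟨y, hy, rfl⟩, hz⟩
        exact ⟨y, ⟨hy, hf.lt_iff_lt.1 hz⟩, rfl⟩
      · rintro ⟨y, ⟨hy, hyx⟩, rfl⟩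
        exact ⟨⟨y, hy, rfl⟩, hf hyx⟩
    have h2 : f '' X ∩ Ioi (f x) = f '' (X ∩ Ioi x) := by
      ext z
      constructor
      · rintro ⟨⟨y, hy, rfl⟩, hz⟩
        exact ⟨y, ⟨hy, hf.lt_iff_lt.1 hz⟩, rfl⟩
      · rintro ⟨y, ⟨hy, hyx⟩, rfl⟩
        exact ⟨⟨y, hy, rfl⟩, hf hyx⟩
    rw [h1, h2, tp_image hf hc d, tp_image hf hc d, hc]

theorem tp_empty (colM : M → C) (colN : N → C) (d : ℕ) :
    tp colM d (∅ : Set M) = tp colN d (∅ : Set N) := by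
  cases d with
  | zero => rfl
  | succ d => exact Ty.ext_triples (by simp [triples_tp])

theorem tp_singleton {colM : M → C} {colN : N → C} {x : M} {y : N} (h : colM x = colN y) (d : ℕ) :
    tp colM d {x} = tp colN d {y} := by
  cases d with
  | zero => rfl
  | succ d => exact Ty.ext_triples (by simp [triples_tp, h, tp_empty colM colN])

theorem tp_Ico_add_Ico (col : M → C) (d : ℕ) {a b x : M} (hab : a ≤ b) (hbx : b ≤ x) :
    tp col d (Ico a x) = (tp col d (Ico a b)).add (tp col d (Ico b x)) := by
  rw [← tp_union, Ico_union_Ico_eq_Ico hab hbx]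
  exact fun y hy z hz => hy.2.trans_le hz.1

end Types

/-- The color of a point with respect to the finitely many color predicates in `F`. -/
def finColor {ι M : Type} (c : ι → Set M) (F : Finset ι) (x : M) : Set F := {i | x ∈ c i}

/-- The open interval with the optional endpoints `v i` and `v j`. -/
def interval {α M : Type} [LinearOrder M] (v : α → M) (i j : Option α) : Set M :=
  {x | (∀ k ∈ i, v k < x) ∧ ∀ k ∈ j, x < v k}

/-- A family of predicates on `α`-tuples, one for each CLO, is uniformly definable if
a single formula defines all of its members. -/
def UnifDef {ι α : Type}
    (P : ∀ (M : Type) (_ : LinearOrder M), (ι → Set M) → (α → M) → Prop) : Prop :=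
  ∃ φ : (CLOLang ι).Formula α, ∀ (M : Type) (o : LinearOrder M) (c : ι → Set M) (v : α → M),
    Sat M c φ v ↔ P M o c v

namespace UnifDef

variable {ι α : Type} {P Q : ∀ (M : Type) (_ : LinearOrder M), (ι → Set M) → (α → M) → Prop}

theorem congr (h : UnifDef P) (hPQ : ∀ M o c v, P M o c v ↔ Q M o c v) : UnifDef Q := by
  obtain ⟨φ, hφ⟩ := h
  exact ⟨φ, fun M o c v => (hφ M o c v).trans (hPQ M o c v)⟩

theorem not (h : UnifDef P) : UnifDef fun M o (c : ι → Set M) v => ¬ P M o c v := by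
  obtain ⟨φ, hφ⟩ := h
  refine ⟨BoundedFormula.not φ, fun M o c v => ?_⟩
  let _ := CLOStr ι M c
  exact Formula.realize_not.trans (hφ M o c v).not

theorem imp (h : UnifDef P) (h' : UnifDef Q) :
    UnifDef fun M o (c : ι → Set M) v => P M o c v → Q M o c v := by
  obtain ⟨φ, hφ⟩ := h
  obtain ⟨ψ, hψ⟩ := h'
  refine ⟨BoundedFormula.imp φ ψ, fun M o c v => ?_⟩
  let _ := CLOStr ι M c
  exact Formula.realize_imp.trans (imp_congr (hφ M o c v) (hψ M o c v))

theorem and (h : UnifDef P) (h' : UnifDef Q) :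
    UnifDef fun M o (c : ι → Set M) v => P M o c v ∧ Q M o c v :=
  (h.imp h'.not).not.congr fun _ _ _ _ => by tauto

theorem const (p : Prop) : UnifDef fun M _ (_ : ι → Set M) (_ : α → M) => p := by
  by_cases h : p
  · refine ⟨⊤, fun M o c v => ?_⟩
    let _ := CLOStr ι M c
    exact iff_of_true (Formula.realize_top.2 trivial) h
  · refine ⟨⊥, fun M o c v => ?_⟩
    let _ := CLOStr ι M c
    exact iff_of_false Formula.realize_bot.1 h

theorem sat {β : Type} (φ : (CLOLang ι).Formula β) (f : β → α) :
    UnifDef fun M _ c (v : α → M) => Sat M c φ fun b => v (f b) := by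
  refine ⟨φ.relabel f, fun M o c v => ?_⟩
  let _ := CLOStr ι M c
  exact Formula.realize_relabel

theorem lt (i j : α) : UnifDef fun M _ (_ : ι → Set M) v => v i < v j := by
  refine ⟨Relations.formula (L := CLOLang ι) CLORel.lt ![Term.var i, Term.var j],
    fun M o c v => ?_⟩
  let _ := CLOStr ι M c
  exact Formula.realize_rel

theorem color (k : ι) (i : α) : UnifDef fun M _ (c : ι → Set M) v => v i ∈ c k := by
  refine ⟨Relations.formula (L := CLOLang ι) (CLORel.color k) ![Term.var i],
    fun M o c v => ?_⟩
  let _ := CLOStr ι M c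
  exact Formula.realize_rel

theorem exists_elim {P : ∀ (M : Type) (_ : LinearOrder M), (ι → Set M) → (α ⊕ Unit → M) → Prop}
    (h : UnifDef P) :
    UnifDef fun M o (c : ι → Set M) (v : α → M) => ∃ x, P M o c (Sum.elim v fun _ : Unit => x) := by
  obtain ⟨φ, hφ⟩ := h
  refine ⟨φ.iExs Unit, fun M o c v => ?_⟩
  let _ := CLOStr ι M c
  simp only [← hφ]
  refine Formula.realize_iExs.trans ⟨fun ⟨i, hi⟩ => ⟨i (), hi⟩, fun ⟨x, hx⟩ => ⟨fun _ => x, hx⟩⟩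

theorem all_elim {P : ∀ (M : Type) (_ : LinearOrder M), (ι → Set M) → (α ⊕ Unit → M) → Prop}
    (h : UnifDef P) :
    UnifDef fun M o (c : ι → Set M) (v : α → M) => ∀ x, P M o c (Sum.elim v fun _ => x) :=
  h.not.exists_elim.not.congr fun _ _ _ _ => by simp

theorem forall_finite {β : Type} [Finite β]
    {P : β → ∀ (M : Type) (_ : LinearOrder M), (ι → Set M) → (α → M) → Prop}
    (h : ∀ b, UnifDef (P b)) :
    UnifDef fun M o (c : ι → Set M) (v : α → M) => ∀ b, P b M o c v := by
  choose φ hφ using h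
  refine ⟨Formula.iInf φ, fun M o c v => ?_⟩
  let _ := CLOStr ι M c
  simp only [← hφ]
  exact Formula.realize_iInf

theorem mem_of_finite {K : Type} [Finite K]
    {f : ∀ (M : Type) (_ : LinearOrder M), (ι → Set M) → (α → M) → K}
    (h : ∀ k, UnifDef fun M o (c : ι → Set M) v => f M o c v = k) (S : Set K) :
    UnifDef fun M o (c : ι → Set M) v => f M o c v ∈ S :=
  (forall_finite fun k => (h k).imp (const (k ∈ S))).congr fun _ _ _ _ => by simp

theorem finColor_eq (F : Finset ι) (i : α) (k : Set F) :
    UnifDef fun M _ (c : ι → Set M) v => finColor c F (v i) = k := by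
  have h (b : F) : UnifDef fun M _ (c : ι → Set M) v =>
      ¬ ((v i ∈ c b → b ∈ k) → ¬ (b ∈ k → v i ∈ c b)) :=
    (((color b.1 i).imp (const _)).imp ((const _).imp (color b.1 i)).not).not
  refine (forall_finite h).congr fun M o c v => ?_
  simp only [Set.ext_iff, finColor, mem_ofPred_eq]
  exact forall_congr' fun b => by tauto

theorem mem_interval (i j : Option α) (k : α) :
    UnifDef fun M _ (_ : ι → Set M) (v : α → M) => v k ∈ interval v i j := by
  have h1 : UnifDef fun M _ (_ : ι → Set M) (v : α → M) => ∀ l ∈ i, v l < v k := by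
    cases i with
    | none => exact (const True).congr fun _ _ _ _ => by simp
    | some l => exact (lt l k).congr fun _ _ _ _ => by simp
  have h2 : UnifDef fun M _ (_ : ι → Set M) (v : α → M) => ∀ l ∈ j, v k < v l := by
    cases j with
    | none => exact (const True).congr fun _ _ _ _ => by simp
    | some l => exact (lt k l).congr fun _ _ _ _ => by simp
  exact h1.and h2

theorem tp_interval_eq (F : Finset ι) (d : ℕ) : ∀ {α : Type} (i j : Option α) (t : Ty (Set F) d),
    UnifDef fun M _ (c : ι → Set M) v => tp (finColor c F) d (interval v i j) = t := by
  induction d with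
  | zero => exact fun i j t => (const True).congr fun _ _ _ _ => iff_of_true trivial rfl
  | succ d ih =>
    intro α i j t
    have h (q : Ty (Set F) d × Set F × Ty (Set F) d) :=
      ((mem_interval (ι := ι) (i.map .inl) (j.map .inl) (.inr ())).and
        ((ih (i.map .inl) (some (.inr ())) q.1).and
          ((finColor_eq F (.inr ()) q.2.1).and
            (ih (some (.inr ())) (j.map .inl) q.2.2)))).exists_elim (α := α)
    refine (forall_finite fun q => ((h q).imp (const (q ∈ t.triples))).and
      ((const (q ∈ t.triples)).imp (h q))).congr fun M o c v => ?_
    trans (tp (finColor c F) (d + 1) (interval v i j)).triples = t.triples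
    · rw [Set.ext_iff, triples_tp]
      refine forall_congr' fun q => ?_
      have key : (∃ x, Sum.elim v (fun _ : Unit => x) (Sum.inr ()) ∈
            interval (Sum.elim v fun _ : Unit => x) (i.map Sum.inl) (j.map Sum.inl) ∧
          tp (finColor c F) d (interval (Sum.elim v fun _ : Unit => x) (i.map .inl)
            (some (.inr ())))
              = q.1 ∧
            finColor c F (Sum.elim v (fun _ : Unit => x) (Sum.inr ())) = q.2.1 ∧
              tp (finColor c F) d (interval (Sum.elim v fun _ : Unit => x) (some (.inr ()))
                (j.map .inl))
                = q.2.2) ↔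
          q ∈ (fun x => (tp (finColor c F) d (interval v i j ∩ Iio x), finColor c F x,
            tp (finColor c F) d (interval v i j ∩ Ioi x))) '' interval v i j := by
        refine exists_congr fun x => ?_
        have e0 : x ∈ interval (Sum.elim v fun _ : Unit => x) (i.map Sum.inl) (j.map Sum.inl) ↔
            x ∈ interval v i j := by simp [interval]
        simp only [Sum.elim_inr, e0]
        refine and_congr_right fun hx => ?_
        have e1 : interval (Sum.elim v fun _ : Unit => x) (i.map .inl) (some (.inr ())) =
            interval v i j ∩ Iio x := by
          ext y
          simp only [interval, Option.mem_map, mem_ofPred_eq, mem_inter_iff, mem_Iio]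
          refine ⟨fun h => ⟨⟨fun k hk => h.1 (.inl k) ⟨k, hk, rfl⟩, fun k hk =>
            (h.2 _ rfl).trans (hx.2 k hk)⟩, h.2 _ rfl⟩, ?_⟩
          rintro ⟨h1, h2⟩
          refine ⟨?_, ?_⟩
          · rintro _ ⟨k, hk, rfl⟩
            exact h1.1 k hk
          · rintro _ ⟨⟩
            exact h2
        have e2 : interval (Sum.elim v fun _ : Unit => x) (some (.inr ())) (j.map .inl) =
            interval v i j ∩ Ioi x := by
          ext y
          simp only [interval, Option.mem_map, mem_ofPred_eq, mem_inter_iff, mem_Ioi]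
          refine ⟨fun h => ⟨⟨fun k hk => (hx.1 k hk).trans (h.1 _ rfl), fun k hk =>
            h.2 (.inl k) ⟨k, hk, rfl⟩⟩, h.1 _ rfl⟩, ?_⟩
          rintro ⟨h1, h2⟩
          refine ⟨?_, ?_⟩
          · rintro _ ⟨⟩
            exact h2
          · rintro _ ⟨k, hk, rfl⟩
            exact h1.2 k hk
        rw [e1, e2]
        simp [Prod.ext_iff]
      rw [key, ← iff_def]
    · exact ⟨Ty.ext_triples, fun h => by rw [h]⟩

end UnifDef

/-- A finite-valued function on `α`-tuples is uniformly definable if its fibers are. -/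
def FinDef {ι α K : Type} (f : ∀ (M : Type) (_ : LinearOrder M), (ι → Set M) → (α → M) → K) :
    Prop :=
  ∀ k, UnifDef fun M o (c : ι → Set M) v => f M o c v = k

namespace FinDef

variable {ι α K K' K'' : Type} [Finite K] [Finite K']
  {f : ∀ (M : Type) (_ : LinearOrder M), (ι → Set M) → (α → M) → K}
  {g : ∀ (M : Type) (_ : LinearOrder M), (ι → Set M) → (α → M) → K'}

theorem rel (hf : FinDef f) (hg : FinDef g) (R : K → K' → Prop) :
    UnifDef fun M o (c : ι → Set M) v => R (f M o c v) (g M o c v) :=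
  (UnifDef.forall_finite fun k => (hf k).imp
    (UnifDef.mem_of_finite hg {k' | R k k'})).congr fun _ _ _ _ => by simp

theorem map₂ (hf : FinDef f) (hg : FinDef g) (R : K → K' → K'') :
    FinDef fun M o (c : ι → Set M) v => R (f M o c v) (g M o c v) :=
  fun k => hf.rel hg fun a b => R a b = k

theorem finColor (F : Finset ι) (i : α) :
    FinDef fun M _ (c : ι → Set M) v => finColor c F (v i) :=
  UnifDef.finColor_eq F i

theorem tp_Iio (F : Finset ι) (d : ℕ) (i : α) :
    FinDef fun M _ (c : ι → Set M) v => tp (CLO.finColor c F) d (Iio (v i)) :=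
  fun k => (UnifDef.tp_interval_eq F d none (some i) k).congr fun M o c v => by
    have : interval v none (some i) = Iio (v i) := by ext; simp [interval]
    rw [this]

theorem tp_Ioi (F : Finset ι) (d : ℕ) (i : α) :
    FinDef fun M _ (c : ι → Set M) v => tp (CLO.finColor c F) d (Ioi (v i)) :=
  fun k => (UnifDef.tp_interval_eq F d (some i) none k).congr fun M o c v => by
    have : interval v (some i) none = Ioi (v i) := by ext; simp [interval]
    rw [this]

theorem tp_Ioo (F : Finset ι) (d : ℕ) (i j : α) :
    FinDef fun M _ (c : ι → Set M) v => tp (CLO.finColor c F) d (Ioo (v i) (v j)) :=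
  fun k => (UnifDef.tp_interval_eq F d (some i) (some j) k).congr fun M o c v => by
    have : interval v (some i) (some j) = Ioo (v i) (v j) := by ext; simp [interval]
    rw [this]

theorem tp_Ici (F : Finset ι) (d : ℕ) (i : α) :
    FinDef fun M _ (c : ι → Set M) v => tp (CLO.finColor c F) d (Ici (v i)) :=
  fun k => (((finColor F i).map₂ (tp_Ioi F d i) fun a t =>
    (tp (fun _ : Unit => a) d {()}).add t) k).congr fun M o c v => by
      beta_reduce
      rw [← tp_singleton (colM := CLO.finColor c F) (x := v i)
        (colN := fun _ : Unit => CLO.finColor c F (v i)) rfl, ← tp_union,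
        ← insert_eq, Ioi_insert]
      rintro x rfl y hy
      exact hy

theorem tp_Ico (F : Finset ι) (d : ℕ) (i j : α) (t : Ty (Set F) d) :
    UnifDef fun M _ (c : ι → Set M) v =>
      v i < v j ∧ tp (CLO.finColor c F) d (Ico (v i) (v j)) = t :=
  ((UnifDef.lt i j).and (((finColor F i).map₂ (tp_Ioo F d i j) fun a t =>
    (tp (fun _ : Unit => a) d {()}).add t) t)).congr fun M o c v => by
      refine and_congr_right fun h => ?_
      beta_reduce
      rw [← tp_singleton (colM := CLO.finColor c F) (x := v i)
        (colN := fun _ : Unit => CLO.finColor c F (v i)) rfl, ← tp_union,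
        ← insert_eq, Ioo_insert_left h]
      rintro x rfl y hy
      exact hy.1

end FinDef

section SelfAdditive

variable {ι A : Type} [LinearOrder A] {c : ι → Set A}

/-- The subsets of a CLO that are definable without parameters. -/
def DefSet (c : ι → Set A) (Q : Set A) : Prop :=
  ∃ φ : (CLOLang ι).Formula Unit, FmlSet ι A c φ = Q

theorem UnifDef.defSet {P : ∀ (M : Type) (_ : LinearOrder M), (ι → Set M) → (Unit → M) → Prop}
    (h : UnifDef P) (c : ι → Set A) : DefSet c {x | P A inferInstance c fun _ => x} := by
  obtain ⟨φ, hφ⟩ := h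
  exact ⟨φ, Set.ext fun x => hφ A _ c _⟩

theorem DefSet.iInter {K : Type} [Finite K] {Q : K → Set A} (h : ∀ k, DefSet c (Q k)) :
    DefSet c (⋂ k, Q k) := by
  choose φ hφ using h
  convert (UnifDef.forall_finite fun k => UnifDef.sat (φ k) (id : Unit → Unit)).defSet c using 1
  ext x
  simp only [← hφ, mem_iInter]
  rfl

theorem _root_.SelfAdditive.noMinOrder_s8 (h : SelfAdditive ι A c) (a : A) : ∃ b, b < a := by
  obtain ⟨φ, hφ⟩ :=
    (UnifDef.lt (ι := ι) (α := Unit ⊕ Unit) (.inr ()) (.inl ())).exists_elim.not.defSet c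
  simp only [Sum.elim_inr, Sum.elim_inl, not_exists, not_lt] at hφ
  by_contra! ha
  have hne := h.1
  rcases h.2 φ (hφ ▸ ordConnected_of_Ioo fun x hx y hy hxy => absurd (hy x) hxy.not_ge) with h' | h'
  · have : a ∈ FmlSet ι A c φ := hφ ▸ ha
    exact (h' ▸ this).elim
  · obtain ⟨b, hb⟩ := exists_ne a
    have : b ∈ {x | ∀ y, x ≤ y} := by rw [← hφ, h']; trivial
    exact hb ((this a).antisymm (ha b))

theorem _root_.SelfAdditive.noMaxOrder_s8 (h : SelfAdditive ι A c) (a : A) : ∃ b, a < b := by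
  obtain ⟨φ, hφ⟩ :=
    (UnifDef.lt (ι := ι) (α := Unit ⊕ Unit) (.inl ()) (.inr ())).exists_elim.not.defSet c
  simp only [Sum.elim_inr, Sum.elim_inl, not_exists, not_lt] at hφ
  by_contra! ha
  have hne := h.1
  rcases h.2 φ (hφ ▸ ordConnected_of_Ioo fun x hx y hy hxy => absurd (hx y) hxy.not_ge) with h' | h'
  · have : a ∈ FmlSet ι A c φ := hφ ▸ ha
    exact (h' ▸ this).elim
  · obtain ⟨b, hb⟩ := exists_ne a
    have : b ∈ {x | ∀ y, y ≤ x} := by rw [← hφ, h']; trivial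
    exact hb ((ha b).antisymm (this a))

theorem _root_.SelfAdditive.exists_mem_lt (h : SelfAdditive ι A c) {Q : Set A}
    (hQ : DefSet c Q) (hne : Q.Nonempty)
    (a : A) : ∃ y ∈ Q, y < a := by
  obtain ⟨ψ, rfl⟩ := hQ
  obtain ⟨φ, hφ⟩ := ((UnifDef.sat ψ (fun _ => (Sum.inr () : Unit ⊕ Unit))).and
    (UnifDef.lt (ι := ι) (.inl ()) (.inr ())).not).exists_elim.defSet c
  replace hφ : FmlSet ι A c φ = {x | ∃ y ∈ FmlSet ι A c ψ, ¬ x < y} := hφ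
  obtain ⟨b, hb⟩ := h.noMinOrder_s8 a
  have hc : (FmlSet ι A c φ).OrdConnected := by
    rw [hφ]
    refine ⟨fun x ⟨y, hy, hxy⟩ z _ w hw => ⟨y, hy, fun hwy => hxy (hw.1.trans_lt hwy)⟩⟩
  rcases h.2 φ hc with h' | h'
  · obtain ⟨y, hy⟩ := hne
    have : y ∈ FmlSet ι A c φ := hφ ▸ ⟨y, hy, lt_irrefl y⟩
    rw [h'] at this
    exact this.elim
  · have : b ∈ FmlSet ι A c φ := h' ▸ mem_univ b
    rw [hφ] at this
    obtain ⟨y, hy, hby⟩ := this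
    exact ⟨y, hy, (not_lt.1 hby).trans_lt hb⟩

theorem _root_.SelfAdditive.exists_mem_gt (h : SelfAdditive ι A c) {Q : Set A}
    (hQ : DefSet c Q) (hne : Q.Nonempty)
    (a : A) : ∃ y ∈ Q, a < y := by
  obtain ⟨ψ, rfl⟩ := hQ
  obtain ⟨φ, hφ⟩ := ((UnifDef.sat ψ (fun _ => (Sum.inr () : Unit ⊕ Unit))).and
    (UnifDef.lt (ι := ι) (.inr ()) (.inl ())).not).exists_elim.defSet c
  replace hφ : FmlSet ι A c φ = {x | ∃ y ∈ FmlSet ι A c ψ, ¬ y < x} := hφ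
  obtain ⟨b, hb⟩ := h.noMaxOrder_s8 a
  have hc : (FmlSet ι A c φ).OrdConnected := by
    rw [hφ]
    refine ⟨fun x _ z ⟨y, hy, hzy⟩ w hw => ⟨y, hy, fun hwy => hzy (hwy.trans_le hw.2)⟩⟩
  rcases h.2 φ hc with h' | h'
  · obtain ⟨y, hy⟩ := hne
    have : y ∈ FmlSet ι A c φ := hφ ▸ ⟨y, hy, lt_irrefl y⟩
    rw [h'] at this
    exact this.elim
  · have : b ∈ FmlSet ι A c φ := h' ▸ mem_univ b
    rw [hφ] at this
    obtain ⟨y, hy, hby⟩ := this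
    exact ⟨y, hy, hb.trans_le (not_lt.1 hby)⟩

section Cofinal

variable (c) (F : Finset ι) (D : ℕ) (x : A) (s t : Ty (Set F) D)

/-- Every definable set containing `x` contains points `a < x` with `[a, x)` of type `s`. -/
def NearLeft : Prop :=
  ∀ Q, DefSet c Q → x ∈ Q → ∃ a ∈ Q, a < x ∧ tp (finColor c F) D (Ico a x) = s

/-- Every definable set containing `x` contains points `b > x` with `[x, b)` of type `s`. -/
def NearRight : Prop :=
  ∀ Q, DefSet c Q → x ∈ Q → ∃ b ∈ Q, x < b ∧ tp (finColor c F) D (Ico x b) = s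

/-- Every definable set containing `x` contains arbitrarily small points `a < x` with `[a, x)`
of type `s`. -/
def FarLeft : Prop :=
  ∀ Q, DefSet c Q → x ∈ Q → ∀ u, ∃ a ∈ Q, a < u ∧ a < x ∧ tp (finColor c F) D (Ico a x) = s

/-- Every definable set containing `x` contains arbitrarily large points `b > x` with `[x, b)`
of type `s`. -/
def FarRight : Prop :=
  ∀ Q, DefSet c Q → x ∈ Q → ∀ u, ∃ b ∈ Q, u < b ∧ x < b ∧ tp (finColor c F) D (Ico x b) = s

variable {c F D x s t}

theorem FarLeft.nearLeft (h : FarLeft c F D x s) : NearLeft c F D x s := fun Q hQ hx => by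
  obtain ⟨a, ha, -, h'⟩ := h Q hQ hx x
  exact ⟨a, ha, h'⟩

theorem FarRight.nearRight (h : FarRight c F D x s) : NearRight c F D x s := fun Q hQ hx => by
  obtain ⟨a, ha, -, h'⟩ := h Q hQ hx x
  exact ⟨a, ha, h'⟩

theorem NearLeft.nearRight (h : NearLeft c F D x s) : NearRight c F D x s := by
  rintro Q ⟨φ, rfl⟩ hx
  by_contra hn
  have hd := ((UnifDef.sat φ (fun _ => (Sum.inr () : Unit ⊕ Unit))).and
    (FinDef.tp_Ico F D (.inl ()) (.inr ()) s)).exists_elim.not.defSet c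
  obtain ⟨a, ha, hax, hs⟩ := h _ hd hn
  exact ha ⟨x, hx, hax, hs⟩

theorem NearRight.nearLeft (h : NearRight c F D x s) : NearLeft c F D x s := by
  rintro Q ⟨φ, rfl⟩ hx
  by_contra hn
  have hd := ((UnifDef.sat φ (fun _ => (Sum.inr () : Unit ⊕ Unit))).and
    (FinDef.tp_Ico F D (.inr ()) (.inl ()) s)).exists_elim.not.defSet c
  obtain ⟨a, ha, hax, hs⟩ := h _ hd hn
  exact ha ⟨x, hx, hax, hs⟩

theorem FarLeft.add (hs : FarLeft c F D x s) (ht : NearLeft c F D x t) :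
    FarLeft c F D x (s.add t) := by
  rintro Q ⟨φ, rfl⟩ hx u
  have hd := ((UnifDef.sat φ (fun _ => (Sum.inr () : (Unit ⊕ Unit) ⊕ Unit))).and
    ((UnifDef.lt (.inr ()) (.inl (.inr ()))).and
      (FinDef.tp_Ico F D (.inr ()) (.inl (.inl ())) s))).exists_elim.all_elim.defSet c
  obtain ⟨b, hb, hbx, hbt⟩ := ht _ hd (hs _ ⟨φ, rfl⟩ hx)
  obtain ⟨a, ha, hau, hab, has⟩ := hb u
  refine ⟨a, ha, hau, hab.trans hbx, ?_⟩
  replace hab : a < b := hab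
  replace has : tp (finColor c F) D (Ico a b) = s := has
  rw [tp_Ico_add_Ico _ _ hab.le hbx.le, has, hbt]

theorem FarRight.add (hs : NearRight c F D x s) (ht : FarRight c F D x t) :
    FarRight c F D x (s.add t) := by
  rintro Q ⟨φ, rfl⟩ hx u
  have hd := ((UnifDef.sat φ (fun _ => (Sum.inr () : (Unit ⊕ Unit) ⊕ Unit))).and
    ((UnifDef.lt (.inl (.inr ())) (.inr ())).and
      (FinDef.tp_Ico F D (.inl (.inl ())) (.inr ()) t))).exists_elim.all_elim.defSet c
  obtain ⟨b, hb, hbx, hbs⟩ := hs _ hd (ht _ ⟨φ, rfl⟩ hx)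
  obtain ⟨a, ha, hau, hab, hat⟩ := hb u
  refine ⟨a, ha, hau, hbx.trans hab, ?_⟩
  replace hab : b < a := hab
  replace hat : tp (finColor c F) D (Ico b a) = t := hat
  rw [tp_Ico_add_Ico _ _ hbx.le hab.le, hat, hbs]

theorem exists_farLeft (h : SelfAdditive ι A c) (F : Finset ι) (D : ℕ) (x : A) :
    ∃ s, FarLeft c F D x s := by
  by_contra! hn
  simp only [FarLeft] at hn
  push Not at hn
  choose Q hQ hx u hu using hn
  have : Nonempty A := ⟨x⟩
  obtain ⟨m, hm⟩ := Set.finite_range u |>.bddBelow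
  obtain ⟨a, ha, hau⟩ := h.exists_mem_lt (DefSet.iInter hQ) ⟨x, mem_iInter.2 hx⟩ (min m x)
  exact hu _ a (mem_iInter.1 ha _) ((lt_min_iff.1 hau).1.trans_le (hm ⟨_, rfl⟩))
    (lt_min_iff.1 hau).2 rfl

theorem exists_farRight (h : SelfAdditive ι A c) (F : Finset ι) (D : ℕ) (x : A) :
    ∃ s, FarRight c F D x s := by
  by_contra! hn
  simp only [FarRight] at hn
  push Not at hn
  choose Q hQ hx u hu using hn
  have : Nonempty A := ⟨x⟩
  obtain ⟨m, hm⟩ := Set.finite_range u |>.bddAbove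
  obtain ⟨a, ha, hau⟩ := h.exists_mem_gt (DefSet.iInter hQ) ⟨x, mem_iInter.2 hx⟩ (max m x)
  exact hu _ a (mem_iInter.1 ha _) ((hm ⟨_, rfl⟩).trans_lt (max_lt_iff.1 hau).1)
    (max_lt_iff.1 hau).2 rfl

theorem exists_idempotent_far (h : SelfAdditive ι A c) (F : Finset ι) (D : ℕ) (x : A) :
    ∃ e, FarLeft c F D x e ∧ FarRight c F D x e ∧ e.add e = e := by
  let _ : Semigroup (Ty (Set F) D) := { mul := Ty.add, mul_assoc := Ty.add_assoc }
  let _ : TopologicalSpace (Ty (Set F) D) := ⊥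
  have : DiscreteTopology (Ty (Set F) D) := ⟨rfl⟩
  obtain ⟨s, hs⟩ := exists_farLeft h F D x
  obtain ⟨t, ht⟩ := exists_farRight h F D x
  obtain ⟨e, he, hee⟩ := exists_idempotent_in_compact_subsemigroup
    (fun r : Ty (Set F) D => continuous_of_discreteTopology)
    {e : Ty (Set F) D | FarLeft c F D x e ∧ FarRight c F D x e}
    ⟨s.add t, hs.add ht.nearRight.nearLeft, .add hs.nearLeft.nearRight ht⟩
    (Set.toFinite _).isCompact
    (fun s hs t ht => ⟨hs.1.add ht.1.nearLeft, .add hs.2.nearRight ht.2⟩)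
  exact ⟨e, he.1, he.2, hee⟩

end Cofinal

theorem add_Ici_Iio_succ {F : Finset ι} {D d : ℕ} {x : A} {e : Ty (Set F) D}
    {e' : Ty (Set F) (d + 1)}
    (hL : FarLeft c F D x e) (hR : FarRight c F D x e) (hee : e'.add e' = e')
    (he : ∀ a b, tp (finColor c F) D (Ico a b) = e → tp (finColor c F) (d + 1) (Ico a b) = e')
    (ih : (tp (finColor c F) d (Ici x)).add (tp (finColor c F) d (Iio x)) = e'.trunc) :
    (tp (finColor c F) (d + 1) (Ici x)).add (tp (finColor c F) (d + 1) (Iio x)) = e' := by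
  have hR' (u : A) : ∃ b, u < b ∧ x < b ∧ tp (finColor c F) (d + 1) (Ico x b) = e' ∧
      tp (finColor c F) d (Ici b) = tp (finColor c F) d (Ici x) := by
    obtain ⟨b, h1, h2, h3, h4⟩ := hR _ ((FinDef.tp_Ici F d () _).defSet c) rfl u
    exact ⟨b, h2, h3, he _ _ h4, h1⟩
  have hL' (u : A) : ∃ a, a < u ∧ a < x ∧ tp (finColor c F) (d + 1) (Ico a x) = e' ∧
      tp (finColor c F) d (Iio a) = tp (finColor c F) d (Iio x) := by
    obtain ⟨b, h1, h2, h3, h4⟩ := hL _ ((FinDef.tp_Iio F d () _).defSet c) rfl u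
    exact ⟨b, h2, h3, he _ _ h4, h1⟩
  have eR {y b : A} (hxy : x ≤ y) (hyb : y < b)
      (hb : tp (finColor c F) d (Ici b) = tp (finColor c F) d (Ici x)) :
      (tp (finColor c F) d (Ici x ∩ Iio y), finColor c F y,
        (tp (finColor c F) d (Ici x ∩ Ioi y)).add (tp (finColor c F) d (Iio x))) =
      (tp (finColor c F) d (Ico x b ∩ Iio y), finColor c F y,
        (tp (finColor c F) d (Ico x b ∩ Ioi y)).add e'.trunc) := by
    have h1 : Ici x ∩ Iio y = Ico x b ∩ Iio y := by
      ext z; simp only [mem_inter_iff, mem_Ici, mem_Iio, mem_Ico]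
      exact ⟨fun h => ⟨⟨h.1, h.2.trans hyb⟩, h.2⟩, fun h => ⟨h.1.1, h.2⟩⟩
    have h2 : Ici x ∩ Ioi y = (Ico x b ∩ Ioi y) ∪ Ici b := by
      ext z; simp only [mem_inter_iff, mem_union, mem_Ici, mem_Ioi, mem_Ico]
      have := fun h : b ≤ z => hyb.trans_le h
      have := fun h : y < z => hxy.trans h.le
      have := lt_or_ge z b
      tauto
    rw [h2, tp_union, hb, Ty.add_assoc, ih, h1]
    exact fun u hu v hv => hu.1.2.trans_le hv
  have eL {y a : A} (hyx : y < x) (hay : a ≤ y)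
      (ha : tp (finColor c F) d (Iio a) = tp (finColor c F) d (Iio x)) :
      ((tp (finColor c F) d (Ici x)).add (tp (finColor c F) d (Iio x ∩ Iio y)), finColor c F y,
        tp (finColor c F) d (Iio x ∩ Ioi y)) =
      (e'.trunc.add (tp (finColor c F) d (Ico a x ∩ Iio y)), finColor c F y,
        tp (finColor c F) d (Ico a x ∩ Ioi y)) := by
    have h1 : Iio x ∩ Ioi y = Ico a x ∩ Ioi y := by
      ext z; simp only [mem_inter_iff, mem_Ioi, mem_Iio, mem_Ico]
      exact ⟨fun h => ⟨⟨hay.trans h.2.le, h.1⟩, h.2⟩, fun h => ⟨h.1.2, h.2⟩⟩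
    have h2 : Iio x ∩ Iio y = Iio a ∪ (Ico a x ∩ Iio y) := by
      ext z; simp only [mem_inter_iff, mem_union, mem_Iio, mem_Ico]
      have := fun h : z < a => h.trans_le hay
      have := fun h : z < y => h.trans hyx
      have := lt_or_ge z a
      tauto
    rw [h2, tp_union, ha, ← Ty.add_assoc, ih, h1]
    exact fun u hu v hv => lt_of_lt_of_le hu hv.1.1
  apply Ty.ext_triples
  rw [triples_add, trunc_tp, trunc_tp, triples_tp, triples_tp, image_image, image_image]
  apply Subset.antisymm
  · rw [← hee, triples_add]
    refine union_subset_union ?_ ?_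
    · rintro _ ⟨y, hy, rfl⟩
      obtain ⟨b, hyb, -, hb, hb'⟩ := hR' y
      simp only
      rw [eR hy hyb hb']
      exact ⟨_, by rw [← hb, triples_tp]; exact ⟨y, ⟨hy, hyb⟩, rfl⟩, rfl⟩
    · rintro _ ⟨y, hy, rfl⟩
      obtain ⟨a, hay, -, ha, ha'⟩ := hL' y
      simp only
      rw [eL hy hay.le ha']
      exact ⟨_, by rw [← ha, triples_tp]; exact ⟨y, ⟨hay.le, hy⟩, rfl⟩, rfl⟩
  · rw [← hee, triples_add]
    refine union_subset_union ?_ ?_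
    · obtain ⟨b, -, hxb, hb, hb'⟩ := hR' x
      rintro _ ⟨q, hq, rfl⟩
      rw [← hb, triples_tp] at hq
      obtain ⟨y, hy, rfl⟩ := hq
      exact ⟨y, hy.1, eR hy.1 hy.2 hb'⟩
    · obtain ⟨a, -, hax, ha, ha'⟩ := hL' x
      rintro _ ⟨q, hq, rfl⟩
      rw [← ha, triples_tp] at hq
      obtain ⟨y, hy, rfl⟩ := hq
      exact ⟨y, hy.2, eL hy.2 hy.1 ha'⟩

theorem add_Ici_Iio_eq {F : Finset ι} {D : ℕ} {x : A} {e : Ty (Set F) D}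
    (hL : FarLeft c F D x e) (hR : FarRight c F D x e) (hee : e.add e = e) {d : ℕ} (hd : d ≤ D)
    {a b : A} (hab : tp (finColor c F) D (Ico a b) = e) :
    (tp (finColor c F) d (Ici x)).add (tp (finColor c F) d (Iio x)) =
      tp (finColor c F) d (Ico a b) := by
  induction d with
  | zero => rfl
  | succ d ih =>
    have huniv : DefSet c (univ : Set A) := ⟨⊤, by
      let _ := CLOStr ι A c
      exact eq_univ_of_forall fun x => Formula.realize_top.2 trivial⟩
    obtain ⟨u, -, -, hux, hu⟩ := hL _ huniv trivial x
    obtain ⟨v, -, -, hxv, hv⟩ := hR _ huniv trivial x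
    have huv : tp (finColor c F) D (Ico u v) = e := by
      rw [tp_Ico_add_Ico _ _ hux.le hxv.le, hu, hv, hee]
    refine add_Ici_Iio_succ hL hR ?_ (fun a' b' h => tp_eq_of_le hd (h.trans hab.symm)) ?_
    · nth_rw 1 [tp_eq_of_le hd (hab.trans hu.symm), tp_eq_of_le hd (hab.trans hv.symm),
        ← tp_Ico_add_Ico _ _ hux.le hxv.le]
      exact tp_eq_of_le hd (huv.trans hab.symm)
    · rw [trunc_tp]
      exact ih (by omega)

theorem first_point {F : Finset ι} {d : ℕ} {x a b : A} (hab : a < b)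
    (h : (tp (finColor c F) (d + 2) (Ici x)).add (tp (finColor c F) (d + 2) (Iio x)) =
      tp (finColor c F) (d + 2) (Ico a b)) :
    finColor c F a = finColor c F x ∧ tp (finColor c F) d (Ioo a b) =
      (tp (finColor c F) d (Ioi x)).add (tp (finColor c F) d (Iio x)) := by
  have ha : (tp (finColor c F) (d + 1) (Ico a b ∩ Iio a), finColor c F a,
      tp (finColor c F) (d + 1) (Ico a b ∩ Ioi a)) ∈
      (tp (finColor c F) (d + 2) (Ico a b)).triples := by
    rw [triples_tp]
    exact ⟨a, ⟨le_rfl, hab⟩, rfl⟩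
  have e1 : Ico a b ∩ Iio a = ∅ := by
    ext z; simp
  have e2 : Ico a b ∩ Ioi a = Ioo a b := by
    ext z; simp only [mem_inter_iff, mem_Ico, mem_Ioi, mem_Ioo]
    exact ⟨fun h => ⟨h.2, h.1.2⟩, fun h => ⟨⟨h.1.le, h.2⟩, h.1⟩⟩
  have e3 : (tp (finColor c F) (d + 1) (∅ : Set A)).triples = ∅ := by simp [triples_tp]
  rw [← h, triples_add, trunc_tp, trunc_tp, triples_tp, triples_tp, image_image, image_image,
    e1, e2] at ha
  rcases ha with ⟨y, hy, hya⟩ | ⟨y, hy, hya⟩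
  · simp only [Prod.mk.injEq] at hya
    obtain ⟨h1, h2, h3⟩ := hya
    have hyx : y = x := by
      by_contra hne
      have hxy : x < y := lt_of_le_of_ne hy (Ne.symm hne)
      have := congrArg Ty.triples h1
      rw [e3, triples_tp, image_eq_empty] at this
      exact (this ▸ show x ∈ Ici x ∩ Iio y from ⟨le_rfl, hxy⟩ : x ∈ (∅ : Set A))
    subst hyx
    refine ⟨h2.symm, ?_⟩
    have e4 : Ici y ∩ Ioi y = Ioi y := by
      ext z; simpa using le_of_lt
    rw [e4] at h3
    have := congrArg Ty.trunc h3
    rw [trunc_add, trunc_tp, trunc_tp, trunc_tp] at this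
    exact this.symm
  · simp only [Prod.mk.injEq] at hya
    have := congrArg Ty.triples hya.1
    rw [e3, triples_add, triples_tp, union_empty_iff, image_eq_empty, image_eq_empty] at this
    exact (this.1 ▸ self_mem_Ici : x ∈ (∅ : Set A)).elim

theorem exists_near_left (h : SelfAdditive ι A c) (F : Finset ι) (d : ℕ) (x : A) {Q : Set A}
    (hQ : DefSet c Q) (hx : x ∈ Q) : ∃ y ∈ Q, y < x ∧ finColor c F y = finColor c F x ∧
      tp (finColor c F) d (Ioo y x) =
        (tp (finColor c F) d (Ioi x)).add (tp (finColor c F) d (Iio x)) := by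
  obtain ⟨e, hL, hR, hee⟩ := exists_idempotent_far h F (d + 2) x
  obtain ⟨y, hy, hyx, he⟩ := hL.nearLeft Q hQ hx
  exact ⟨y, hy, hyx, first_point hyx (add_Ici_Iio_eq hL hR hee le_rfl he)⟩

theorem exists_near_right (h : SelfAdditive ι A c) (F : Finset ι) (d : ℕ) (x : A) {Q : Set A}
    (hQ : DefSet c Q) (hx : x ∈ Q) : ∃ y ∈ Q, x < y ∧
      tp (finColor c F) d (Ioo x y) =
        (tp (finColor c F) d (Ioi x)).add (tp (finColor c F) d (Iio x)) := by
  obtain ⟨e, hL, hR, hee⟩ := exists_idempotent_far h F (d + 2) x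
  obtain ⟨y, hy, hxy, he⟩ := hR.nearRight Q hQ hx
  exact ⟨y, hy, hxy, (first_point hxy (add_Ici_Iio_eq hL hR hee le_rfl he)).2⟩

/-- Any point `x` has a copy `y` below `a` such that inserting a copy of the part above `x`
before `Iio a` has the effect of the interval `(y, a)`. -/
theorem exists_copy_lt (h : SelfAdditive ι A c) (F : Finset ι) (d : ℕ) (x a : A) :
    ∃ y < a, finColor c F y = finColor c F x ∧
      tp (finColor c F) d (Iio y) = tp (finColor c F) d (Iio x) ∧
      tp (finColor c F) d (Ioo y a) =
        (tp (finColor c F) d (Ioi x)).add (tp (finColor c F) d (Iio a)) := by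
  have hd := ((UnifDef.lt (.inr ()) (.inl () : Unit ⊕ Unit)).and
    ((FinDef.finColor F (.inr ()) (finColor c F x)).and
    ((FinDef.tp_Iio F d (.inr ()) (tp (finColor c F) d (Iio x))).and
    ((FinDef.tp_Ioo F d (.inr ()) (.inl ())).rel (FinDef.tp_Iio F d (.inl ()))
      fun s t => s = (tp (finColor c F) d (Ioi x)).add t)))).exists_elim.defSet c
  have hx : ∃ y < x, finColor c F y = finColor c F x ∧
      tp (finColor c F) d (Iio y) = tp (finColor c F) d (Iio x) ∧
      tp (finColor c F) d (Ioo y x) =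
        (tp (finColor c F) d (Ioi x)).add (tp (finColor c F) d (Iio x)) := by
    obtain ⟨y, h1, h2, h3, h4⟩ :=
      exists_near_left h F d x ((FinDef.tp_Iio F d () (tp (finColor c F) d (Iio x))).defSet c) rfl
    exact ⟨y, h2, h3, h1, h4⟩
  obtain ⟨z, ⟨y, hyz, hc, hl, ht⟩, hza⟩ := h.exists_mem_lt hd ⟨x, hx⟩ a
  replace hyz : y < z := hyz
  replace ht : tp (finColor c F) d (Ioo y z) =
    (tp (finColor c F) d (Ioi x)).add (tp (finColor c F) d (Iio z)) := ht
  refine ⟨y, hyz.trans hza, hc, hl, ?_⟩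
  rw [← Ioo_union_Ico_eq_Ioo hyz hza.le, tp_union, ht, ← Iio_union_Ico_eq_Iio hza.le, tp_union,
    Ty.add_assoc]
  · exact fun u hu v hv => lt_of_lt_of_le hu hv.1
  · exact fun u hu v hv => hu.2.trans_le hv.1

/-- Any point `x` has a copy `y` above `a` such that inserting a copy of the part below `x`
after `Ioi a` has the effect of the interval `(a, y)`. -/
theorem exists_copy_gt (h : SelfAdditive ι A c) (F : Finset ι) (d : ℕ) (x a : A) :
    ∃ y > a, finColor c F y = finColor c F x ∧
      tp (finColor c F) d (Ioi y) = tp (finColor c F) d (Ioi x) ∧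
      tp (finColor c F) d (Ioo a y) =
        (tp (finColor c F) d (Ioi a)).add (tp (finColor c F) d (Iio x)) := by
  have hd := ((UnifDef.lt (.inl ()) (.inr () : Unit ⊕ Unit)).and
    ((FinDef.finColor F (.inr ()) (finColor c F x)).and
    ((FinDef.tp_Ioi F d (.inr ()) (tp (finColor c F) d (Ioi x))).and
    ((FinDef.tp_Ioo F d (.inl ()) (.inr ())).rel (FinDef.tp_Ioi F d (.inl ()))
      fun s t => s = t.add (tp (finColor c F) d (Iio x)))))).exists_elim.defSet c
  have hx : ∃ y > x, finColor c F y = finColor c F x ∧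
      tp (finColor c F) d (Ioi y) = tp (finColor c F) d (Ioi x) ∧
      tp (finColor c F) d (Ioo x y) =
        (tp (finColor c F) d (Ioi x)).add (tp (finColor c F) d (Iio x)) := by
    obtain ⟨y, ⟨h1, h2⟩, h3, h4⟩ := exists_near_right h F d x
      (((FinDef.finColor F () (finColor c F x)).and
        (FinDef.tp_Ioi F d () (tp (finColor c F) d (Ioi x)))).defSet c) ⟨rfl, rfl⟩
    exact ⟨y, h3, h1, h2, h4⟩
  obtain ⟨z, ⟨y, hyz, hc, hl, ht⟩, haz⟩ := h.exists_mem_gt hd ⟨x, hx⟩ a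
  replace hyz : z < y := hyz
  replace ht : tp (finColor c F) d (Ioo z y) =
    (tp (finColor c F) d (Ioi z)).add (tp (finColor c F) d (Iio x)) := ht
  refine ⟨y, haz.trans hyz, hc, hl, ?_⟩
  rw [← Ioc_union_Ioo_eq_Ioo haz.le hyz, tp_union, ht, ← Ioc_union_Ioi_eq_Ioi haz.le, tp_union,
    Ty.add_assoc]
  · exact fun u hu v hv => lt_of_le_of_lt hu.2 hv
  · exact fun u hu v hv => hu.2.trans_lt hv.1

end SelfAdditive

section Sum

variable {ι A I : Type} {c : ι → Set A}

/-- The embedding of `A` as the summand with index `i` of `Σₗ _ : I, A`. -/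
def emb (i : I) (a : A) : Σₗ _ : I, A := toLex ⟨i, a⟩

/-- The union of the summands with index in `S`. -/
def blocks (A : Type) (S : Set I) : Set (Σₗ _ : I, A) := {z | (ofLex z).1 ∈ S}

theorem exists_eq_emb (z : Σₗ _ : I, A) : ∃ i a, z = emb i a := ⟨(ofLex z).1, (ofLex z).2, rfl⟩

theorem emb_mem_blocks {i : I} {a : A} {S : Set I} : emb i a ∈ blocks A S ↔ i ∈ S := Iff.rfl

theorem emb_mem_image {i j : I} {a : A} {T : Set A} : emb i a ∈ emb j '' T ↔ i = j ∧ a ∈ T := by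
  constructor
  · rintro ⟨b, hb, h⟩
    cases h
    exact ⟨rfl, hb⟩
  · rintro ⟨rfl, h⟩
    exact ⟨a, h, rfl⟩

theorem finColor_emb (F : Finset ι) (i : I) (a : A) :
    finColor (sigmaColor fun _ : I => c) F (emb i a) = finColor c F a := rfl

variable [LinearOrder A] [LinearOrder I]

theorem emb_lt_emb {i j : I} {a b : A} : emb i a < emb j b ↔ i < j ∨ i = j ∧ a < b := by
  constructor
  · rintro (⟨_, _, h⟩ | ⟨_, _, h⟩)
    · exact Or.inl h
    · exact Or.inr ⟨rfl, h⟩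
  · rintro (h | ⟨rfl, h⟩)
    · exact Sigma.Lex.left _ _ h
    · exact Sigma.Lex.right _ _ h

theorem emb_strictMono (i : I) : StrictMono (emb i : A → _) := fun _ _ h =>
  emb_lt_emb.2 (Or.inr ⟨rfl, h⟩)

theorem tp_emb_image (F : Finset ι) (d : ℕ) (i : I) (T : Set A) :
    tp (finColor (sigmaColor fun _ : I => c) F) d (emb i '' T) = tp (finColor c F) d T :=
  tp_image (emb_strictMono i) (finColor_emb F i) d T

theorem tp_blocks_union_Iio (h : SelfAdditive ι A c) (F : Finset ι) (d : ℕ) :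
    ∀ (i : I) (a : A) (S : Set I), (∀ s ∈ S, s < i) →
      tp (finColor (sigmaColor fun _ : I => c) F) d (blocks A S ∪ emb i '' Iio a) =
        tp (finColor c F) d (Iio a) := by
  induction d with
  | zero => exact fun _ _ _ _ => rfl
  | succ d ih =>
    intro i a S hS
    have own {x : A} (hx : x < a) :
        (tp (finColor (sigmaColor fun _ : I => c) F) d
          ((blocks A S ∪ emb i '' Iio a) ∩ Iio (emb i x)),
          finColor (sigmaColor fun _ : I => c) F (emb i x),
          tp (finColor (sigmaColor fun _ : I => c) F) d
          ((blocks A S ∪ emb i '' Iio a) ∩ Ioi (emb i x))) =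
        (tp (finColor c F) d (Iio a ∩ Iio x), finColor c F x,
          tp (finColor c F) d (Iio a ∩ Ioi x)) := by
      have h1 : (blocks A S ∪ emb i '' Iio a) ∩ Iio (emb i x) = blocks A S ∪ emb i '' Iio x := by
        ext z
        obtain ⟨k, b, rfl⟩ := exists_eq_emb z
        simp only [mem_inter_iff, mem_union, emb_mem_blocks, emb_mem_image, mem_Iio, emb_lt_emb]
        have := hS k
        have := fun h : b < x => h.trans hx
        grind
      have h2 : (blocks A S ∪ emb i '' Iio a) ∩ Ioi (emb i x) = emb i '' (Iio a ∩ Ioi x) := by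
        ext z
        obtain ⟨k, b, rfl⟩ := exists_eq_emb z
        simp only [mem_inter_iff, mem_union, emb_mem_blocks, emb_mem_image, mem_Iio, mem_Ioi,
          emb_lt_emb]
        have := hS k
        grind
      have h3 : Iio a ∩ Iio x = Iio x := by
        rw [Iio_inter_Iio, min_eq_right hx.le]
      rw [h1, h2, h3, ih i x S hS, tp_emb_image, finColor_emb]
    apply Ty.ext_triples
    rw [triples_tp, triples_tp]
    apply Subset.antisymm
    · rintro _ ⟨z, hz, rfl⟩
      obtain ⟨j, x, rfl⟩ := exists_eq_emb z
      simp only [mem_union, emb_mem_blocks, emb_mem_image] at hz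
      rcases hz with hj | ⟨rfl, hx⟩
      · have h1 : (blocks A S ∪ emb i '' Iio a) ∩ Iio (emb j x) =
            blocks A (S ∩ Iio j) ∪ emb j '' Iio x := by
          ext z
          obtain ⟨k, b, rfl⟩ := exists_eq_emb z
          simp only [mem_inter_iff, mem_union, emb_mem_blocks, emb_mem_image, mem_Iio, emb_lt_emb]
          have := hS j
          grind
        have h2 : (blocks A S ∪ emb i '' Iio a) ∩ Ioi (emb j x) =
            emb j '' Ioi x ∪ (blocks A (S ∩ Ioi j) ∪ emb i '' Iio a) := by
          ext z
          obtain ⟨k, b, rfl⟩ := exists_eq_emb z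
          simp only [mem_inter_iff, mem_union, emb_mem_blocks, emb_mem_image, mem_Iio, mem_Ioi,
            emb_lt_emb]
          have := hS j
          grind
        obtain ⟨y, hy, hc, hl, hr⟩ := exists_copy_lt h F d x a
        refine ⟨y, hy, ?_⟩
        have h3 : Iio a ∩ Iio y = Iio y := by
          rw [Iio_inter_Iio, min_eq_right hy.le]
        have h4 : Iio a ∩ Ioi y = Ioo y a := by
          ext z; simp [and_comm]
        simp only
        rw [h1, h2, h3, h4, ih j x _ fun s hs => hs.2, finColor_emb, tp_union, tp_emb_image,
          ih i a _ fun s hs => hS s hs.1, hc, hl, hr]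
        rintro u hu v hv
        obtain ⟨k, b, rfl⟩ := exists_eq_emb u
        obtain ⟨l, b', rfl⟩ := exists_eq_emb v
        simp only [mem_inter_iff, mem_union, emb_mem_blocks, emb_mem_image, mem_Iio, mem_Ioi]
          at hu hv
        rw [emb_lt_emb]
        have := hS j
        grind
      · exact ⟨x, hx, (own hx).symm⟩
    · rintro _ ⟨x, hx, rfl⟩
      exact ⟨emb i x, Or.inr ⟨x, hx, rfl⟩, own hx⟩

theorem tp_Ioi_union_blocks (h : SelfAdditive ι A c) (F : Finset ι) (d : ℕ) :
    ∀ (i : I) (a : A) (S : Set I), (∀ s ∈ S, i < s) →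
      tp (finColor (sigmaColor fun _ : I => c) F) d (emb i '' Ioi a ∪ blocks A S) =
        tp (finColor c F) d (Ioi a) := by
  induction d with
  | zero => exact fun _ _ _ _ => rfl
  | succ d ih =>
    intro i a S hS
    have own {x : A} (hx : a < x) :
        (tp (finColor (sigmaColor fun _ : I => c) F) d
          ((emb i '' Ioi a ∪ blocks A S) ∩ Iio (emb i x)),
          finColor (sigmaColor fun _ : I => c) F (emb i x),
          tp (finColor (sigmaColor fun _ : I => c) F) d
          ((emb i '' Ioi a ∪ blocks A S) ∩ Ioi (emb i x))) =
        (tp (finColor c F) d (Ioi a ∩ Iio x), finColor c F x,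
          tp (finColor c F) d (Ioi a ∩ Ioi x)) := by
      have h1 : (emb i '' Ioi a ∪ blocks A S) ∩ Ioi (emb i x) = emb i '' Ioi x ∪ blocks A S := by
        ext z
        obtain ⟨k, b, rfl⟩ := exists_eq_emb z
        simp only [mem_inter_iff, mem_union, emb_mem_blocks, emb_mem_image, mem_Ioi, emb_lt_emb]
        have := hS k
        have := fun h : x < b => hx.trans h
        grind
      have h2 : (emb i '' Ioi a ∪ blocks A S) ∩ Iio (emb i x) = emb i '' (Ioi a ∩ Iio x) := by
        ext z
        obtain ⟨k, b, rfl⟩ := exists_eq_emb z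
        simp only [mem_inter_iff, mem_union, emb_mem_blocks, emb_mem_image, mem_Iio, mem_Ioi,
          emb_lt_emb]
        have := hS k
        grind
      have h3 : Ioi a ∩ Ioi x = Ioi x := by
        rw [Ioi_inter_Ioi, max_eq_right hx.le]
      rw [h1, h2, h3, ih i x S hS, tp_emb_image, finColor_emb]
    apply Ty.ext_triples
    rw [triples_tp, triples_tp]
    apply Subset.antisymm
    · rintro _ ⟨z, hz, rfl⟩
      obtain ⟨j, x, rfl⟩ := exists_eq_emb z
      simp only [mem_union, emb_mem_blocks, emb_mem_image] at hz
      rcases hz with ⟨rfl, hx⟩ | hj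
      · exact ⟨x, hx, (own hx).symm⟩
      · have h1 : (emb i '' Ioi a ∪ blocks A S) ∩ Ioi (emb j x) =
            emb j '' Ioi x ∪ blocks A (S ∩ Ioi j) := by
          ext z
          obtain ⟨k, b, rfl⟩ := exists_eq_emb z
          simp only [mem_inter_iff, mem_union, emb_mem_blocks, emb_mem_image, mem_Ioi, emb_lt_emb]
          have := hS j
          grind
        have h2 : (emb i '' Ioi a ∪ blocks A S) ∩ Iio (emb j x) =
            (emb i '' Ioi a ∪ blocks A (S ∩ Iio j)) ∪ emb j '' Iio x := by
          ext z
          obtain ⟨k, b, rfl⟩ := exists_eq_emb z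
          simp only [mem_inter_iff, mem_union, emb_mem_blocks, emb_mem_image, mem_Iio, mem_Ioi,
            emb_lt_emb]
          have := hS j
          grind
        obtain ⟨y, hy, hc, hl, hr⟩ := exists_copy_gt h F d x a
        refine ⟨y, hy, ?_⟩
        have h3 : Ioi a ∩ Ioi y = Ioi y := by
          rw [Ioi_inter_Ioi, max_eq_right hy.le]
        simp only
        rw [h1, h2, h3, Ioi_inter_Iio, ih j x _ fun s hs => hs.2, finColor_emb, tp_union,
          tp_emb_image, ih i a _ fun s hs => hS s hs.1, hc, hl, hr]
        rintro u hu v hv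
        obtain ⟨k, b, rfl⟩ := exists_eq_emb u
        obtain ⟨l, b', rfl⟩ := exists_eq_emb v
        simp only [mem_inter_iff, mem_union, emb_mem_blocks, emb_mem_image, mem_Iio, mem_Ioi]
          at hu hv
        rw [emb_lt_emb]
        have := hS j
        grind
    · rintro _ ⟨x, hx, rfl⟩
      exact ⟨emb i x, Or.inl ⟨x, hx, rfl⟩, own hx⟩

theorem tp_Iio_emb (h : SelfAdditive ι A c) (F : Finset ι) (d : ℕ) (i : I) (a : A) :
    tp (finColor (sigmaColor fun _ : I => c) F) d (Iio (emb i a)) =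
      tp (finColor c F) d (Iio a) := by
  rw [← tp_blocks_union_Iio h F d i a (Iio i) fun s hs => hs]
  congr 1
  ext z
  obtain ⟨k, b, rfl⟩ := exists_eq_emb z
  simp only [mem_union, emb_mem_blocks, emb_mem_image, mem_Iio, emb_lt_emb]

theorem tp_Ioi_emb (h : SelfAdditive ι A c) (F : Finset ι) (d : ℕ) (i : I) (a : A) :
    tp (finColor (sigmaColor fun _ : I => c) F) d (Ioi (emb i a)) =
      tp (finColor c F) d (Ioi a) := by
  rw [← tp_Ioi_union_blocks h F d i a (Ioi i) fun s hs => hs]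
  congr 1
  ext z
  obtain ⟨k, b, rfl⟩ := exists_eq_emb z
  simp only [mem_union, emb_mem_blocks, emb_mem_image, mem_Ioi, emb_lt_emb]
  grind

theorem tp_univ_sum (h : SelfAdditive ι A c) (F : Finset ι) (d : ℕ) (i : I) :
    tp (finColor (sigmaColor fun _ : I => c) F) d univ = tp (finColor c F) d univ := by
  cases d with
  | zero => rfl
  | succ d =>
    apply Ty.ext_triples
    simp only [triples_tp, univ_inter]
    apply Subset.antisymm
    · rintro _ ⟨z, -, rfl⟩
      obtain ⟨j, x, rfl⟩ := exists_eq_emb z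
      exact ⟨x, trivial, by simp only [tp_Iio_emb h, tp_Ioi_emb h, finColor_emb]⟩
    · rintro _ ⟨x, -, rfl⟩
      exact ⟨emb i x, trivial, by simp only [tp_Iio_emb h, tp_Ioi_emb h, finColor_emb]⟩

theorem tp_interval_emb (h : SelfAdditive ι A c) (F : Finset ι) (d : ℕ) (i : I) {β : Type}
    (v : β → A) (k l : Option β) :
    tp (finColor c F) d (interval v k l) =
      tp (finColor (sigmaColor fun _ : I => c) F) d (interval (fun b => emb i (v b)) k l) := by
  have hIio {M : Type} [LinearOrder M] (w : β → M) (l : β) :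
      interval w none (some l) = Iio (w l) := by ext; simp [interval]
  have hIoi {M : Type} [LinearOrder M] (w : β → M) (l : β) :
      interval w (some l) none = Ioi (w l) := by ext; simp [interval]
  have huniv {M : Type} [LinearOrder M] (w : β → M) :
      interval w none none = univ := by ext; simp [interval]
  cases k with
  | none =>
    cases l with
    | none => rw [huniv, huniv, tp_univ_sum h F d i]
    | some l => rw [hIio, hIio, tp_Iio_emb h]
  | some k =>
    cases l with
    | none => rw [hIoi, hIoi, tp_Ioi_emb h]
    | some l =>
      rw [← tp_emb_image F d i]
      congr 1
      ext z
      obtain ⟨j, b, rfl⟩ := exists_eq_emb z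
      simp only [interval, emb_mem_image, mem_ofPred_eq, Option.mem_some_iff, forall_eq',
        emb_lt_emb]
      grind

end Sum

section Game

variable {ι M N β γ : Type} [LinearOrder M] [LinearOrder N] {cM : ι → Set M} {cN : ι → Set N}
  {F : Finset ι} {d : ℕ} {v : β → M} {w : β → N}

/-- Two tuples have the same game type of depth `d`: they are ordered and colored alike, and
the intervals that contain no point of the tuple have equal types. -/
structure TEq (cM : ι → Set M) (cN : ι → Set N) (F : Finset ι) (d : ℕ) (v : β → M) (w : β → N) :
    Prop where
  lt_iff : ∀ i j, v i < v j ↔ w i < w j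
  color_eq : ∀ i, finColor cM F (v i) = finColor cN F (w i)
  tp_eq : ∀ i j : Option β, (∀ k, v k ∉ interval v i j) →
    tp (finColor cM F) d (interval v i j) = tp (finColor cN F) d (interval w i j)

namespace TEq

theorem mem_interval_iff (h : TEq cM cN F d v w) (i j : Option β) (k : β) :
    v k ∈ interval v i j ↔ w k ∈ interval w i j := by
  simp only [interval, mem_ofPred_eq, h.lt_iff]

theorem eq_iff (h : TEq cM cN F d v w) (i j : β) : v i = v j ↔ w i = w j := by
  have h1 := h.lt_iff i j
  have h2 := h.lt_iff j i
  constructor <;> intro h' <;> apply le_antisymm <;> rw [← not_lt] <;> grind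

theorem symm (h : TEq cM cN F d v w) : TEq cN cM F d w v where
  lt_iff i j := (h.lt_iff i j).symm
  color_eq i := (h.color_eq i).symm
  tp_eq i j hk := (h.tp_eq i j fun k => mt (h.mem_interval_iff i j k).1 (hk k)).symm

theorem mono {D : ℕ} (h : TEq cM cN F D v w) (hd : d ≤ D) : TEq cM cN F d v w where
  lt_iff := h.lt_iff
  color_eq := h.color_eq
  tp_eq i j hk := tp_eq_of_le hd (h.tp_eq i j hk)

theorem comp (h : TEq cM cN F d v w) {ρ : γ → β} (hρ : ρ.Surjective) :
    TEq cM cN F d (fun g => v (ρ g)) fun g => w (ρ g) where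
  lt_iff i j := h.lt_iff _ _
  color_eq i := h.color_eq _
  tp_eq i j hk := by
    have e {M : Type} [LinearOrder M] (u : β → M) :
        interval (fun g => u (ρ g)) i j = interval u (i.map ρ) (j.map ρ) := by
      simp [interval]
    rw [e, e]
    refine h.tp_eq _ _ fun k => ?_
    obtain ⟨g, rfl⟩ := hρ k
    rw [← e]
    exact hk g

end TEq

theorem exists_nearest_below [Finite β] (v : β → M) (x : M) :
    ∃ i : Option β, (∀ k ∈ i, v k < x) ∧ ∀ k, v k < x → ∃ l ∈ i, v k ≤ v l := by
  by_cases h : ∃ k, v k < x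
  · obtain ⟨l, hl, hl'⟩ := Set.exists_max_image {k | v k < x} v (Set.toFinite _) h
    exact ⟨some l, by simpa using hl, fun k hk => ⟨l, rfl, hl' k hk⟩⟩
  · exact ⟨none, by simp, fun k hk => (h ⟨k, hk⟩).elim⟩

theorem exists_nearest_above [Finite β] (v : β → M) (x : M) :
    ∃ i : Option β, (∀ k ∈ i, x < v k) ∧ ∀ k, x < v k → ∃ l ∈ i, v l ≤ v k := by
  by_cases h : ∃ k, x < v k
  · obtain ⟨l, hl, hl'⟩ := Set.exists_min_image {k | x < v k} v (Set.toFinite _) h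
    exact ⟨some l, by simpa using hl, fun k hk => ⟨l, rfl, hl' k hk⟩⟩
  · exact ⟨none, by simp, fun k hk => (h ⟨k, hk⟩).elim⟩

theorem TEq.extend [Finite β] (h : TEq cM cN F (d + 1) v w) (x : M) :
    ∃ y, TEq cM cN F d (Sum.elim v fun _ : Unit => x) (Sum.elim w fun _ : Unit => y) := by
  by_cases hx : ∃ k, v k = x
  · obtain ⟨k, rfl⟩ := hx
    refine ⟨w k, ?_⟩
    convert (h.mono d.le_succ).comp (ρ := Sum.elim id fun _ : Unit => k) fun b => ⟨.inl b, rfl⟩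
      using 1 <;> (ext (b | b) <;> rfl)
  push Not at hx
  obtain ⟨i, hi, hi'⟩ := exists_nearest_below v x
  obtain ⟨j, hj, hj'⟩ := exists_nearest_above v x
  have hle (k l : β) : v k ≤ v l → w k ≤ w l := by
    rw [← not_lt, ← not_lt, h.lt_iff]
    exact id
  have hij : ∀ k, v k ∉ interval v i j := by
    intro k hk
    rcases lt_or_gt_of_ne (hx k) with hk' | hk'
    · obtain ⟨l, hl, hkl⟩ := hi' k hk'
      exact (hk.1 l hl).not_ge hkl
    · obtain ⟨l, hl, hkl⟩ := hj' k hk'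
      exact (hk.2 l hl).not_ge hkl
  have hxt : (tp (finColor cM F) d (interval v i j ∩ Iio x), finColor cM F x,
      tp (finColor cM F) d (interval v i j ∩ Ioi x)) ∈
      (tp (finColor cM F) (d + 1) (interval v i j)).triples := ⟨x, ⟨hi, hj⟩, rfl⟩
  rw [h.tp_eq i j hij] at hxt
  obtain ⟨y, ⟨hyi, hyj⟩, hy⟩ := hxt
  simp only [Prod.mk.injEq] at hy
  obtain ⟨hyl, hyc, hyr⟩ := hy
  have hbelow {k : β} (hk : v k < x) : w k < y := by
    obtain ⟨l, hl, hkl⟩ := hi' k hk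
    exact (hle _ _ hkl).trans_lt (hyi l hl)
  have habove {k : β} (hk : x < v k) : y < w k := by
    obtain ⟨l, hl, hkl⟩ := hj' k hk
    exact (hyj l hl).trans_le (hle _ _ hkl)
  refine ⟨y, ⟨?_, ?_, ?_⟩⟩
  · have hb (k : β) : v k < x ↔ w k < y := ⟨hbelow, fun hk => by
      by_contra hn
      exact hk.not_gt (habove (lt_of_le_of_ne (not_lt.1 hn) (hx k).symm))⟩
    have ha (k : β) : x < v k ↔ y < w k := ⟨habove, fun hk => by
      by_contra hn
      exact hk.not_gt (hbelow (lt_of_le_of_ne (not_lt.1 hn) (hx k)))⟩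
    rintro (k | k) (l | l)
    · exact h.lt_iff k l
    · exact hb k
    · exact ha l
    · simp
  · rintro (k | k)
    · exact h.color_eq k
    · exact hyc.symm
  · have hempty {X : Set M} {Y : Set N} (hX : X = ∅) (hY : Y = ∅) :
        tp (finColor cM F) d X = tp (finColor cN F) d Y := by
      rw [hX, hY]
      exact tp_empty _ _ d
    have old {M : Type} [LinearOrder M] (u : β → M) (z : M) (i' j' : Option β) :
        interval (Sum.elim u fun _ : Unit => z) (i'.map .inl) (j'.map .inl) = interval u i' j' := by
      simp [interval]
    have left {M : Type} [LinearOrder M] (u : β → M) (z : M) (hz : ∀ k ∈ j, z < u k) :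
        interval (Sum.elim u fun _ : Unit => z) (i.map .inl) (some (.inr ())) =
          interval u i j ∩ Iio z := by
      ext t
      simp only [interval, Option.mem_map, mem_ofPred_eq, mem_inter_iff, mem_Iio,
        Option.mem_some_iff, forall_exists_index, and_imp, forall_apply_eq_imp_iff₂, forall_eq',
        Sum.elim_inl, Sum.elim_inr]
      have := fun (ht : t < z) k hk => ht.trans (hz k hk)
      grind
    have right {M : Type} [LinearOrder M] (u : β → M) (z : M) (hz : ∀ k ∈ i, u k < z) :
        interval (Sum.elim u fun _ : Unit => z) (some (.inr ())) (j.map .inl) =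
          interval u i j ∩ Ioi z := by
      ext t
      simp only [interval, Option.mem_map, mem_ofPred_eq, mem_inter_iff, mem_Ioi,
        Option.mem_some_iff, forall_exists_index, and_imp, forall_apply_eq_imp_iff₂, forall_eq',
        Sum.elim_inl, Sum.elim_inr]
      have := fun (ht : z < t) k hk => (hz k hk).trans ht
      grind
    have leftEq : tp (finColor cM F) d
        (interval (Sum.elim v fun _ : Unit => x) (i.map .inl) (some (.inr ()))) =
        tp (finColor cN F) d
        (interval (Sum.elim w fun _ : Unit => y) (i.map .inl) (some (.inr ()))) := by
      rw [left v x hj, left w y hyj, hyl]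
    have rightEq : tp (finColor cM F) d
        (interval (Sum.elim v fun _ : Unit => x) (some (.inr ())) (j.map .inl)) =
        tp (finColor cN F) d
        (interval (Sum.elim w fun _ : Unit => y) (some (.inr ())) (j.map .inl)) := by
      rw [right v x hi, right w y hyi, hyr]
    have split (o : Option (β ⊕ Unit)) :
        (∃ o' : Option β, o = o'.map .inl) ∨ o = some (.inr ()) := by
      rcases o with _ | k | k
      · exact Or.inl ⟨none, rfl⟩
      · exact Or.inl ⟨some k, rfl⟩
      · exact Or.inr rfl
    intro i₁ j₁ hk
    obtain ⟨i', rfl⟩ | rfl := split i₁ <;> obtain ⟨j', rfl⟩ | rfl := split j₁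
    · rw [old, old]
      exact (h.mono d.le_succ).tp_eq i' j' fun k hk' => hk (.inl k) (by rwa [old])
    · cases i' with
      | none =>
        cases i with
        | none => exact leftEq
        | some m => exact (hk (.inl m) (by simpa [interval] using hi)).elim
      | some k =>
        rcases lt_or_gt_of_ne (hx k) with hk' | hk'
        · obtain ⟨m, rfl, hkm⟩ := hi' k hk'
          have hvm : v k = v m := by
            refine hkm.eq_of_not_lt fun hlt => hk (.inl m) ?_
            simpa [interval] using ⟨hlt, hi m rfl⟩
          have hwm := (h.eq_iff k m).1 hvm
          simpa [interval, hvm, hwm] using leftEq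
        · have hk'' := habove hk'
          exact hempty
            (eq_empty_of_forall_notMem fun z hz => by
              simp only [interval, Option.map_some, Option.mem_some_iff, forall_eq', mem_ofPred_eq,
                Sum.elim_inl, Sum.elim_inr] at hz
              exact (hz.1.trans hz.2).not_gt hk')
            (eq_empty_of_forall_notMem fun z hz => by
              simp only [interval, Option.map_some, Option.mem_some_iff, forall_eq', mem_ofPred_eq,
                Sum.elim_inl, Sum.elim_inr] at hz
              exact (hz.1.trans hz.2).not_gt hk'')
    · cases j' with
      | none =>
        cases j with
        | none => exact rightEq
        | some m => exact (hk (.inl m) (by simpa [interval] using hj)).elim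
      | some k =>
        rcases lt_or_gt_of_ne (hx k) with hk' | hk'
        · have hk'' := hbelow hk'
          exact hempty
            (eq_empty_of_forall_notMem fun z hz => by
              simp only [interval, Option.map_some, Option.mem_some_iff, forall_eq', mem_ofPred_eq,
                Sum.elim_inl, Sum.elim_inr] at hz
              exact (hz.1.trans hz.2).not_gt hk')
            (eq_empty_of_forall_notMem fun z hz => by
              simp only [interval, Option.map_some, Option.mem_some_iff, forall_eq', mem_ofPred_eq,
                Sum.elim_inl, Sum.elim_inr] at hz
              exact (hz.1.trans hz.2).not_gt hk'')
        · obtain ⟨m, rfl, hkm⟩ := hj' k hk'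
          have hvm : v m = v k := by
            refine hkm.eq_of_not_lt fun hlt => hk (.inl m) ?_
            simpa [interval] using ⟨hj m rfl, hlt⟩
          have hwm := (h.eq_iff m k).1 hvm
          simpa [interval, hvm, hwm] using rightEq
    · exact hempty
        (eq_empty_of_forall_notMem fun z hz => (hz.1 _ rfl).not_gt (hz.2 _ rfl))
        (eq_empty_of_forall_notMem fun z hz => (hz.1 _ rfl).not_gt (hz.2 _ rfl))

theorem realize_iff_of_tEq {α : Type} [Finite α] (cM : ι → Set M) (cN : ι → Set N) {n : ℕ}
    (φ : (CLOLang ι).BoundedFormula α n) :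
    letI := CLOStr ι M cM
    letI := CLOStr ι N cN
    ∃ (F₀ : Finset ι) (d₀ : ℕ), ∀ F, F₀ ⊆ F → ∀ d, d₀ ≤ d → ∀ (v : α → M) (w : α → N)
      (xs : Fin n → M) (ys : Fin n → N),
      TEq cM cN F d (Sum.elim v xs) (Sum.elim w ys) → (φ.Realize v xs ↔ φ.Realize w ys) := by
  let _ := CLOStr ι M cM
  let _ := CLOStr ι N cN
  have hvar {n : ℕ} (t : (CLOLang ι).Term (α ⊕ Fin n)) : ∃ k, t = Term.var k := by
    cases t with
    | var k => exact ⟨k, rfl⟩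
    | func f _ => exact Empty.elim f
  induction φ with
  | falsum => exact ⟨∅, 0, fun _ _ _ _ _ _ _ _ _ => Iff.rfl⟩
  | equal t₁ t₂ =>
    obtain ⟨k, rfl⟩ := hvar t₁
    obtain ⟨l, rfl⟩ := hvar t₂
    exact ⟨∅, 0, fun F _ d _ v w xs ys h => h.eq_iff k l⟩
  | rel R ts =>
    choose k hk using fun i => hvar (ts i)
    obtain rfl : ts = fun i => Term.var (k i) := funext hk
    cases R with
    | lt => exact ⟨∅, 0, fun F _ d _ v w xs ys h => h.lt_iff (k 0) (k 1)⟩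
    | color i =>
      refine ⟨{i}, 0, fun F hF d _ v w xs ys h => ?_⟩
      have := Set.ext_iff.1 (h.color_eq (k 0)) ⟨i, hF (Finset.mem_singleton_self i)⟩
      exact this
  | imp _ _ ih₁ ih₂ =>
    classical
    obtain ⟨F₁, d₁, h₁⟩ := ih₁
    obtain ⟨F₂, d₂, h₂⟩ := ih₂
    refine ⟨F₁ ∪ F₂, max d₁ d₂, fun F hF d hd v w xs ys h => ?_⟩
    exact imp_congr
      (h₁ F (Finset.union_subset_left hF) d ((le_max_left _ _).trans hd) v w xs ys h)
      (h₂ F (Finset.union_subset_right hF) d ((le_max_right _ _).trans hd) v w xs ys h)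
  | @all n φ ih =>
    obtain ⟨F₀, d₀, h₀⟩ := ih
    refine ⟨F₀, d₀ + 1, fun F hF d hd v w xs ys h => ?_⟩
    obtain ⟨d, rfl⟩ : ∃ d', d = d' + 1 := ⟨d - 1, by omega⟩
    let ρ : α ⊕ Fin (n + 1) → (α ⊕ Fin n) ⊕ Unit :=
      Sum.elim (fun a => .inl (.inl a)) (Fin.lastCases (.inr ()) fun i => .inl (.inr i))
    have hρ : ρ.Surjective := by
      rintro ((a | i) | _)
      · exact ⟨.inl a, rfl⟩
      · exact ⟨.inr i.castSucc, by simp [ρ]⟩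
      · exact ⟨.inr (Fin.last n), by simp [ρ]⟩
    have e {M : Type} (v : α → M) (xs : Fin n → M) (x : M) :
        Sum.elim v (Fin.snoc xs x) =
          fun g => Sum.elim (Sum.elim v xs) (fun _ : Unit => x) (ρ g) := by
      ext (a | i)
      · rfl
      · refine Fin.lastCases ?_ (fun i => ?_) i <;> simp [ρ]
    rw [BoundedFormula.realize_all, BoundedFormula.realize_all]
    constructor
    · intro hall y
      obtain ⟨x, hx⟩ := h.symm.extend y
      refine (h₀ F hF d (by omega) v w _ _ ?_).1 (hall x)
      rw [e, e]
      exact hx.symm.comp hρ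
    · intro hall x
      obtain ⟨y, hy⟩ := h.extend x
      refine (h₀ F hF d (by omega) v w _ _ ?_).2 (hall y)
      rw [e, e]
      exact hy.comp hρ

end Game

section Elementary

variable {ι M N : Type} [LinearOrder M] [LinearOrder N] {cM : ι → Set M} {cN : ι → Set N}

/-- A map of CLOs that preserves the truth of formulas in finitely many variables. -/
def Elem (cM : ι → Set M) (cN : ι → Set N) (g : M → N) : Prop :=
  ∀ (α : Type) [Finite α] (φ : (CLOLang ι).Formula α) (v : α → M),
    Sat M cM φ v ↔ Sat N cN φ fun k => g (v k)

theorem _root_.CLOIso.exists_elem (h : CLOIso ι M cM N cN) :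
    ∃ f : M ≃ N, Elem cM cN f ∧ Elem cN cM f.symm := by
  let _ := CLOStr ι M cM
  let _ := CLOStr ι N cN
  obtain ⟨f⟩ := h
  exact ⟨f.toEquiv, fun α _ φ v => (StrongHomClass.realize_formula f φ).symm,
    fun α _ φ v => (StrongHomClass.realize_formula f.symm φ).symm⟩

theorem _root_.SelfAdditive.elem_emb {A I : Type} [LinearOrder A] [LinearOrder I] {c : ι → Set A}
    (h : SelfAdditive ι A c) (i : I) : Elem c (sigmaColor fun _ : I => c) (emb i) := by
  intro α _ φ v
  obtain ⟨F, d, hφ⟩ := realize_iff_of_tEq c (sigmaColor fun _ : I => c) φ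
  refine hφ F subset_rfl d le_rfl v (fun k => emb i (v k)) default default ?_
  have e : Sum.elim (fun k => emb i (v k)) (default : Fin 0 → Σₗ _ : I, A) =
      fun k => emb i (Sum.elim v (default : Fin 0 → A) k) := by
    ext (k | k)
    · rfl
    · exact k.elim0
  rw [e]
  exact ⟨fun _ _ => (emb_strictMono i).lt_iff_lt.symm, fun _ => rfl,
    fun k l _ => tp_interval_emb h F d i _ k l⟩

theorem UnifDef.fiber {α : Type} (φ : (CLOLang ι).Formula (Unit ⊕ Unit)) (x a : α) :
    UnifDef fun M _ (c : ι → Set M) (v : α → M) =>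
      v x ∈ {z | Sat M c φ (Sum.elim (fun _ => z) fun _ => v a)} :=
  (UnifDef.sat φ (Sum.elim (fun _ => x) fun _ => a)).congr fun M o c v => by
    have : (fun b => v (Sum.elim (fun _ => x) (fun _ => a) b)) =
        Sum.elim (fun _ : Unit => v x) fun _ : Unit => v a := by
      ext (b | b) <;> rfl
    rw [this]
    rfl

theorem unifDef_ordConnected (φ : (CLOLang ι).Formula (Unit ⊕ Unit)) :
    UnifDef fun M _ (c : ι → Set M) (v : Unit → M) =>
      OrdConnected {z | Sat M c φ (Sum.elim (fun _ => z) fun _ => v ())} := by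
  have h := ((UnifDef.fiber φ (.inl (.inl (.inr ()))) (.inl (.inl (.inl ())))).imp
    ((UnifDef.fiber φ (.inl (.inr ())) (.inl (.inl (.inl ())))).imp
      ((UnifDef.lt (.inl (.inl (.inr ()))) (.inr () : ((Unit ⊕ Unit) ⊕ Unit) ⊕ Unit)).imp
        ((UnifDef.lt (.inr ()) (.inl (.inr ()))).imp
          (UnifDef.fiber φ (.inr ())
            (.inl (.inl (.inl ())))))))).all_elim.all_elim.all_elim
  refine h.congr fun M o c v => ⟨fun h => ?_, fun h x y z hx hy hxz hzy => ?_⟩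
  · exact ordConnected_of_Ioo fun x hx y hy _ z hz => h x y z hx hy hz.1 hz.2
  · exact h.out hx hy ⟨le_of_lt hxz, le_of_lt hzy⟩

theorem unifDef_fiber_lt (φ : (CLOLang ι).Formula (Unit ⊕ Unit)) :
    UnifDef fun M _ (c : ι → Set M) (v : Unit ⊕ Unit → M) =>
      ∀ z ∈ {x | Sat M c φ (Sum.elim (fun _ => x) fun _ => v (.inl ()))}, z < v (.inr ()) :=
  ((UnifDef.fiber φ (Sum.inr ()) (Sum.inl (Sum.inl ()))).imp
    (UnifDef.lt (Sum.inr ()) (Sum.inl (Sum.inr ())))).all_elim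

theorem unifDef_lt_fiber (φ : (CLOLang ι).Formula (Unit ⊕ Unit)) :
    UnifDef fun M _ (c : ι → Set M) (v : Unit ⊕ Unit → M) =>
      ∀ z ∈ {x | Sat M c φ (Sum.elim (fun _ => x) fun _ => v (.inl ()))}, v (.inr ()) < z :=
  ((UnifDef.fiber φ (Sum.inr ()) (Sum.inl (Sum.inl ()))).imp
    (UnifDef.lt (Sum.inl (Sum.inr ())) (Sum.inr ()))).all_elim

namespace Elem

variable {g : M → N}

theorem unifDef (hg : Elem cM cN g) {α : Type} [Finite α]
    {P : ∀ (M : Type) (_ : LinearOrder M), (ι → Set M) → (α → M) → Prop} (hP : UnifDef P)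
    (v : α → M) : P M inferInstance cM v ↔ P N inferInstance cN fun k => g (v k) := by
  obtain ⟨φ, hφ⟩ := hP
  exact (hφ M _ cM v).symm.trans ((hg α φ v).trans (hφ N _ cN _))

theorem lt_iff (hg : Elem cM cN g) (x y : M) : x < y ↔ g x < g y :=
  hg.unifDef (UnifDef.lt (ι := ι) (Sum.inl () : Unit ⊕ Unit) (Sum.inr ()))
    (Sum.elim (fun _ => x) fun _ => y)

theorem mem_typeSet (hg : Elem cM cN g) (p : Set ((CLOLang ι).Formula Unit)) (x : M) :
    x ∈ TypeSet ι M cM p ↔ g x ∈ TypeSet ι N cN p :=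
  forall₂_congr fun φ _ => hg Unit φ _

theorem mem_fiber (hg : Elem cM cN g) (φ : (CLOLang ι).Formula (Unit ⊕ Unit)) (x a : M) :
    x ∈ {z | Sat M cM φ (Sum.elim (fun _ => z) fun _ => a)} ↔
      g x ∈ {z | Sat N cN φ (Sum.elim (fun _ => z) fun _ => g a)} :=
  hg.unifDef (UnifDef.fiber φ (Sum.inl ()) (Sum.inr ()))
    (Sum.elim (fun _ => x) fun _ => a)

theorem fiber_lt (hg : Elem cM cN g) (φ : (CLOLang ι).Formula (Unit ⊕ Unit)) (a u : M) :
    (∀ z ∈ {x | Sat M cM φ (Sum.elim (fun _ => x) fun _ => a)}, z < u) ↔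
      ∀ z ∈ {x | Sat N cN φ (Sum.elim (fun _ => x) fun _ => g a)}, z < g u :=
  hg.unifDef (unifDef_fiber_lt φ) (Sum.elim (fun _ => a) fun _ => u)

theorem lt_fiber (hg : Elem cM cN g) (φ : (CLOLang ι).Formula (Unit ⊕ Unit)) (a u : M) :
    (∀ z ∈ {x | Sat M cM φ (Sum.elim (fun _ => x) fun _ => a)}, u < z) ↔
      ∀ z ∈ {x | Sat N cN φ (Sum.elim (fun _ => x) fun _ => g a)}, g u < z :=
  hg.unifDef (unifDef_lt_fiber φ) (Sum.elim (fun _ => a) fun _ => u)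

theorem simRel (hg : Elem cM cN g) {a b : M} (h : SimRel ι cM a b) : SimRel ι cN (g a) (g b) := by
  obtain ⟨φ, h1, ⟨u, hu⟩, ⟨l, hl⟩, h4, h5⟩ := h
  exact ⟨φ, (hg.unifDef (unifDef_ordConnected φ) fun _ => a).1 h1,
    ⟨g u, (hg.fiber_lt φ a u).1 hu⟩, ⟨g l, (hg.lt_fiber φ a l).1 hl⟩,
    (hg.mem_fiber φ a a).1 h4, (hg.mem_fiber φ b a).1 h5⟩

end Elem

theorem _root_.SelfAdditive.eq_of_simRel_emb {A I : Type} [LinearOrder A] [LinearOrder I]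
    {c : ι → Set A} (h : SelfAdditive ι A c) {i j : I} {a b : A}
    (hs : SimRel ι (sigmaColor fun _ : I => c) (emb i a) (emb j b)) : i = j := by
  obtain ⟨φ, -, hu, hl, -, hb⟩ := hs
  have he := h.elem_emb i
  obtain ⟨u, hu⟩ := (he.unifDef (unifDef_fiber_lt φ).exists_elim fun _ => a).2 hu
  obtain ⟨l, hl⟩ := (he.unifDef (unifDef_lt_fiber φ).exists_elim fun _ => a).2 hl
  have h1 := (he.fiber_lt φ a u).1 hu _ hb
  have h2 := (he.lt_fiber φ a l).1 hl _ hb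
  rw [emb_lt_emb] at h1 h2
  grind

theorem cloIso_sum_of_orderIso {A I J : Type} [LinearOrder A] [LinearOrder I] [LinearOrder J]
    (c : ι → Set A) (e : I ≃o J) :
    CLOIso ι (Σₗ _ : I, A) (sigmaColor fun _ => c) (Σₗ _ : J, A) (sigmaColor fun _ => c) := by
  let _ := CLOStr ι (Σₗ _ : I, A) (sigmaColor fun _ => c)
  let _ := CLOStr ι (Σₗ _ : J, A) (sigmaColor fun _ => c)
  let f : (Σₗ _ : I, A) ≃ Σₗ _ : J, A :=
    { toFun z := emb (e (ofLex z).1) (ofLex z).2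
      invFun z := emb (e.symm (ofLex z).1) (ofLex z).2
      left_inv z := by
        obtain ⟨i, a, rfl⟩ := exists_eq_emb z
        simp [emb]
      right_inv z := by
        obtain ⟨i, a, rfl⟩ := exists_eq_emb z
        simp [emb] }
  have hf (x y : Σₗ _ : I, A) : f x < f y ↔ x < y := by
    obtain ⟨i, a, rfl⟩ := exists_eq_emb x
    obtain ⟨j, b, rfl⟩ := exists_eq_emb y
    change emb (e i) a < emb (e j) b ↔ _
    simp [emb_lt_emb]
  refine ⟨⟨f, fun g _ => Empty.elim g, fun R v => ?_⟩⟩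
  cases R with
  | lt => exact hf _ _
  | color k => exact Iff.rfl

theorem nonempty_orderIso_of_cloIso {A I J : Type} [LinearOrder A] [LinearOrder I] [LinearOrder J]
    {c : ι → Set A} (h : SelfAdditive ι A c) {p : Set ((CLOLang ι).Formula Unit)}
    (hex : ∃ a : A, a ∈ TypeSet ι A c p)
    (hone : ∀ a b : A, a ∈ TypeSet ι A c p → b ∈ TypeSet ι A c p → SimRel ι c a b)
    (hiso : CLOIso ι (Σₗ _ : I, A) (sigmaColor fun _ => c)
      (Σₗ _ : J, A) (sigmaColor fun _ => c)) :
    Nonempty (I ≃o J) := by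
  obtain ⟨a, ha⟩ := hex
  obtain ⟨f, hf, hf'⟩ := hiso.exists_elem
  have hmem (i : I) : f (emb i a) ∈ TypeSet ι (Σₗ _ : J, A) (sigmaColor fun _ => c) p :=
    (hf.mem_typeSet p _).1 (((h.elem_emb i).mem_typeSet p a).1 ha)
  choose σ b hσ using fun i => exists_eq_emb (f (emb i a))
  have hb (i : I) : b i ∈ TypeSet ι A c p :=
    ((h.elem_emb (σ i)).mem_typeSet p _).2 (hσ i ▸ hmem i)
  have hmono : StrictMono σ := by
    intro i j hij
    have hlt := (hf.lt_iff _ _).1 (emb_lt_emb.2 (Or.inl hij) : emb i a < emb j a)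
    rw [hσ, hσ, emb_lt_emb] at hlt
    refine hlt.resolve_right fun ⟨heq, _⟩ => hij.ne ?_
    have hs := hf'.simRel ((h.elem_emb (σ i)).simRel (hone _ _ (hb i) (hb j)))
    nth_rw 2 [heq] at hs
    rw [← hσ, ← hσ, f.symm_apply_apply, f.symm_apply_apply] at hs
    exact h.eq_of_simRel_emb hs
  have hsurj : σ.Surjective := by
    intro j
    obtain ⟨i, x, hx⟩ := exists_eq_emb (f.symm (emb j a))
    have hxp : x ∈ TypeSet ι A c p := by
      rw [(h.elem_emb i).mem_typeSet p, ← hx]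
      exact (hf'.mem_typeSet p _).1 (((h.elem_emb j).mem_typeSet p a).1 ha)
    have hs := hf.simRel ((h.elem_emb i).simRel (hone _ _ ha hxp))
    rw [← hx, f.apply_symm_apply, hσ] at hs
    exact ⟨i, h.eq_of_simRel_emb hs⟩
  exact ⟨hmono.orderIsoOfSurjective σ hsurj⟩

end Elementary

end CLO

theorem stmt8 {ι : Type} [Countable ι] {A : Type} [Countable A] [LinearOrder A]
    (c : ι → Set A) (hSA : SelfAdditive ι A c)
    (p : Set ((CLOLang ι).Formula Unit))
    (hcomp : ∀ φ : (CLOLang ι).Formula Unit, φ ∈ p ∨ BoundedFormula.not φ ∈ p)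
    (hex : ∃ a : A, a ∈ TypeSet ι A c p)
    (hone : ∀ a b : A, a ∈ TypeSet ι A c p → b ∈ TypeSet ι A c p → SimRel ι c a b)
    (I J : Type) [LinearOrder I] [LinearOrder J] [Nonempty I] [Nonempty J] :
    CLOIso ι (Σₗ _ : I, A) (sigmaColor fun _ => c) (Σₗ _ : J, A) (sigmaColor fun _ => c) ↔
      Nonempty (I ≃o J) := by
  exact ⟨CLO.nonempty_orderIso_of_cloIso hSA hex hone,
    fun ⟨e⟩ => CLO.cloIso_sum_of_orderIso c e⟩
end
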